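/- There exist an absolute constant c > 0 and, for each m ∈ ℕ, a constant c(m) > 0 such that for all d, k, n ∈ ℕ and every F ∈ 𝔉_d^s one has ρ_m(F^n, F^{n+2k+1}) ≤ c · m · n^{−1/2} + c(m) · k · n^{−1}. -/

import Mathlib

open MeasureTheory RealInnerProductSpace
open scoped ENNReal

noncomputable section

abbrev Euc (d : ℕ) := EuclideanSpace ℝ (Fin d)

/-- Convolution of two measures on an additive structure. -/
def mconv {α : Type*} [MeasurableSpace α] [Add α] (μ ν : Measure α) : Measure α :=
  (μ.prod ν).map (fun p => p.1 + p.2)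

/-- Convolution power `μ^{*n}`, with `μ^{*0}` the Dirac measure at `0`. -/
def convPow {α : Type*} [MeasurableSpace α] [AddMonoid α] (μ : Measure α) : ℕ → Measure α
  | 0 => Measure.dirac 0
  | n + 1 => mconv (convPow μ n) μ

/-- Convolution product of a finite family of measures. -/
def convProd {α : Type*} [MeasurableSpace α] [AddMonoid α] :
    ∀ {n : ℕ}, (Fin n → Measure α) → Measure α
  | 0, _ => Measure.dirac 0
  | n + 1, G => mconv (convProd (fun i : Fin n => G i.castSucc)) (G (Fin.last n))

/-- The compound Poisson measure `e(a·μ) = e^{-a} ∑_k a^k μ^{*k}/k!`. -/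
def cpois {α : Type*} [MeasurableSpace α] [AddMonoid α] (a : ℝ) (μ : Measure α) : Measure α :=
  Measure.sum fun k : ℕ =>
    (ENNReal.ofReal (Real.exp (-a) * a ^ k / k.factorial)) • convPow μ k

/-- A measure is symmetric if it is invariant under `x ↦ -x`. -/
def IsSymmMeasure {d : ℕ} (μ : Measure (Euc d)) : Prop :=
  μ.map (fun x => -x) = μ

/-- Characteristic function of a measure on `ℝ^d`. -/
def charFn {d : ℕ} (μ : Measure (Euc d)) (t : Euc d) : ℂ :=
  ∫ x, Complex.exp ((⟪t, x⟫ : ℂ) * Complex.I) ∂μ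

/-- Characteristic function of a measure on `ℝ`. -/
def charFn1 (μ : Measure ℝ) (t : ℝ) : ℂ :=
  ∫ x, Complex.exp (((t * x : ℝ) : ℂ) * Complex.I) ∂μ

/-- Convex polyhedra determined by the directions `t 1, …, t m`. -/
def polyhedraOn {d m : ℕ} (t : Fin m → Euc d) : Set (Set (Euc d)) :=
  {X | ∃ a b : Fin m → EReal,
    X = {x | ∀ j, a j ≤ ((⟪x, t j⟫ : ℝ) : EReal) ∧ ((⟪x, t j⟫ : ℝ) : EReal) ≤ b j}}

/-- The collection `𝔛_m` of convex polyhedra determined by `m` pairs of parallel hyperplanes. -/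
def polyhedra (d m : ℕ) : Set (Set (Euc d)) :=
  {X | ∃ t : Fin m → Euc d, X ∈ polyhedraOn t}

/-- The distance `ρ_m(G,H) = sup_{X ∈ 𝔛_m} |G{X} - H{X}|`. -/
def rhoPoly {d : ℕ} (m : ℕ) (G H : Measure (Euc d)) : ℝ :=
  ⨆ X ∈ polyhedra d m, |(G X).toReal - (H X).toReal|

/-- The Lévy concentration function `Q(μ, b) = sup_x μ[x, x+b]`. -/
def concFn (μ : Measure ℝ) (b : ℝ) : ℝ :=
  ⨆ x : ℝ, (μ (Set.Icc x (x + b))).toReal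

/-- `q(H, X) = inf_{‖t‖=1} Q(𝓛(⟨ξ,t⟩), λ{⟨x,t⟩ : x ∈ X})` where `H = 𝓛(ξ)`. -/
def qFn {d : ℕ} (H : Measure (Euc d)) (X : Set (Euc d)) : ℝ :=
  ⨅ t ∈ {t : Euc d | ‖t‖ = 1},
    concFn (H.map fun x => ⟪x, t⟫) (volume ((fun x => ⟪x, t⟫) '' X)).toReal

/-- The uniform (Kolmogorov) distance on `ℝ^d`. -/
def kolmDist {d : ℕ} (G H : Measure (Euc d)) : ℝ :=
  ⨆ x : Euc d, |(G {y | ∀ i, y i ≤ x i}).toReal - (H {y | ∀ i, y i ≤ x i}).toReal|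

/-- The uniform (Kolmogorov) distance on `ℝ`. -/
def kolmDist1 (G H : Measure ℝ) : ℝ :=
  ⨆ x : ℝ, |(G (Set.Iic x)).toReal - (H (Set.Iic x)).toReal|

end

set_option linter.unusedSectionVars false
set_option linter.unusedSimpArgs false

namespace ZP

open AddMonoidAlgebra (single)

variable {M : Type*} [AddCommGroup M]
variable {V : Type*} [AddCommGroup V] [Module ℝ V]

/-- Pairing of a finitely supported signed measure with a function. -/
noncomputable def pr (μ : AddMonoidAlgebra ℝ M) (f : M → V) : V := μ.coeff.sum fun x c => c • f x

theorem pr_zero (f : M → V) : pr (0 : AddMonoidAlgebra ℝ M) f = 0 := by simp [pr]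

theorem pr_add (μ ν : AddMonoidAlgebra ℝ M) (f : M → V) : pr (μ + ν) f = pr μ f + pr ν f := by
  classical
  unfold pr
  rw [AddMonoidAlgebra.coeff_add, Finsupp.sum_add_index] <;> simp [add_smul]

theorem pr_single (x : M) (c : ℝ) (f : M → V) : pr (single x c) f = c • f x := by
  simp [pr]

theorem pr_smul (a : ℝ) (μ : AddMonoidAlgebra ℝ M) (f : M → V) : pr (a • μ) f = a • pr μ f := by
  unfold pr
  rw [AddMonoidAlgebra.coeff_smul, Finsupp.sum_smul_index (by simp), Finsupp.smul_sum]
  simp [mul_smul]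

/-- Pairing as a linear map in the measure. -/
noncomputable def prL (f : M → V) : AddMonoidAlgebra ℝ M →ₗ[ℝ] V where
  toFun μ := pr μ f
  map_add' μ ν := pr_add μ ν f
  map_smul' a μ := pr_smul a μ f

theorem prL_apply (f : M → V) (μ : AddMonoidAlgebra ℝ M) : prL f μ = pr μ f := rfl

theorem pr_neg (μ : AddMonoidAlgebra ℝ M) (f : M → V) : pr (-μ) f = -pr μ f := map_neg (prL f) μ
theorem pr_sub (μ ν : AddMonoidAlgebra ℝ M) (f : M → V) : pr (μ - ν) f = pr μ f - pr ν f :=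
  map_sub (prL f) μ ν
theorem pr_sum {ι : Type*} (s : Finset ι) (μ : ι → AddMonoidAlgebra ℝ M) (f : M → V) :
    pr (∑ i ∈ s, μ i) f = ∑ i ∈ s, pr (μ i) f := map_sum (prL f) μ s

theorem pr_eq_sum (μ : AddMonoidAlgebra ℝ M) (f : M → V) :
    pr μ f = ∑ x ∈ μ.coeff.support, μ.coeff x • f x := rfl

theorem pr_fadd (μ : AddMonoidAlgebra ℝ M) (f g : M → V) :
    pr μ (fun x => f x + g x) = pr μ f + pr μ g := by
  simp [pr_eq_sum, Finset.sum_add_distrib]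
theorem pr_fsub (μ : AddMonoidAlgebra ℝ M) (f g : M → V) :
    pr μ (fun x => f x - g x) = pr μ f - pr μ g := by
  simp [pr_eq_sum, smul_sub]
theorem pr_fneg (μ : AddMonoidAlgebra ℝ M) (f : M → V) :
    pr μ (fun x => - f x) = - pr μ f := by
  simp [pr_eq_sum]
theorem pr_fsum {ι : Type*} (s : Finset ι) (μ : AddMonoidAlgebra ℝ M) (f : ι → M → V) :
    pr μ (fun x => ∑ i ∈ s, f i x) = ∑ i ∈ s, pr μ (f i) := by
  simp only [pr_eq_sum, Finset.smul_sum]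
  rw [Finset.sum_comm]
theorem pr_fmul (μ : AddMonoidAlgebra ℝ M) (f : M → ℝ) (a : ℝ) :
    pr μ (fun x => a * f x) = a * pr μ f := by
  simp only [pr_eq_sum, smul_eq_mul, Finset.mul_sum]
  exact Finset.sum_congr rfl fun x _ => by ring
theorem pr_fsmul (μ : AddMonoidAlgebra ℝ M) (f : M → V) (a : ℝ) :
    pr μ (fun x => a • f x) = a • pr μ f := by
  simp only [pr_eq_sum, Finset.smul_sum]
  exact Finset.sum_congr rfl fun x _ => smul_comm _ _ _

theorem pr_one (f : M → V) : pr (1 : AddMonoidAlgebra ℝ M) f = f 0 := by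
  rw [AddMonoidAlgebra.one_def, pr_single]; simp

theorem pr_mul (μ ν : AddMonoidAlgebra ℝ M) (f : M → V) :
    pr (μ * ν) f = pr μ fun x => pr ν fun y => f (x + y) := by
  induction μ using AddMonoidAlgebra.induction_linear with
  | zero => simp [pr_zero]
  | add a b ha hb => rw [add_mul, pr_add, pr_add, ha, hb]
  | single x c =>
    induction ν using AddMonoidAlgebra.induction_linear with
    | zero => simp [pr_zero, pr_single]
    | add a b ha hb => rw [mul_add, pr_add, ha, hb]; simp only [pr_single, pr_add, smul_add]
    | single y e => rw [AddMonoidAlgebra.single_mul_single]; simp only [pr_single, mul_smul]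

/-- Total mass. -/
noncomputable def mass (μ : AddMonoidAlgebra ℝ M) : ℝ := pr μ fun _ => (1 : ℝ)

theorem pr_const (μ : AddMonoidAlgebra ℝ M) (c : ℝ) : pr μ (fun _ => c) = mass μ * c := by
  rw [mass, mul_comm, ← pr_fmul]; simp

theorem mass_mul (μ ν : AddMonoidAlgebra ℝ M) : mass (μ * ν) = mass μ * mass ν := by
  rw [mass, pr_mul, pr_const]; rfl
theorem mass_one : mass (1 : AddMonoidAlgebra ℝ M) = 1 := by rw [mass, pr_one]
theorem mass_pow (μ : AddMonoidAlgebra ℝ M) (n : ℕ) : mass (μ ^ n) = mass μ ^ n := by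
  induction n with
  | zero => simp [mass_one]
  | succ n ih => rw [pow_succ, mass_mul, ih, pow_succ]

/-- Nonnegative measures. -/
def Pos (μ : AddMonoidAlgebra ℝ M) : Prop := ∀ x, 0 ≤ μ.coeff x

theorem Pos.single {x : M} {c : ℝ} (hc : 0 ≤ c) : Pos (single x c) := by
  classical
  intro y
  rw [AddMonoidAlgebra.coeff_single, Finsupp.single_apply]; split_ifs <;> simp [hc]
theorem Pos.zero : Pos (0 : AddMonoidAlgebra ℝ M) := fun x => by simp
theorem Pos.add {μ ν : AddMonoidAlgebra ℝ M} (h : Pos μ) (h' : Pos ν) : Pos (μ + ν) := fun x => by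
  simpa using add_nonneg (h x) (h' x)
theorem Pos.smul {μ : AddMonoidAlgebra ℝ M} {a : ℝ} (ha : 0 ≤ a) (h : Pos μ) : Pos (a • μ) :=
  fun x => by simpa using mul_nonneg ha (h x)
theorem Pos.sum {ι : Type*} {s : Finset ι} {μ : ι → AddMonoidAlgebra ℝ M} (h : ∀ i ∈ s, Pos (μ i)) :
    Pos (∑ i ∈ s, μ i) := by
  classical
  induction s using Finset.induction_on with
  | empty => simpa using Pos.zero
  | insert a s ha ih =>
    rw [Finset.sum_insert ha]
    exact (h a (by simp)).add (ih fun i hi => h i (by simp [hi]))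
theorem Pos.one : Pos (1 : AddMonoidAlgebra ℝ M) := Pos.single (by norm_num)

theorem Pos.mul {μ ν : AddMonoidAlgebra ℝ M} (h : Pos μ) (h' : Pos ν) : Pos (μ * ν) := by
  rw [AddMonoidAlgebra.mul_def]
  exact Pos.sum fun x _ => Pos.sum fun y _ => Pos.single (mul_nonneg (h x) (h' y))
theorem Pos.pow {μ : AddMonoidAlgebra ℝ M} (h : Pos μ) (n : ℕ) : Pos (μ ^ n) := by
  induction n with
  | zero => simpa using Pos.one
  | succ n ih => rw [pow_succ]; exact ih.mul h

theorem pr_mono' {μ : AddMonoidAlgebra ℝ M} (h : Pos μ) {f g : M → ℝ}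
    (hfg : ∀ x, μ.coeff x ≠ 0 → f x ≤ g x) : pr μ f ≤ pr μ g := by
  simp only [pr_eq_sum, smul_eq_mul]
  exact Finset.sum_le_sum fun x hx => mul_le_mul_of_nonneg_left (hfg x (by simpa using hx)) (h x)
theorem pr_mono {μ : AddMonoidAlgebra ℝ M} (h : Pos μ) {f g : M → ℝ}
    (hfg : ∀ x, f x ≤ g x) : pr μ f ≤ pr μ g := pr_mono' h fun x _ => hfg x
theorem pr_congr' {μ : AddMonoidAlgebra ℝ M} {f g : M → V}
    (hfg : ∀ x, μ.coeff x ≠ 0 → f x = g x) : pr μ f = pr μ g := by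
  simp only [pr_eq_sum]
  exact Finset.sum_congr rfl fun x hx => by rw [hfg x (by simpa using hx)]
theorem pr_nonneg {μ : AddMonoidAlgebra ℝ M} (h : Pos μ) {f : M → ℝ}
    (hf : ∀ x, 0 ≤ f x) : 0 ≤ pr μ f := by
  have := pr_mono h hf
  rwa [pr_const, mul_zero] at this
theorem pr_le_mass {μ : AddMonoidAlgebra ℝ M} (h : Pos μ) {f : M → ℝ} {B : ℝ}
    (hf : ∀ x, f x ≤ B) : pr μ f ≤ mass μ * B := by
  have := pr_mono h hf
  rwa [pr_const] at this
theorem abs_pr_le {μ : AddMonoidAlgebra ℝ M} (h : Pos μ) {f g : M → ℝ}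
    (hf : ∀ x, |f x| ≤ g x) : |pr μ f| ≤ pr μ g := by
  rw [abs_le]
  constructor
  · rw [← pr_fneg]; exact pr_mono h fun x => (abs_le.1 (hf x)).1
  · exact pr_mono h fun x => (abs_le.1 (hf x)).2
theorem abs_pr_le_mass {μ : AddMonoidAlgebra ℝ M} (h : Pos μ) {f : M → ℝ} {B : ℝ}
    (hf : ∀ x, |f x| ≤ B) : |pr μ f| ≤ mass μ * B := by
  rw [← pr_const]; exact abs_pr_le h hf
theorem mass_nonneg {μ : AddMonoidAlgebra ℝ M} (h : Pos μ) : 0 ≤ mass μ :=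
  pr_nonneg h fun _ => zero_le_one

/-- Multiplication of a measure by a function. -/
noncomputable def wt (ξ : M → ℝ) (μ : AddMonoidAlgebra ℝ M) : AddMonoidAlgebra ℝ M :=
  μ.coeff.sum fun x c => single x (ξ x * c)

theorem wt_zero (ξ : M → ℝ) : wt ξ 0 = 0 := by simp [wt]
theorem wt_add (ξ : M → ℝ) (μ ν : AddMonoidAlgebra ℝ M) : wt ξ (μ + ν) = wt ξ μ + wt ξ ν := by
  classical
  unfold wt
  rw [AddMonoidAlgebra.coeff_add, Finsupp.sum_add_index] <;>
    simp [mul_add, AddMonoidAlgebra.single_add]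
theorem wt_single (ξ : M → ℝ) (x : M) (c : ℝ) : wt ξ (single x c) = single x (ξ x * c) := by
  simp [wt]

theorem coeff_wt (ξ : M → ℝ) (μ : AddMonoidAlgebra ℝ M) (x : M) :
    (wt ξ μ).coeff x = ξ x * μ.coeff x := by
  classical
  induction μ using AddMonoidAlgebra.induction_linear with
  | zero => simp [wt_zero]
  | add a b ha hb => rw [wt_add]; simp [ha, hb, mul_add]
  | single y c =>
    rw [wt_single]; simp only [AddMonoidAlgebra.coeff_single, Finsupp.single_apply]
    split_ifs with h
    · rw [h]
    · simp

theorem ext_coeff {μ ν : AddMonoidAlgebra ℝ M} (h : ∀ x, μ.coeff x = ν.coeff x) : μ = ν :=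
  AddMonoidAlgebra.coeff_injective (Finsupp.ext h)

theorem pr_wt (ξ : M → ℝ) (μ : AddMonoidAlgebra ℝ M) (f : M → ℝ) :
    pr (wt ξ μ) f = pr μ fun x => ξ x * f x := by
  induction μ using AddMonoidAlgebra.induction_linear with
  | zero => simp [wt_zero, pr_zero]
  | add a b ha hb => rw [wt_add, pr_add, ha, hb, pr_add]
  | single y c => rw [wt_single, pr_single, pr_single]; simp only [smul_eq_mul]; ring

theorem Pos.wt {ξ : M → ℝ} {μ : AddMonoidAlgebra ℝ M} (hξ : ∀ x, 0 ≤ ξ x) (h : Pos μ) :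
    Pos (wt ξ μ) := fun x => by rw [coeff_wt]; exact mul_nonneg (hξ x) (h x)

theorem wt_wt (ξ η : M → ℝ) (μ : AddMonoidAlgebra ℝ M) : wt ξ (wt η μ) = wt (fun x => ξ x * η x) μ :=
  ext_coeff fun x => by simp only [coeff_wt]; ring

/-- An additive weight is a derivation. -/
theorem wt_mul {ξ : M → ℝ} (hξ : ∀ x y, ξ (x + y) = ξ x + ξ y) (μ ν : AddMonoidAlgebra ℝ M) :
    wt ξ (μ * ν) = wt ξ μ * ν + μ * wt ξ ν := by
  induction μ using AddMonoidAlgebra.induction_linear with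
  | zero => simp [wt_zero]
  | add a b ha hb => rw [add_mul, wt_add, ha, hb, wt_add]; ring
  | single x c =>
    induction ν using AddMonoidAlgebra.induction_linear with
    | zero => simp [wt_zero]
    | add a b ha hb => rw [mul_add, wt_add, ha, hb, wt_add]; ring
    | single y e =>
      simp only [wt_single, AddMonoidAlgebra.single_mul_single, hξ]
      rw [← AddMonoidAlgebra.single_add]; congr 1; ring

/-- Symmetric measures. -/
def Sym (μ : AddMonoidAlgebra ℝ M) : Prop := ∀ x, μ.coeff (-x) = μ.coeff x

theorem Sym.pr_neg {μ : AddMonoidAlgebra ℝ M} (h : Sym μ) (f : M → V) :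
    pr μ (fun x => f (-x)) = pr μ f := by
  simp only [pr_eq_sum]
  refine Finset.sum_nbij' (fun x => -x) (fun x => -x) ?_ ?_ ?_ ?_ ?_
  · intro x hx; simpa [h x] using hx
  · intro x hx; simpa [h x] using hx
  · simp
  · simp
  · intro x _; simp [h x]

theorem Sym.wt {ξ : M → ℝ} {μ : AddMonoidAlgebra ℝ M} (hξ : ∀ x, ξ (-x) = ξ x) (h : Sym μ) :
    Sym (wt ξ μ) := fun x => by rw [coeff_wt, coeff_wt, hξ, h]
theorem Sym.smul {μ : AddMonoidAlgebra ℝ M} (a : ℝ) (h : Sym μ) : Sym (a • μ) := fun x => by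
  simp [h x]
theorem Sym.add {μ ν : AddMonoidAlgebra ℝ M} (h : Sym μ) (h' : Sym ν) : Sym (μ + ν) := fun x => by
  simp [h x, h' x]
theorem Sym.one : Sym (1 : AddMonoidAlgebra ℝ M) := fun x => by
  classical
  simp [AddMonoidAlgebra.one_def, Finsupp.single_apply, eq_comm]

theorem Sym.pr_odd {μ : AddMonoidAlgebra ℝ M} (h : Sym μ) {f : M → ℝ} (hf : ∀ x, f (-x) = - f x) :
    pr μ f = 0 := by
  have := h.pr_neg f
  simp only [hf, pr_fneg] at this
  linarith

/-- Symmetric probability measures. -/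
structure PS (μ : AddMonoidAlgebra ℝ M) : Prop where
  pos : Pos μ
  sym : Sym μ
  mass : mass μ = 1

/-- The key second moment inequality. -/
theorem lemA0 {F : AddMonoidAlgebra ℝ M} (hF : Pos F) (h1 : mass F = 1) {ξ : M → ℝ}
    (hξ : pr F ξ = 0) (N : ℕ) : ∀ (h : M → ℝ) (a : ℝ),
    2 * (N * pr (F ^ (N - 1) * wt ξ F) h + a * pr (F ^ N) h) ≤
      pr (F ^ N) (fun x => h x ^ 2) + N * pr F (fun x => ξ x ^ 2) + a ^ 2 := by
  induction N with
  | zero =>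
    intro h a
    simp only [pow_zero, pr_one]
    push_cast
    nlinarith [sq_nonneg (h 0 - a)]
  | succ N ih =>
    intro h a
    have e1 : ((N + 1 : ℕ) : ℝ) * pr (F ^ (N + 1 - 1) * wt ξ F) h =
        pr F fun x => (N * pr (F ^ (N - 1) * wt ξ F) (fun y => h (x + y))
          + ξ x * pr (F ^ N) (fun y => h (x + y))) := by
      have : ((N + 1 : ℕ) : ℝ) • (F ^ (N + 1 - 1) * wt ξ F) =
          (N : ℝ) • (F * (F ^ (N - 1) * wt ξ F)) + wt ξ F * F ^ N := by
        rcases N with _ | N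
        · simp
        · simp only [Nat.add_sub_cancel, Nat.cast_add, Nat.cast_one, add_smul, one_smul]
          rw [pow_succ]
          simp only [← mul_assoc, mul_comm]
      rw [← smul_eq_mul, ← pr_smul, this, pr_add, pr_smul, pr_mul, pr_mul, pr_wt, pr_fadd, pr_fmul]
      rfl
    have e2 : pr (F ^ (N + 1)) h = pr F fun x => pr (F ^ N) (fun y => h (x + y)) := by
      rw [pow_succ', pr_mul]
    have e3 : pr (F ^ (N + 1)) (fun x => h x ^ 2) = pr F fun x => pr (F ^ N) (fun y => h (x + y) ^ 2) := by
      rw [pow_succ', pr_mul]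
    have key : pr F (fun x => 2 * (N * pr (F ^ (N - 1) * wt ξ F) (fun y => h (x + y))
          + (a + ξ x) * pr (F ^ N) (fun y => h (x + y)))) ≤
        pr F (fun x => (pr (F ^ N) (fun y => h (x + y) ^ 2) + N * pr F (fun x => ξ x ^ 2)) +
          (a + ξ x) ^ 2) := pr_mono hF fun x => ih _ _
    rw [e1, e2, e3]
    have l : (fun x => 2 * (N * pr (F ^ (N - 1) * wt ξ F) (fun y => h (x + y))
          + (a + ξ x) * pr (F ^ N) (fun y => h (x + y)))) =
        fun x => 2 * ((N * pr (F ^ (N - 1) * wt ξ F) (fun y => h (x + y))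
          + ξ x * pr (F ^ N) (fun y => h (x + y))) + a * pr (F ^ N) (fun y => h (x + y))) := by
      funext x; ring
    have r : (fun x => (a + ξ x) ^ 2) = fun x => (a ^ 2 + (2 * a) * ξ x) + ξ x ^ 2 := by
      funext x; ring
    rw [l, pr_fmul, pr_fadd, pr_fmul, pr_fadd (f := fun x => pr (F ^ N) (fun y => h (x + y) ^ 2) + _),
      pr_fadd (f := fun x => pr (F ^ N) (fun y => h (x + y) ^ 2)), r,
      pr_fadd (f := fun x => a ^ 2 + (2 * a) * ξ x),
      pr_fadd (f := fun x => a ^ 2), pr_fmul (f := ξ), pr_const,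
      pr_const, h1, hξ] at key
    push_cast
    linarith

theorem lemA {F : AddMonoidAlgebra ℝ M} (hF : Pos F) (h1 : mass F = 1) {ξ : M → ℝ}
    (hξ : pr F ξ = 0) (N : ℕ) {h : M → ℝ} {B : ℝ} (hB : ∀ x, |h x| ≤ B) :
    |pr (F ^ N * wt ξ F) h| ≤ B * Real.sqrt (pr F (fun x => ξ x ^ 2) / (N + 1)) := by
  have hB0 : 0 ≤ B := (abs_nonneg _).trans (hB 0)
  set s := pr F (fun x => ξ x ^ 2) with hs
  have hs0 : 0 ≤ s := pr_nonneg hF fun x => sq_nonneg _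
  set v := pr (F ^ N * wt ξ F) h with hv
  have hN : (0 : ℝ) < N + 1 := by positivity
  have q : ∀ t : ℝ, 2 * ((N + 1) * (t * v)) ≤ t ^ 2 * B ^ 2 + (N + 1) * s := by
    intro t
    have := lemA0 hF h1 hξ (N + 1) (fun x => t * h x) 0
    simp only [Nat.add_sub_cancel, pr_fmul] at this
    have h2 : pr (F ^ (N + 1)) (fun x => (t * h x) ^ 2) ≤ t ^ 2 * B ^ 2 := by
      have := pr_le_mass (hF.pow (N + 1)) (f := fun x => (t * h x) ^ 2) (B := t ^ 2 * B ^ 2) (by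
        intro x
        rw [mul_pow]
        exact mul_le_mul_of_nonneg_left (sq_le_sq.2 (by rw [abs_of_nonneg hB0]; exact hB x)) (sq_nonneg _))
      rwa [mass_pow, h1, one_pow, one_mul] at this
    push_cast at this
    linarith
  have hv2 : v ^ 2 ≤ B ^ 2 * (s / (N + 1)) := by
    rw [mul_div_assoc', le_div_iff₀ hN]
    rcases eq_or_lt_of_le hB0 with h0 | h0
    · by_contra hcon
      push Not at hcon
      rw [← h0] at hcon q
      have hvne : 0 < v ^ 2 := by
        by_contra hh
        have : v ^ 2 = 0 := le_antisymm (not_lt.1 hh) (sq_nonneg _)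
        rw [this] at hcon; simp at hcon
      have := q ((s + 1) / v ^ 2 * v)
      have e : (s + 1) / v ^ 2 * v * v = s + 1 := by
        rw [mul_assoc, ← sq, div_mul_cancel₀ _ hvne.ne']
      rw [e] at this
      nlinarith
    · have := q ((N + 1) * v / B ^ 2)
      have e : ((N + 1) * v / B ^ 2) ^ 2 * B ^ 2 = (N + 1) * ((N + 1) * v / B ^ 2 * v) := by
        field_simp
      rw [e] at this
      have e2 : (N + 1) * v / B ^ 2 * v ≤ s := by
        have : (N + 1 : ℝ) * ((N + 1) * v / B ^ 2 * v) ≤ (N + 1) * s := by linarith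
        exact le_of_mul_le_mul_left this hN
      have e3 : (N + 1) * v / B ^ 2 * v = (v ^ 2 * (N + 1)) / B ^ 2 := by ring
      rw [e3, div_le_iff₀ (by positivity)] at e2
      linarith
  have := Real.abs_le_sqrt hv2
  rwa [Real.sqrt_mul (sq_nonneg B), Real.sqrt_sq hB0] at this

/-- Lemma A with an additional factor. -/
theorem lemA2 {F : AddMonoidAlgebra ℝ M} (hF : Pos F) (h1 : mass F = 1) {ξ : M → ℝ}
    (hξ : pr F ξ = 0) (N : ℕ) {ν : AddMonoidAlgebra ℝ M} {f : M → ℝ} {B : ℝ}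
    (hB : ∀ x, |pr ν fun y => f (x + y)| ≤ B) (x : M) :
    |pr (F ^ N * wt ξ F * ν) (fun y => f (x + y))| ≤
      B * Real.sqrt (pr F (fun x => ξ x ^ 2) / (N + 1)) := by
  rw [pr_mul]
  refine lemA hF h1 hξ N fun z => ?_
  have := hB (x + z)
  simpa [add_assoc] using this

end ZP

namespace ZP

open AddMonoidAlgebra (single)

/-- The space of coordinates. -/
abbrev E (m : ℕ) := Fin m → ℝ

/-- Finitely supported signed measures on `E m`. -/
abbrev Al (m : ℕ) := AddMonoidAlgebra ℝ (E m)

/-- Indicator of a set of reals. -/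
noncomputable def i1 (S : Set ℝ) (y : ℝ) : ℝ := S.indicator (fun _ => 1) y

theorem i1_of_mem {S : Set ℝ} {y : ℝ} (h : y ∈ S) : i1 S y = 1 := Set.indicator_of_mem h _
theorem i1_of_notMem {S : Set ℝ} {y : ℝ} (h : y ∉ S) : i1 S y = 0 := Set.indicator_of_notMem h _
theorem i1_nonneg (S : Set ℝ) (y : ℝ) : 0 ≤ i1 S y := Set.indicator_nonneg (fun _ _ => zero_le_one) _
theorem i1_le_one (S : Set ℝ) (y : ℝ) : i1 S y ≤ 1 := by
  by_cases h : y ∈ S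
  · rw [i1_of_mem h]
  · rw [i1_of_notMem h]; norm_num
theorem i1_mono {S T : Set ℝ} (h : S ⊆ T) (y : ℝ) : i1 S y ≤ i1 T y := by
  by_cases hy : y ∈ S
  · rw [i1_of_mem hy, i1_of_mem (h hy)]
  · rw [i1_of_notMem hy]; exact i1_nonneg _ _

variable {m : ℕ}

/-- Indicator of a box. -/
noncomputable def ind (I : Fin m → Set ℝ) (x : E m) : ℝ := ∏ q, i1 (I q) (x q)

theorem ind_nonneg (I : Fin m → Set ℝ) (x : E m) : 0 ≤ ind I x :=
  Finset.prod_nonneg fun _ _ => i1_nonneg _ _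
theorem ind_le_one (I : Fin m → Set ℝ) (x : E m) : ind I x ≤ 1 :=
  Finset.prod_le_one (fun _ _ => i1_nonneg _ _) fun _ _ => i1_le_one _ _
theorem abs_ind_le_one (I : Fin m → Set ℝ) (x : E m) : |ind I x| ≤ 1 := by
  rw [abs_of_nonneg (ind_nonneg I x)]; exact ind_le_one I x
theorem ind_le_i1 (I : Fin m → Set ℝ) (x : E m) (q : Fin m) : ind I x ≤ i1 (I q) (x q) := by
  unfold ind
  rw [← Finset.mul_prod_erase _ _ (Finset.mem_univ q)]
  exact mul_le_of_le_one_right (i1_nonneg _ _)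
    (Finset.prod_le_one (fun _ _ => i1_nonneg _ _) fun _ _ => i1_le_one _ _)
theorem ind_of_notMem {I : Fin m → Set ℝ} {x : E m} {q : Fin m} (h : x q ∉ I q) : ind I x = 0 :=
  le_antisymm ((ind_le_i1 I x q).trans_eq (i1_of_notMem h)) (ind_nonneg I x)
theorem ind_of_mem {I : Fin m → Set ℝ} {x : E m} (h : ∀ q, x q ∈ I q) : ind I x = 1 :=
  Finset.prod_eq_one fun q _ => i1_of_mem (h q)

/-- Boxes: products of order connected sets. -/
def IsBox (I : Fin m → Set ℝ) : Prop := ∀ q, (I q).OrdConnected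

/-- The box translated by `-y`. -/
def shiftS (y : ℝ) (S : Set ℝ) : Set ℝ := {z | y + z ∈ S}

/-- The box translated by `-y`. -/
def shift (y : E m) (I : Fin m → Set ℝ) : Fin m → Set ℝ := fun q => shiftS (y q) (I q)

theorem ordConnected_shiftS {S : Set ℝ} (h : S.OrdConnected) (y : ℝ) : (shiftS y S).OrdConnected := by
  refine ⟨fun a ha b hb c hc => ?_⟩
  exact h.out ha hb ⟨by linarith [hc.1], by linarith [hc.2]⟩

theorem IsBox.shift {I : Fin m → Set ℝ} (h : IsBox I) (y : E m) : IsBox (shift y I) :=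
  fun q => ordConnected_shiftS (h q) _

theorem i1_shiftS (y z : ℝ) (S : Set ℝ) : i1 S (y + z) = i1 (shiftS y S) z := by
  by_cases h : y + z ∈ S
  · rw [i1_of_mem h, i1_of_mem (show z ∈ shiftS y S from h)]
  · rw [i1_of_notMem h, i1_of_notMem (show z ∉ shiftS y S from h)]

theorem ind_shift (I : Fin m → Set ℝ) (y z : E m) : ind I (y + z) = ind (shift y I) z := by
  unfold ind shift
  exact Finset.prod_congr rfl fun q _ => by rw [Pi.add_apply, i1_shiftS]

theorem ind_update (J : Fin m → Set ℝ) (q : Fin m) (A : Set ℝ) (x : E m) :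
    ind (Function.update J q A) x = i1 A (x q) * ∏ r ∈ Finset.univ.erase q, i1 (J r) (x r) := by
  unfold ind
  rw [← Finset.mul_prod_erase _ _ (Finset.mem_univ q)]
  congr 1
  · simp
  · refine Finset.prod_congr rfl fun r hr => ?_
    rw [Function.update_of_ne (Finset.ne_of_mem_erase hr)]

theorem i1_sub (A B : Set ℝ) (y : ℝ) : i1 A y - i1 B y = i1 (A \ B) y - i1 (B \ A) y := by
  unfold i1
  by_cases h : y ∈ A <;> by_cases h' : y ∈ B <;> simp [Set.indicator, h, h']

theorem ind_update_sub (J : Fin m → Set ℝ) (q : Fin m) (A B : Set ℝ) (x : E m) :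
    ind (Function.update J q A) x - ind (Function.update J q B) x =
      ind (Function.update J q (A \ B)) x - ind (Function.update J q (B \ A)) x := by
  simp only [ind_update, ← sub_mul, i1_sub A B]

theorem IsBox.update {J : Fin m → Set ℝ} (h : IsBox J) (q : Fin m) {A : Set ℝ}
    (hA : A.OrdConnected) : IsBox (Function.update J q A) := by
  intro r
  by_cases hr : r = q
  · subst hr; simpa using hA
  · rw [Function.update_of_ne hr]; exact h r

/-- Replacing the coordinates one by one. -/
theorem tele (Φ : (Fin m → Set ℝ) → ℝ) (I I' : Fin m → Set ℝ) (b : Fin m → ℝ)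
    (h : ∀ q J, (∀ r, J r = I r ∨ J r = I' r) →
      |Φ (Function.update J q (I q)) - Φ (Function.update J q (I' q))| ≤ b q) :
    |Φ I - Φ I'| ≤ ∑ q, b q := by
  classical
  have key : ∀ s : Finset (Fin m), |Φ I - Φ (fun q => if q ∈ s then I' q else I q)| ≤ ∑ q ∈ s, b q := by
    intro s
    induction s using Finset.induction_on with
    | empty => simp
    | insert a s ha ih =>
      rw [Finset.sum_insert ha]
      set J : Fin m → Set ℝ := fun q => if q ∈ s then I' q else I q with hJ
      have h1 := h a J (fun r => by simp only [hJ]; split_ifs <;> simp)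
      have e1 : Function.update J a (I a) = J := by
        have : J a = I a := by simp [hJ, ha]
        rw [← this]; exact Function.update_eq_self _ _
      have e2 : Function.update J a (I' a) = fun q => if q ∈ insert a s then I' q else I q := by
        funext q
        by_cases hq : q = a
        · subst hq; simp
        · simp [Function.update_of_ne hq, hJ, hq]
      rw [e1, e2] at h1
      calc _ = |(Φ I - Φ J) + (Φ J - Φ fun q => if q ∈ insert a s then I' q else I q)| := by
            congr 1; ring
        _ ≤ _ := (abs_add_le _ _).trans (by linarith)
  simpa using key Finset.univ

/-- Truncation at level one. -/
noncomputable def clip (t : ℝ) : ℝ := max (-1) (min 1 t)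

theorem clip_neg (t : ℝ) : clip (-t) = - clip t := by
  unfold clip
  rcases le_total t 1 with h | h <;> rcases le_total t (-1) with h' | h' <;>
    simp only [max_def, min_def] <;> split_ifs <;> linarith

theorem clip_sq (t : ℝ) : clip t ^ 2 = min 1 (t ^ 2) := by
  unfold clip
  rcases le_total t 1 with h | h
  · rcases le_total t (-1) with h' | h'
    · rw [min_eq_right h, max_eq_left h', min_eq_left (by nlinarith)]; norm_num
    · rw [min_eq_right h, max_eq_right h', min_eq_right (by nlinarith)]
  · rw [min_eq_left h, max_eq_right (by norm_num), min_eq_left (by nlinarith)]; norm_num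

/-- Ramp function. -/
noncomputable def ramp (t : ℝ) : ℝ := max 0 (min 1 t)

theorem abs_ramp (t : ℝ) : |ramp t| ≤ 1 := by
  unfold ramp
  rw [abs_of_nonneg (le_max_left _ _)]
  exact max_le (by norm_num) (min_le_left _ _)

theorem ramp_mono {s t : ℝ} (h : s ≤ t) : ramp s ≤ ramp t :=
  max_le_max le_rfl (min_le_min le_rfl h)

theorem ramp_key_pos {u r : ℝ} (hr : 0 ≤ r) (hu : 0 ≤ u) (hu1 : u ≤ 1) :
    clip r ≤ ramp (u + r) - ramp (u - r) := by
  unfold clip ramp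
  simp only [max_def, min_def]
  split_ifs <;> linarith

theorem ramp_key (u r : ℝ) : clip r ^ 2 * i1 (Set.Icc 0 1) u ≤ clip r * (ramp (u + r) - ramp (u - r)) := by
  wlog hr : 0 ≤ r with H
  · have := H u (-r) (by linarith)
    rw [clip_neg] at this
    have e : u - -r = u + r := by ring
    have e' : u + -r = u - r := by ring
    rw [e, e'] at this
    linarith [this, neg_sq (clip r)]
  have c0 : 0 ≤ clip r := by
    unfold clip; exact le_max_of_le_right (le_min (by norm_num) hr)
  rw [sq, mul_assoc]
  refine mul_le_mul_of_nonneg_left ?_ c0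
  by_cases hu : u ∈ Set.Icc (0:ℝ) 1
  · rw [i1_of_mem hu, mul_one]; exact ramp_key_pos hr hu.1 hu.2
  · rw [i1_of_notMem hu, mul_zero]
    have := ramp_mono (show u - r ≤ u + r by linarith)
    linarith

/-- Truncated second moment of a coordinate. -/
noncomputable def mm (F : Al m) (q : Fin m) (τ : ℝ) : ℝ := pr F fun x => min 1 ((x q / τ) ^ 2)

theorem mm_nonneg {F : Al m} (hF : Pos F) (q : Fin m) (τ : ℝ) : 0 ≤ mm F q τ :=
  pr_nonneg hF fun _ => le_min zero_le_one (sq_nonneg _)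

theorem sqrt_aux {mm P N : ℝ} (hm : 0 ≤ mm) (hN : 0 < N) {c : ℝ} (hc : 0 ≤ c)
    (h : mm * P ≤ c * Real.sqrt (mm / N)) : P * Real.sqrt (N * mm) ≤ c := by
  rw [Real.sqrt_mul hN.le]
  rw [Real.sqrt_div hm] at h
  have hN' : 0 < Real.sqrt N := Real.sqrt_pos.2 hN
  rcases eq_or_lt_of_le (Real.sqrt_nonneg mm) with h0 | h0
  · rw [← h0]; simpa using hc
  · have e : mm = Real.sqrt mm * Real.sqrt mm := (Real.mul_self_sqrt hm).symm
    rw [mul_div_assoc', le_div_iff₀ hN'] at h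
    nth_rewrite 1 [e] at h
    have : Real.sqrt mm * (P * (Real.sqrt N * Real.sqrt mm)) ≤ Real.sqrt mm * c := by
      linarith
    exact le_of_mul_le_mul_left this h0

theorem lemB {F : Al m} (hF : PS F) (q : Fin m) {τ : ℝ} (hτ : 0 < τ) (b : ℝ) (N : ℕ) :
    pr (F ^ N) (fun y => i1 (Set.Icc b (b + τ)) (y q)) * Real.sqrt ((N + 1) * mm F q τ) ≤ 2 := by
  have hodd : pr F (fun x : E m => clip (x q / τ)) = 0 := hF.sym.pr_odd fun x => by
    rw [Pi.neg_apply, neg_div, clip_neg]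
  have hA := lemA hF.pos hF.mass hodd N (h := fun y => ramp ((y q - b) / τ)) (B := 1)
    (fun x => abs_ramp _)
  have e1 : pr F (fun x => clip (x q / τ) ^ 2) = mm F q τ := by
    unfold mm; simp only [clip_sq]
  rw [e1, one_mul] at hA
  refine sqrt_aux (mm_nonneg hF.pos q τ) (by positivity) (by norm_num) ?_
  have e2 : pr (F ^ N * wt (fun x => clip (x q / τ)) F) (fun y => ramp ((y q - b) / τ)) =
      pr (F ^ N) fun y => (1 / 2) * pr F fun x => clip (x q / τ) *
        (ramp ((y q - b) / τ + x q / τ) - ramp ((y q - b) / τ - x q / τ)) := by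
    rw [pr_mul]
    congr 1; funext y
    rw [pr_wt]
    have s1 := hF.sym.pr_neg (fun x => clip (x q / τ) * ramp ((y q - b) / τ + x q / τ))
    simp only [Pi.neg_apply, neg_div, clip_neg] at s1
    have s2 : (fun x : E m => clip (x q / τ) * ramp (((y + x) q - b) / τ)) =
        fun x => clip (x q / τ) * ramp ((y q - b) / τ + x q / τ) := by
      funext x; congr 2; rw [Pi.add_apply]; ring
    have s3 : (fun x : E m => clip (x q / τ) *
        (ramp ((y q - b) / τ + x q / τ) - ramp ((y q - b) / τ - x q / τ))) =
        fun x => clip (x q / τ) * ramp ((y q - b) / τ + x q / τ) +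
          -clip (x q / τ) * ramp ((y q - b) / τ + -(x q / τ)) := by
      funext x; rw [← sub_eq_add_neg ((y q - b) / τ)]; ring
    rw [s2, s3, pr_fadd, s1]; ring
  have e3 : mm F q τ * pr (F ^ N) (fun y => i1 (Set.Icc b (b + τ)) (y q)) ≤
      2 * pr (F ^ N * wt (fun x => clip (x q / τ)) F) (fun y => ramp ((y q - b) / τ)) := by
    rw [e2, ← pr_fmul, ← pr_fmul]
    refine pr_mono (hF.pos.pow N) fun y => ?_
    rw [← mul_assoc, ← e1, mul_comm, ← pr_fmul]
    norm_num
    refine pr_mono hF.pos fun x => ?_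
    have := ramp_key ((y q - b) / τ) (x q / τ)
    have e : i1 (Set.Icc b (b + τ)) (y q) = i1 (Set.Icc 0 1) ((y q - b) / τ) := by
      by_cases h : y q ∈ Set.Icc b (b + τ)
      · rw [i1_of_mem h, i1_of_mem]
        exact ⟨div_nonneg (by linarith [h.1]) hτ.le, (div_le_one hτ).2 (by linarith [h.2])⟩
      · rw [i1_of_notMem h, i1_of_notMem]
        rintro ⟨h1, h2⟩
        apply h
        rw [div_le_one hτ] at h2
        have h3 : 0 ≤ y q - b := by
          by_contra hc
          have := div_neg_of_neg_of_pos (not_le.1 hc) hτ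
          linarith
        exact ⟨by linarith, by linarith⟩
    rw [e]; linarith
  linarith [le_abs_self (pr (F ^ N * wt (fun x => clip (x q / τ)) F) (fun y => ramp ((y q - b) / τ)))]

theorem lemB' {F : Al m} (hF : PS F) (q : Fin m) {τ v : ℝ} (hτ : 0 < τ) (hv : 0 ≤ v) (b : ℝ) (N : ℕ) :
    pr (F ^ N) (fun y => i1 {z | |z - b| ≤ v * τ} (y q)) * Real.sqrt ((N + 1) * mm F q τ) ≤
      2 * (1 + 2 * v) := by
  set w := 1 + 2 * v with hw
  have hw1 : 1 ≤ w := by linarith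
  have h := lemB hF q (τ := w * τ) (by positivity) (b - v * τ) N
  have h1 : pr (F ^ N) (fun y => i1 {z | |z - b| ≤ v * τ} (y q)) ≤
      pr (F ^ N) (fun y => i1 (Set.Icc (b - v * τ) (b - v * τ + w * τ)) (y q)) := by
    refine pr_mono (hF.pos.pow N) fun y => i1_mono ?_ _
    intro z hz
    have := abs_le.1 (show |z - b| ≤ v * τ from hz)
    exact ⟨by linarith, by nlinarith⟩
  have h2 : mm F q τ ≤ w ^ 2 * mm F q (w * τ) := by
    unfold mm
    rw [← pr_fmul]
    refine pr_mono hF.pos fun x => ?_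
    rw [mul_min_of_nonneg _ _ (sq_nonneg w)]
    refine min_le_min (by nlinarith) (le_of_eq ?_)
    rw [← mul_pow]; congr 1; field_simp
  have h3 : Real.sqrt ((N + 1) * mm F q τ) ≤ w * Real.sqrt ((N + 1) * mm F q (w * τ)) := by
    rw [← Real.sqrt_sq (show 0 ≤ w by linarith), ← Real.sqrt_mul (sq_nonneg _),
      Real.sqrt_sq (show 0 ≤ w by linarith)]
    apply Real.sqrt_le_sqrt
    have : (0:ℝ) ≤ N + 1 := by positivity
    nlinarith
  have p0 : 0 ≤ pr (F ^ N) (fun y => i1 {z | |z - b| ≤ v * τ} (y q)) :=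
    pr_nonneg (hF.pos.pow N) fun _ => i1_nonneg _ _
  calc _ ≤ pr (F ^ N) (fun y => i1 (Set.Icc (b - v * τ) (b - v * τ + w * τ)) (y q)) *
        (w * Real.sqrt ((N + 1) * mm F q (w * τ))) :=
        mul_le_mul h1 h3 (Real.sqrt_nonneg _) (p0.trans h1)
    _ ≤ 2 * w := by nlinarith

/-- Upper sets: separation bound. -/
theorem sep_upper {F : Al m} (hF : PS F) (q : Fin m) {U : Set ℝ} (hU : IsUpperSet U) (n : ℕ) :
    pr (F ^ n) (fun y => pr F fun x => |i1 U (y q) - i1 U (y q + x q)|) ≤ 1 / Real.sqrt (n + 1) := by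
  have hodd : pr F (fun x : E m => (SignType.sign (x q) : ℝ)) = 0 := hF.sym.pr_odd fun x => by
    rw [Pi.neg_apply, Left.sign_neg]; simp
  have hA := lemA hF.pos hF.mass hodd n (h := fun y => i1 U (y q)) (B := 1)
    (fun x => by rw [abs_of_nonneg (i1_nonneg _ _)]; exact i1_le_one _ _)
  have e : ∀ y x : E m, |i1 U (y q) - i1 U (y q + x q)| =
      (SignType.sign (x q) : ℝ) * i1 U (y q + x q) - i1 U (y q) * (SignType.sign (x q) : ℝ) := by
    intro y x
    rcases lt_trichotomy (x q) 0 with h | h | h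
    · have : i1 U (y q + x q) ≤ i1 U (y q) := by
        by_cases h' : y q + x q ∈ U
        · rw [i1_of_mem h', i1_of_mem (hU (by linarith) h')]
        · rw [i1_of_notMem h']; exact i1_nonneg _ _
      rw [abs_of_nonneg (by linarith), sign_neg h]; push_cast; simp; ring
    · rw [h]; simp
    · have : i1 U (y q) ≤ i1 U (y q + x q) := by
        by_cases h' : y q ∈ U
        · rw [i1_of_mem h', i1_of_mem (hU (by linarith) h')]
        · rw [i1_of_notMem h']; exact i1_nonneg _ _
      rw [abs_of_nonpos (by linarith), sign_pos h]; push_cast; simp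
  simp only [e, pr_fsub, pr_fmul, hodd, mul_zero, sub_zero]
  have e2 : pr (F ^ n * wt (fun x => (SignType.sign (x q) : ℝ)) F) (fun y => i1 U (y q)) =
      pr (F ^ n) fun y => pr F fun x => (SignType.sign (x q) : ℝ) * i1 U (y q + x q) := by
    rw [pr_mul]; congr 1; funext y; rw [pr_wt]; rfl
  rw [← e2]
  refine (le_abs_self _).trans (hA.trans ?_)
  rw [one_mul, ← Real.sqrt_one, ← Real.sqrt_div zero_le_one, Real.sqrt_one]
  apply Real.sqrt_le_sqrt
  have : pr F (fun x : E m => (SignType.sign (x q) : ℝ) ^ 2) ≤ 1 := by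
    have := pr_le_mass hF.pos (f := fun x : E m => (SignType.sign (x q) : ℝ) ^ 2) (B := 1) (fun x => by
      rcases lt_trichotomy (x q) 0 with h | h | h
      · rw [sign_neg h]; simp
      · rw [h]; simp
      · rw [sign_pos h]; simp)
    rwa [hF.mass, one_mul] at this
  gcongr

theorem sep_interval {F : Al m} (hF : PS F) (q : Fin m) {J : Set ℝ} (hJ : J.OrdConnected) (n : ℕ) :
    pr (F ^ n) (fun y => pr F fun x => |i1 J (y q) - i1 J (y q + x q)|) ≤ 2 / Real.sqrt (n + 1) := by
  set U1 : Set ℝ := {y | ∃ x ∈ J, x ≤ y} with hU1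
  set U2 : Set ℝ := {y | y ∉ J ∧ ∃ x ∈ J, x ≤ y} with hU2
  have u1 : IsUpperSet U1 := fun a b hab ⟨x, hx, hxa⟩ => ⟨x, hx, hxa.trans hab⟩
  have u2 : IsUpperSet U2 := fun a b hab ⟨ha, x, hx, hxa⟩ =>
    ⟨fun hb => ha (hJ.out hx hb ⟨hxa, hab⟩), x, hx, hxa.trans hab⟩
  have e : ∀ y, i1 J y = i1 U1 y - i1 U2 y := by
    intro y
    by_cases h : y ∈ J
    · rw [i1_of_mem h, i1_of_mem (show y ∈ U1 from ⟨y, h, le_rfl⟩),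
        i1_of_notMem (show y ∉ U2 from fun h' => h'.1 h)]; norm_num
    · rw [i1_of_notMem h]
      by_cases h1 : y ∈ U1
      · rw [i1_of_mem h1, i1_of_mem (show y ∈ U2 from ⟨h, h1⟩)]; norm_num
      · rw [i1_of_notMem h1, i1_of_notMem (show y ∉ U2 from fun h' => h1 h'.2)]; norm_num
  have s1 := sep_upper hF q u1 n
  have s2 := sep_upper hF q u2 n
  have : pr (F ^ n) (fun y => pr F fun x => |i1 J (y q) - i1 J (y q + x q)|) ≤
      pr (F ^ n) (fun y => (pr F fun x => |i1 U1 (y q) - i1 U1 (y q + x q)|) +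
        (pr F fun x => |i1 U2 (y q) - i1 U2 (y q + x q)|)) := by
    refine pr_mono (hF.pos.pow n) fun y => ?_
    rw [← pr_fadd]
    refine pr_mono hF.pos fun x => ?_
    rw [e, e]
    calc _ = |(i1 U1 (y q) - i1 U1 (y q + x q)) + -(i1 U2 (y q) - i1 U2 (y q + x q))| := by
          congr 1; ring
      _ ≤ _ := (abs_add_le _ _).trans_eq (by rw [abs_neg])
  rw [pr_fadd] at this
  have e3 : 2 / Real.sqrt (n + 1 : ℝ) = 1 / Real.sqrt (n + 1) + 1 / Real.sqrt (n + 1) := by ring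
  rw [e3]; linarith

theorem ind_diff_le (I : Fin m → Set ℝ) (y z : E m) :
    |ind I y - ind I z| ≤ ∑ q, |i1 (I q) (y q) - i1 (I q) (z q)| := by
  have key : ∀ s : Finset (Fin m), |∏ q ∈ s, i1 (I q) (y q) - ∏ q ∈ s, i1 (I q) (z q)| ≤
      ∑ q ∈ s, |i1 (I q) (y q) - i1 (I q) (z q)| := by
    intro s
    induction s using Finset.induction_on with
    | empty => simp
    | insert a s ha ih =>
      rw [Finset.prod_insert ha, Finset.prod_insert ha, Finset.sum_insert ha]
      have p0 : 0 ≤ ∏ q ∈ s, i1 (I q) (y q) := Finset.prod_nonneg fun _ _ => i1_nonneg _ _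
      have p1 : ∏ q ∈ s, i1 (I q) (y q) ≤ 1 :=
        Finset.prod_le_one (fun _ _ => i1_nonneg _ _) fun _ _ => i1_le_one _ _
      set P := ∏ q ∈ s, i1 (I q) (y q)
      set Q := ∏ q ∈ s, i1 (I q) (z q)
      calc _ = |(i1 (I a) (y a) - i1 (I a) (z a)) * P + i1 (I a) (z a) * (P - Q)| := by
            congr 1; ring
        _ ≤ |i1 (I a) (y a) - i1 (I a) (z a)| * P + i1 (I a) (z a) * |P - Q| := by
            refine (abs_add_le _ _).trans_eq ?_
            rw [abs_mul, abs_mul, abs_of_nonneg p0, abs_of_nonneg (i1_nonneg (I a) (z a))]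
        _ ≤ _ := by
            have := mul_le_of_le_one_right (abs_nonneg (i1 (I a) (y a) - i1 (I a) (z a))) p1
            have := mul_le_of_le_one_left (abs_nonneg (P - Q)) (i1_le_one (I a) (z a))
            linarith
  exact key Finset.univ

/-- Part 1: adjacent powers. -/
theorem part1 {F : Al m} (hF : PS F) {I : Fin m → Set ℝ} (hI : IsBox I) (n : ℕ) :
    |pr (F ^ n) (ind I) - pr (F ^ (n + 1)) (ind I)| ≤ 2 * m / Real.sqrt (n + 1) := by
  have e : pr (F ^ n) (ind I) - pr (F ^ (n + 1)) (ind I) =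
      pr (F ^ n) fun y => pr F fun x => ind I y - ind I (y + x) := by
    rw [pow_succ, pr_mul, ← pr_fsub]
    congr 1; funext y
    rw [pr_fsub, pr_const, hF.mass, one_mul]
  rw [e]
  have : |pr (F ^ n) fun y => pr F fun x => ind I y - ind I (y + x)| ≤
      pr (F ^ n) fun y => ∑ q, pr F fun x => |i1 (I q) (y q) - i1 (I q) (y q + x q)| := by
    refine abs_pr_le (hF.pos.pow n) fun y => ?_
    rw [← pr_fsum]
    exact abs_pr_le hF.pos fun x => ind_diff_le I y (y + x)
  refine this.trans ?_
  rw [pr_fsum]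
  calc _ ≤ ∑ q : Fin m, 2 / Real.sqrt (n + 1 : ℝ) :=
        Finset.sum_le_sum fun q _ => sep_interval hF q (hI q) n
    _ = _ := by rw [Finset.sum_const, Finset.card_univ, Fintype.card_fin, nsmul_eq_mul]; ring

end ZP

namespace ZP

open AddMonoidAlgebra (single)

variable {m : ℕ}

/-- The error bound in the induction. -/
noncomputable def bt (m : ℕ) (C : ℝ) (k n : ℕ) : ℝ := C * k / n + 70 * m / Real.sqrt n

/-- The induction hypothesis. -/
def Hyp (m N : ℕ) (C : ℝ) : Prop := ∀ n k : ℕ, 1 ≤ n → n ≤ N → 1 ≤ k → ∀ F : Al m, PS F →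
  ∀ I : Fin m → Set ℝ, IsBox I → |pr (F ^ n * (1 - F ^ (2 * k))) (ind I)| ≤ bt m C k n

theorem bt_nonneg (m : ℕ) {C : ℝ} (hC : 0 ≤ C) (k n : ℕ) : 0 ≤ bt m C k n := by
  unfold bt; positivity

theorem bt_quarter (m : ℕ) {C : ℝ} (hC : 0 ≤ C) (k : ℕ) {n l : ℕ} (hn : 1 ≤ n) (hl : 1 ≤ l) (h : n ≤ 4 * l) :
    bt m C k l ≤ 4 * bt m C k n := by
  unfold bt
  have hl' : (0:ℝ) < l := by exact_mod_cast hl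
  have hn' : (0:ℝ) < n := by exact_mod_cast hn
  have h' : (n:ℝ) ≤ 4 * l := by exact_mod_cast h
  have h1 : C * k / l ≤ 4 * (C * k / n) := by
    rw [mul_div_assoc', div_le_div_iff₀ hl' hn']
    have : (0:ℝ) ≤ C * k := by positivity
    nlinarith
  have h2 : (70 * m : ℝ) / Real.sqrt l ≤ 4 * (70 * m / Real.sqrt n) := by
    have s : Real.sqrt n ≤ 2 * Real.sqrt l := by
      rw [show (2:ℝ) = Real.sqrt 4 by rw [show (4:ℝ) = 2^2 by norm_num, Real.sqrt_sq (by norm_num)],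
        ← Real.sqrt_mul (by norm_num)]
      exact Real.sqrt_le_sqrt h'
    have p1 := Real.sqrt_pos.2 hl'
    have p2 := Real.sqrt_pos.2 hn'
    rw [mul_div_assoc', div_le_div_iff₀ p1 p2]
    have : (0:ℝ) ≤ 70 * m := by positivity
    nlinarith
  linarith

theorem wt_smul (ξ : E m → ℝ) (a : ℝ) (μ : Al m) : wt ξ (a • μ) = a • wt ξ μ :=
  ext_coeff fun x => by simp only [coeff_wt, AddMonoidAlgebra.coeff_smul, Finsupp.smul_apply, smul_eq_mul]; ring

theorem wt_sub (ξ : E m → ℝ) (μ ν : Al m) : wt ξ (μ - ν) = wt ξ μ - wt ξ ν :=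
  ext_coeff fun x => by simp only [coeff_wt, AddMonoidAlgebra.coeff_sub, Finsupp.sub_apply]; ring

theorem wt_one {ξ : E m → ℝ} (hξ : ∀ x y, ξ (x + y) = ξ x + ξ y) : wt ξ (1 : Al m) = 0 := by
  have : ξ 0 = 0 := by have := hξ 0 0; simp at this; exact this
  rw [AddMonoidAlgebra.one_def, wt_single, this]; simp

theorem wt_pow {ξ : E m → ℝ} (hξ : ∀ x y, ξ (x + y) = ξ x + ξ y) (F : Al m) (n : ℕ) :
    wt ξ (F ^ (n + 1)) = ((n + 1 : ℕ) : ℝ) • (F ^ n * wt ξ F) := by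
  induction n with
  | zero => simp
  | succ n ih =>
    rw [pow_succ, wt_mul hξ, ih]
    push_cast
    simp only [add_smul, one_smul, smul_mul_assoc, pow_succ, add_mul]
    have : F ^ n * wt ξ F * F = F ^ n * F * wt ξ F := by ring
    rw [this]

theorem wt_wt_pow {ξ : E m → ℝ} (hξ : ∀ x y, ξ (x + y) = ξ x + ξ y) (F : Al m) (n : ℕ) :
    wt ξ (wt ξ (F ^ (n + 2))) = ((n + 2 : ℝ) * (n + 1)) • (F ^ n * (wt ξ F * wt ξ F)) +
      (n + 2 : ℝ) • (F ^ (n + 1) * wt ξ (wt ξ F)) := by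
  rw [wt_pow hξ, wt_smul, wt_mul hξ, wt_pow hξ]
  push_cast
  rw [smul_add, smul_mul_assoc, smul_smul, mul_assoc]
  have e : (n : ℝ) + 1 + 1 = n + 2 := by ring
  rw [e]

theorem weighted_id {ξ : E m → ℝ} (hξ : ∀ x y, ξ (x + y) = ξ x + ξ y) (F : Al m) (n k : ℕ) :
    wt ξ (wt ξ (F ^ (n + 2) * (1 - F ^ (2 * k)))) =
      ((n + 2 : ℝ) * (n + 1)) • (F ^ n * (1 - F ^ (2 * k)) * (wt ξ F * wt ξ F))
      - ((2 * k : ℝ) * (2 * n + 2 * k + 3)) • (F ^ (n + 2 * k) * (wt ξ F * wt ξ F))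
      + (n + 2 : ℝ) • (F ^ (n + 1) * (1 - F ^ (2 * k)) * wt ξ (wt ξ F))
      - (2 * k : ℝ) • (F ^ (n + 2 * k + 1) * wt ξ (wt ξ F)) := by
  rw [mul_sub, mul_one, ← pow_add, wt_sub, wt_sub, wt_wt_pow hξ,
    show n + 2 + 2 * k = n + 2 * k + 2 by ring, wt_wt_pow hξ]
  push_cast
  have e1 : F ^ (n + 2 * k) = F ^ n * F ^ (2 * k) := pow_add _ _ _
  have e2 : F ^ (n + 2 * k + 1) = F ^ (n + 1) * F ^ (2 * k) := by rw [← pow_add]; congr 1; ring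
  rw [e1, e2]
  generalize wt ξ F * wt ξ F = G
  generalize wt ξ (wt ξ F) = H
  generalize F ^ (2 * k) = Q
  have e3 : F ^ n * (1 - Q) * G = F ^ n * G - F ^ n * Q * G := by ring
  have e4 : F ^ (n+1) * (1 - Q) * H = F ^ (n+1) * H - F ^ (n+1) * Q * H := by ring
  rw [e3, e4]
  module

/-- Second moment of a coordinate. -/
noncomputable def m2 (F : Al m) (q : Fin m) : ℝ := pr F fun x => x q ^ 2

theorem m2_nonneg {F : Al m} (hF : Pos F) (q : Fin m) : 0 ≤ m2 F q := pr_nonneg hF fun _ => sq_nonneg _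

theorem PS.mass_pow {F : Al m} (hF : PS F) (n : ℕ) : ZP.mass (F ^ n) = 1 := by
  rw [ZP.mass_pow, hF.mass, one_pow]

theorem gg_bound {F : Al m} (hF : PS F) (q : Fin m) (t : ℕ) {ν : Al m} {f : E m → ℝ} {B : ℝ}
    (hB : ∀ x, |pr ν fun y => f (x + y)| ≤ B) :
    |pr (F ^ (t + t) * ν * (wt (fun x => x q) F * wt (fun x => x q) F)) f| ≤ B * (m2 F q / (t + 1)) := by
  have hodd : pr F (fun x : E m => x q) = 0 := hF.sym.pr_odd fun x => by simp
  have h1 := lemA2 hF.pos hF.mass hodd t hB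
  have h2 := lemA2 hF.pos hF.mass hodd t (ν := F ^ t * wt (fun x => x q) F * ν) (f := f) h1 0
  have h0 : 0 ≤ m2 F q / (t + 1) := div_nonneg (m2_nonneg hF.pos q) (by positivity)
  have e : B * √((pr F fun x => x q ^ 2) / (↑t + 1)) * √((pr F fun x => x q ^ 2) / (↑t + 1)) =
      B * (m2 F q / (t + 1)) := by
    rw [mul_assoc]; exact congrArg (B * ·) (Real.mul_self_sqrt h0)
  rw [e] at h2
  simp only [zero_add] at h2
  convert h2 using 3
  rw [pow_add]; ring

theorem weighted {Nm : ℕ} {C : ℝ} (hH : Hyp m Nm C) (hC : 1 ≤ C) {F : Al m} (hF : PS F) (q : Fin m)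
    {N k : ℕ} (hN : 8 ≤ N) (hNm : N ≤ Nm) (hk : 1 ≤ k) (hkN : k ≤ N)
    {I : Fin m → Set ℝ} (hI : IsBox I) :
    |pr (F ^ N * (1 - F ^ (2 * k))) (fun x => x q ^ 2 * ind I x)| ≤ 54 * N * m2 F q * bt m C k N := by
  obtain ⟨n, rfl⟩ : ∃ n, N = n + 2 := ⟨N - 2, by omega⟩
  set ξ : E m → ℝ := fun x => x q with hξd
  have hξ : ∀ x y, ξ (x + y) = ξ x + ξ y := fun x y => rfl
  have hC0 : 0 ≤ C := by linarith
  set b := bt m C k (n + 2) with hb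
  have hb0 : 0 ≤ b := bt_nonneg m hC0 _ _
  set M := m2 F q with hM
  have hM0 : 0 ≤ M := m2_nonneg hF.pos q
  have e0 : pr (F ^ (n+2) * (1 - F ^ (2 * k))) (fun x => x q ^ 2 * ind I x) =
      pr (wt ξ (wt ξ (F ^ (n + 2) * (1 - F ^ (2 * k))))) (ind I) := by
    rw [pr_wt, pr_wt]; congr 1; funext x; simp only [hξd]; ring
  have hkb : (k : ℝ) ≤ (n + 2) * b := by
    have : (k:ℝ) ≤ C * k := by
      have : (0:ℝ) ≤ k := by positivity
      nlinarith
    refine this.trans ?_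
    rw [hb]; unfold bt
    push_cast
    have h1 : (n + 2 : ℝ) * (C * k / (n + 2)) = C * k := by field_simp
    have h2 : 0 ≤ (n + 2 : ℝ) * (70 * m / √(n + 2)) := by positivity
    rw [mul_add, h1]; linarith
  have hHm : Pos (wt ξ (wt ξ F)) := by
    rw [wt_wt]; exact Pos.wt (fun x => mul_self_nonneg _) hF.pos
  have hHmass : mass (wt ξ (wt ξ F)) = M := by
    unfold mass; rw [wt_wt, pr_wt, hM]; unfold m2; congr 1; funext x; simp only [hξd]; ring
  have hind : ∀ l, 1 ≤ l → l ≤ n + 2 → n + 2 ≤ 4 * l → ∀ x,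
      |pr (F ^ l * (1 - F ^ (2 * k))) fun y => ind I (x + y)| ≤ 4 * b := by
    intro l h1 h2 h3 x
    simp only [ind_shift]
    exact (hH l k h1 (h2.trans hNm) hk F hF _ (hI.shift x)).trans (bt_quarter m hC0 k (by omega) h1 h3)
  set t := (n + 2) / 4 with ht
  obtain ⟨l, hl⟩ : ∃ l, n = t + t + l := ⟨n - 2 * t, by omega⟩
  have ht4 : (n + 2 : ℝ) ≤ 4 * (t + 1) := by
    have : n + 2 ≤ 4 * (t + 1) := by omega
    exact_mod_cast this
  have hMt : M / (t + 1) ≤ 4 * M / (n + 2) := by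
    rw [div_le_div_iff₀ (by positivity) (by positivity)]; nlinarith
  have b3 : |pr (F ^ n * (1 - F ^ (2 * k)) * (wt ξ F * wt ξ F)) (ind I)| ≤ 4 * b * (4 * M / (n + 2)) := by
    have := gg_bound hF q t (ν := F ^ l * (1 - F ^ (2 * k))) (f := ind I)
      (hind l (by omega) (by omega) (by omega))
    rw [show F ^ (t + t) * (F ^ l * (1 - F ^ (2 * k))) = F ^ n * (1 - F ^ (2 * k)) by
      rw [← mul_assoc, ← pow_add, ← hl]] at this
    exact this.trans (mul_le_mul_of_nonneg_left hMt (by positivity))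
  have b4 : |pr (F ^ (n + 2 * k) * (wt ξ F * wt ξ F)) (ind I)| ≤ 4 * M / (n + 2) := by
    have := gg_bound hF q t (ν := F ^ (l + 2 * k)) (f := ind I) (B := 1) (fun x => by
      have := abs_pr_le_mass (hF.pos.pow (l + 2 * k)) (f := fun y => ind I (x + y)) (B := 1)
        (fun y => abs_ind_le_one _ _)
      rwa [hF.mass_pow, one_mul] at this)
    rw [← pow_add, show t + t + (l + 2 * k) = n + 2 * k by omega, one_mul] at this
    exact this.trans hMt
  have b1 : |pr (F ^ (n + 1) * (1 - F ^ (2 * k)) * wt ξ (wt ξ F)) (ind I)| ≤ M * (4 * b) := by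
    rw [mul_comm, pr_mul, ← hHmass]
    exact abs_pr_le_mass hHm (hind (n+1) (by omega) (by omega) (by omega))
  have b2 : |pr (F ^ (n + 2 * k + 1) * wt ξ (wt ξ F)) (ind I)| ≤ M := by
    have := abs_pr_le_mass ((hF.pos.pow (n + 2 * k + 1)).mul hHm) (abs_ind_le_one I)
    rwa [mass_mul, hF.mass_pow, hHmass, one_mul, mul_one] at this
  rw [e0, weighted_id hξ]
  simp only [pr_add, pr_sub, pr_smul, smul_eq_mul]
  have hn2 : (0:ℝ) < n + 2 := by positivity
  have hk0 : (0:ℝ) ≤ k := by positivity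
  have hkN' : (k:ℝ) ≤ n + 2 := by exact_mod_cast hkN
  have c3 := mul_le_mul_of_nonneg_left b3 (show (0:ℝ) ≤ (n + 2 : ℝ) * (n + 1) by positivity)
  have c4 := mul_le_mul_of_nonneg_left b4 (show (0:ℝ) ≤ (2 * k : ℝ) * (2 * n + 2 * k + 3) by positivity)
  have c1 := mul_le_mul_of_nonneg_left b1 hn2.le
  have c2 := mul_le_mul_of_nonneg_left b2 (show (0:ℝ) ≤ 2 * k by positivity)
  rw [← abs_of_nonneg (show (0:ℝ) ≤ (n + 2 : ℝ) * (n + 1) by positivity), ← abs_mul, abs_of_nonneg (show (0:ℝ) ≤ (n + 2 : ℝ) * (n + 1) by positivity)] at c3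
  rw [← abs_of_nonneg (show (0:ℝ) ≤ (2 * k : ℝ) * (2 * n + 2 * k + 3) by positivity), ← abs_mul, abs_of_nonneg (show (0:ℝ) ≤ (2 * k : ℝ) * (2 * n + 2 * k + 3) by positivity)] at c4
  rw [← abs_of_nonneg hn2.le, ← abs_mul, abs_of_nonneg hn2.le] at c1
  rw [← abs_of_nonneg (show (0:ℝ) ≤ 2 * k by positivity), ← abs_mul, abs_of_nonneg (show (0:ℝ) ≤ 2 * (k:ℝ) by positivity)] at c2
  have d3 : (n + 2 : ℝ) * (n + 1) * (4 * b * (4 * M / (n + 2))) ≤ 16 * (n + 2) * M * b := by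
    have : (n + 2 : ℝ) * (n + 1) * (4 * b * (4 * M / (n + 2))) = 16 * (n + 1) * (M * b) := by
      field_simp; ring
    rw [this]; nlinarith [mul_nonneg hM0 hb0]
  have d4 : (2 * k : ℝ) * (2 * n + 2 * k + 3) * (4 * M / (n + 2)) ≤ 32 * (n + 2) * M * b := by
    have h1 : (2 * k : ℝ) * (2 * n + 2 * k + 3) ≤ 8 * (k * (n + 2)) := by nlinarith
    have h2 : (2 * k : ℝ) * (2 * n + 2 * k + 3) * (4 * M / (n + 2)) ≤ 8 * (k * (n + 2)) * (4 * M / (n + 2)) :=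
      mul_le_mul_of_nonneg_right h1 (by positivity)
    have h3 : 8 * (k * (n + 2 : ℝ)) * (4 * M / (n + 2)) = 32 * k * M := by field_simp; ring
    nlinarith [mul_le_mul_of_nonneg_right hkb hM0]
  have d2 : (2 * k : ℝ) * M ≤ 2 * (n + 2) * M * b := by nlinarith [mul_le_mul_of_nonneg_right hkb hM0]
  have tri : ∀ a b c d : ℝ, |a - b + c - d| ≤ |a| + |b| + |c| + |d| := by
    intro a b c d
    have := abs_sub (a - b + c) d
    have := abs_add_le (a - b) c
    have := abs_sub a b
    linarith
  refine (tri _ _ _ _).trans ?_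
  push_cast
  linarith

theorem ordConnected_sq (t u : ℝ) (ht : 0 ≤ t) : Set.OrdConnected {z : ℝ | z ^ 2 * t ≤ u} := by
  refine ⟨fun a ha b hb c hc => ?_⟩
  simp only [Set.mem_ofPred_eq] at *
  have : c ^ 2 ≤ max (a ^ 2) (b ^ 2) := by
    rcases le_total 0 c with h | h
    · exact le_max_of_le_right (by nlinarith [hc.2])
    · exact le_max_of_le_left (by nlinarith [hc.1])
  rcases le_max_iff.1 this with h | h
  · nlinarith
  · nlinarith

theorem layer {x u : ℝ} (hu : 0 < u) (hx : u ≤ |x|) :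
    ∫ t in (0:ℝ)..1, x ^ 2 * i1 {z | z ^ 2 * t ≤ u ^ 2} x = u ^ 2 := by
  have hx2 : u ^ 2 ≤ x ^ 2 := by rw [← sq_abs x]; exact pow_le_pow_left₀ hu.le hx 2
  have hx0 : 0 < x ^ 2 := lt_of_lt_of_le (by positivity) hx2
  rw [intervalIntegral.integral_of_le zero_le_one]
  have e : (fun t : ℝ => x ^ 2 * i1 {z | z ^ 2 * t ≤ u ^ 2} x) =
      (Set.Iic (u ^ 2 / x ^ 2)).indicator fun _ => x ^ 2 := by
    funext t
    by_cases h : t ≤ u ^ 2 / x ^ 2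
    · rw [Set.indicator_of_mem (by exact h), i1_of_mem, mul_one]
      rw [le_div_iff₀ hx0] at h; show x ^ 2 * t ≤ u ^ 2; linarith
    · rw [Set.indicator_of_notMem (by exact h), i1_of_notMem, mul_zero]
      rw [le_div_iff₀ hx0] at h; show ¬ (x ^ 2 * t ≤ u ^ 2); linarith
  rw [e, setIntegral_indicator measurableSet_Iic]
  have h1 : u ^ 2 / x ^ 2 ≤ 1 := by rw [div_le_one hx0]; exact hx2
  have h0 : 0 ≤ u ^ 2 / x ^ 2 := by positivity
  have : Set.Ioc (0:ℝ) 1 ∩ Set.Iic (u ^ 2 / x ^ 2) = Set.Ioc 0 (u ^ 2 / x ^ 2) := by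
    ext t; simp only [Set.mem_inter_iff, Set.mem_Ioc, Set.mem_Iic]
    constructor
    · rintro ⟨⟨a, b⟩, c⟩; exact ⟨a, c⟩
    · rintro ⟨a, c⟩; exact ⟨⟨a, c.trans h1⟩, c⟩
  rw [this]
  simp only [integral_const, smul_eq_mul, measureReal_restrict_apply_univ, Real.volume_real_Ioc_of_le h0]
  rw [sub_zero, div_mul_cancel₀ _ hx0.ne']

/-- Tail estimate. -/
theorem tail {Nm : ℕ} {C : ℝ} (hH : Hyp m Nm C) (hC : 1 ≤ C) {F : Al m} (hF : PS F) (q : Fin m)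
    {N k : ℕ} (hN : 8 ≤ N) (hNm : N ≤ Nm) (hk : 1 ≤ k) (hkN : k ≤ N)
    {I : Fin m → Set ℝ} (hI : IsBox I) {u : ℝ} (hu : 0 < u) (hIu : ∀ z ∈ I q, u ≤ |z|) :
    |pr (F ^ N * (1 - F ^ (2 * k))) (ind I)| ≤ 54 * N * m2 F q * bt m C k N / u ^ 2 := by
  set μ := F ^ N * (1 - F ^ (2 * k))
  set J : ℝ → Fin m → Set ℝ := fun t => Function.update I q (I q ∩ {z | z ^ 2 * t ≤ u ^ 2}) with hJ
  have hind : ∀ t x, ind (J t) x = ind I x * i1 {z | z ^ 2 * t ≤ u ^ 2} (x q) := by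
    intro t x
    have e : ind I x = ind (Function.update I q (I q)) x := by rw [Function.update_eq_self]
    rw [e, hJ, ind_update, ind_update]
    have : i1 (I q ∩ {z | z ^ 2 * t ≤ u ^ 2}) (x q) = i1 (I q) (x q) * i1 {z | z ^ 2 * t ≤ u ^ 2} (x q) := by
      by_cases h : x q ∈ I q <;> by_cases h' : x q ∈ {z | z ^ 2 * t ≤ u ^ 2}
      · rw [i1_of_mem h, i1_of_mem h', i1_of_mem (S := I q ∩ _) ⟨h, h'⟩, mul_one]
      · rw [i1_of_notMem h', i1_of_notMem fun hh => h' hh.2, mul_zero]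
      · rw [i1_of_notMem h, i1_of_notMem fun hh => h hh.1, zero_mul]
      · rw [i1_of_notMem h, i1_of_notMem fun hh => h hh.1, zero_mul]
    rw [this]; ring
  have hpt : ∀ x : E m, u ^ 2 * ind I x = ∫ t in (0:ℝ)..1, x q ^ 2 * ind (J t) x := by
    intro x
    simp only [hind]
    by_cases hx : x q ∈ I q
    · have : ∀ t : ℝ, x q ^ 2 * (ind I x * i1 {z | z ^ 2 * t ≤ u ^ 2} (x q)) =
          ind I x * (x q ^ 2 * i1 {z | z ^ 2 * t ≤ u ^ 2} (x q)) := fun t => by ring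
      simp only [this]
      rw [intervalIntegral.integral_const_mul, layer hu (hIu _ hx)]; ring
    · rw [ind_of_notMem hx]; simp
  have hintg : ∀ x : E m, IntervalIntegrable (fun t => x q ^ 2 * ind (J t) x) volume 0 1 := by
    intro x
    have : Antitone fun t : ℝ => x q ^ 2 * ind (J t) x := by
      intro s t hst
      simp only [hind]
      refine mul_le_mul_of_nonneg_left (mul_le_mul_of_nonneg_left ?_ (ind_nonneg _ _)) (sq_nonneg _)
      by_cases h : x q ∈ {z | z ^ 2 * t ≤ u ^ 2}
      · rw [i1_of_mem h, i1_of_mem]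
        exact le_trans (mul_le_mul_of_nonneg_left hst (sq_nonneg _)) h
      · rw [i1_of_notMem h]; exact i1_nonneg _ _
    exact this.intervalIntegrable
  have e1 : u ^ 2 * pr μ (ind I) = ∫ t in (0:ℝ)..1, pr μ (fun x => x q ^ 2 * ind (J t) x) := by
    rw [← pr_fmul]
    simp only [hpt]
    simp only [pr_eq_sum]
    rw [intervalIntegral.integral_finsetSum]
    · refine Finset.sum_congr rfl fun x _ => ?_
      rw [intervalIntegral.integral_smul]
    · intro x _
      exact (hintg x).const_mul (μ.coeff x)
  have e2 : ‖∫ t in (0:ℝ)..1, pr μ (fun x => x q ^ 2 * ind (J t) x)‖ ≤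
      54 * N * m2 F q * bt m C k N * |1 - 0| := by
    refine intervalIntegral.norm_integral_le_of_norm_le_const fun t ht => ?_
    rw [Set.uIoc_of_le zero_le_one] at ht
    exact weighted hH hC hF q hN hNm hk hkN (hI.update q ((hI q).inter (ordConnected_sq t _ ht.1.le)))
  rw [← e1, Real.norm_eq_abs, abs_mul, abs_of_pos (by positivity : 0 < u ^ 2)] at e2
  rw [le_div_iff₀ (by positivity)]
  simp at e2
  linarith

/-- Swapping a distribution for a nearby one. -/
theorem swap {F R μ : Al m} {p : ℝ} (hF : F = μ + (1 - p) • R) (hFp : Pos F) (hF1 : mass F = 1)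
    (hR : PS R) (hμ : Pos μ) (hμp : mass μ = p) {f : E m → ℝ} (h0 : ∀ x, 0 ≤ f x) (h1 : ∀ x, f x ≤ 1)
    (j : ℕ) : ∀ {ν : Al m}, Pos ν → mass ν = 1 → |pr (ν * (F ^ j - R ^ j)) f| ≤ j * p := by
  have hp : 0 ≤ p := hμp ▸ mass_nonneg hμ
  induction j with
  | zero => intro ν _ _; simp [pr_zero]
  | succ j ih =>
    intro ν hν hν1
    have e : ν * (F ^ (j + 1) - R ^ (j + 1)) =
        ν * F ^ j * μ - p • (ν * F ^ j * R) + ν * R * (F ^ j - R ^ j) := by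
      have : p • (ν * F ^ j * R) = ν * F ^ j * (μ + R - F) := by
        rw [hF, sub_smul, one_smul, ← mul_smul_comm]; congr 1; abel
      rw [this, pow_succ, pow_succ]; ring
    rw [e, pr_add, pr_sub, pr_smul]
    have i1 := ih (hν.mul hR.pos) (by rw [mass_mul, hν1, hR.mass, one_mul])
    have P1 : Pos (ν * F ^ j * μ) := (hν.mul (hFp.pow j)).mul hμ
    have P2 : Pos (ν * F ^ j * R) := (hν.mul (hFp.pow j)).mul hR.pos
    have a1 := pr_le_mass P1 h1
    have a2 := pr_le_mass P2 h1
    have a3 := pr_nonneg P1 h0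
    have a4 := pr_nonneg P2 h0
    simp only [mass_mul, hν1, mass_pow, hF1, hR.mass, hμp, one_pow, one_mul, mul_one] at a1 a2
    push_cast
    rw [abs_le] at i1 ⊢
    rw [smul_eq_mul]
    constructor <;> nlinarith

theorem binom_bad {p : ℝ} (hp : 0 ≤ p) (hp2 : p ≤ 1 / 2) {n : ℕ} (hn : 1 ≤ n) :
    ∑ j ∈ (Finset.range (n + 1)).filter (fun j => 3 * n < 4 * j), (n.choose j : ℝ) * (p ^ j * (1 - p) ^ (n - j)) ≤
      4 / n := by
  have h := congrArg (Polynomial.eval p) (bernsteinPolynomial.variance ℝ n)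
  simp only [Polynomial.eval_finsetSum, Polynomial.eval_mul, Polynomial.eval_pow, Polynomial.eval_sub,
    Polynomial.eval_smul, Polynomial.eval_X, Polynomial.eval_natCast, Polynomial.eval_one,
    bernsteinPolynomial, nsmul_eq_mul] at h
  have hn' : (0:ℝ) < n := by exact_mod_cast hn
  have hb : ∀ j, 0 ≤ (n.choose j : ℝ) * (p ^ j * (1 - p) ^ (n - j)) := fun j => by
    have : 0 ≤ 1 - p := by linarith
    positivity
  have h1 : (n / 4 : ℝ) ^ 2 * ∑ j ∈ (Finset.range (n + 1)).filter (fun j => 3 * n < 4 * j), (n.choose j : ℝ) * (p ^ j * (1 - p) ^ (n - j)) ≤ n * p * (1 - p) := by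
    rw [← h, Finset.mul_sum]
    refine (Finset.sum_le_sum (g := fun j : ℕ => ((n * p - (j : ℝ)) ^ 2 : ℝ) * (n.choose j * p ^ j * (1 - p) ^ (n - j))) ?_).trans
      (Finset.sum_le_sum_of_subset_of_nonneg (Finset.filter_subset _ _) ?_)
    · intro j hj
      rw [Finset.mem_filter] at hj
      rw [mul_assoc (n.choose j : ℝ)]
      refine mul_le_mul_of_nonneg_right ?_ (hb j)
      have : (3 * n : ℝ) < 4 * j := by exact_mod_cast hj.2
      rw [← neg_sq (n * p - (j:ℝ))]
      refine pow_le_pow_left₀ (by positivity) ?_ 2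
      nlinarith
    · intro j _ _
      have := hb j
      rw [← mul_assoc] at this
      positivity
  have h2 : (n:ℝ) * p * (1 - p) ≤ n / 4 := by nlinarith [sq_nonneg (p - 1 / 2)]
  rw [le_div_iff₀ hn']
  set S := ∑ j ∈ (Finset.range (n + 1)).filter (fun j => 3 * n < 4 * j), (n.choose j : ℝ) * (p ^ j * (1 - p) ^ (n - j))
  have h3 : (n:ℝ) * (S * n) ≤ n * 4 := by nlinarith
  exact le_of_mul_le_mul_left h3 hn'

theorem abs_pr_diff_le {R : Al m} (hR : PS R) {f : E m → ℝ} (h0 : ∀ x, 0 ≤ f x) (h1 : ∀ x, f x ≤ 1)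
    (n j : ℕ) : |pr (R ^ n * (1 - R ^ j)) f| ≤ 1 := by
  rw [mul_sub, mul_one, ← pow_add, pr_sub]
  have a1 := pr_le_mass (hR.pos.pow n) h1
  have a2 := pr_le_mass (hR.pos.pow (n + j)) h1
  have a3 := pr_nonneg (hR.pos.pow n) h0
  have a4 := pr_nonneg (hR.pos.pow (n + j)) h0
  rw [hR.mass_pow] at a1 a2
  rw [abs_le]; constructor <;> linarith

/-- Mixture lemma. -/
theorem mixture {F R μ : Al m} {p : ℝ} (hF : F = μ + (1 - p) • R)
    (hR : PS R) (hμ : Pos μ) (hμp : mass μ = p) (hp2 : p ≤ 1 / 2)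
    {f : E m → ℝ} (h0 : ∀ x, 0 ≤ f x) (h1 : ∀ x, f x ≤ 1) {n k : ℕ} (hn : 1 ≤ n)
    {Φ : E m → ℝ} (hΦ0 : ∀ x, 0 ≤ Φ x)
    (hΦ : ∀ l, l ≤ n → n ≤ 4 * l → ∀ y, |pr (R ^ l * (1 - R ^ (2 * k))) fun x => f (y + x)| ≤ Φ y) :
    |pr (F ^ n * (1 - R ^ (2 * k))) f| ≤ pr ((μ + (1 - p) • (1 : Al m)) ^ n) Φ + 4 / n := by
  have hp : 0 ≤ p := hμp ▸ mass_nonneg hμ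
  have hq : 0 ≤ 1 - p := by linarith
  have eF : F ^ n = ∑ j ∈ Finset.range (n + 1), ((n.choose j : ℝ) * (1 - p) ^ (n - j)) • (μ ^ j * R ^ (n - j)) := by
    rw [hF, add_pow]
    refine Finset.sum_congr rfl fun j _ => ?_
    rw [smul_pow, mul_smul_comm, smul_mul_assoc, mul_comm (n.choose j : ℝ), mul_smul,
      ← nsmul_eq_mul', Nat.cast_smul_eq_nsmul]
  have eL : (μ + (1 - p) • (1 : Al m)) ^ n = ∑ j ∈ Finset.range (n + 1), ((n.choose j : ℝ) * (1 - p) ^ (n - j)) • μ ^ j := by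
    rw [add_pow]
    refine Finset.sum_congr rfl fun j _ => ?_
    rw [smul_pow, one_pow, mul_smul_comm, smul_mul_assoc, mul_one, mul_comm (n.choose j : ℝ), mul_smul,
      ← nsmul_eq_mul', Nat.cast_smul_eq_nsmul]
  rw [eF, Finset.sum_mul, pr_sum, eL, pr_sum]
  have hterm : ∀ j ∈ Finset.range (n + 1),
      |pr (((n.choose j : ℝ) * (1 - p) ^ (n - j)) • (μ ^ j * R ^ (n - j)) * (1 - R ^ (2 * k))) f| ≤
      pr (((n.choose j : ℝ) * (1 - p) ^ (n - j)) • μ ^ j) Φ +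
        if 3 * n < 4 * j then (n.choose j : ℝ) * (p ^ j * (1 - p) ^ (n - j)) else 0 := by
    intro j hj
    rw [Finset.mem_range] at hj
    have hc : 0 ≤ (n.choose j : ℝ) * (1 - p) ^ (n - j) := by positivity
    rw [smul_mul_assoc, mul_assoc, pr_smul, pr_mul, pr_smul, smul_eq_mul, smul_eq_mul, abs_mul, abs_of_nonneg hc]
    split_ifs with hb
    · have := abs_pr_le_mass (hμ.pow j) (f := fun x => pr (R ^ (n - j) * (1 - R ^ (2 * k))) fun y => f (x + y))
        (B := 1) (fun y => abs_pr_diff_le hR (fun _ => h0 _) (fun _ => h1 _) _ _)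
      rw [mass_pow, hμp, mul_one] at this
      have h3 := mul_le_mul_of_nonneg_left this hc
      have h4 := mul_nonneg hc (pr_nonneg (hμ.pow j) hΦ0)
      nlinarith
    · rw [add_zero]
      refine mul_le_mul_of_nonneg_left ?_ hc
      exact abs_pr_le (hμ.pow j) fun y => hΦ (n - j) (by omega) (by omega) y
  refine (Finset.abs_sum_le_sum_abs _ _).trans ((Finset.sum_le_sum hterm).trans ?_)
  rw [Finset.sum_add_distrib, ← Finset.sum_filter]
  have := binom_bad hp hp2 hn
  linarith

end ZP

namespace ZP

open AddMonoidAlgebra (single)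

variable {m : ℕ}

/-- Indicator of a subset of `E m`. -/
noncomputable def iE (T : Set (E m)) (x : E m) : ℝ := T.indicator (fun _ => 1) x

theorem iE_of_mem {T : Set (E m)} {x : E m} (h : x ∈ T) : iE T x = 1 := Set.indicator_of_mem h _
theorem iE_of_notMem {T : Set (E m)} {x : E m} (h : x ∉ T) : iE T x = 0 := Set.indicator_of_notMem h _
theorem iE_nonneg (T : Set (E m)) (x : E m) : 0 ≤ iE T x := Set.indicator_nonneg (fun _ _ => zero_le_one) _
theorem iE_le_one (T : Set (E m)) (x : E m) : iE T x ≤ 1 := by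
  by_cases h : x ∈ T
  · rw [iE_of_mem h]
  · rw [iE_of_notMem h]; norm_num
theorem iE_compl (T : Set (E m)) (x : E m) : iE Tᶜ x = 1 - iE T x := by
  by_cases h : x ∈ T
  · rw [iE_of_mem h, iE_of_notMem (by simpa using h)]; norm_num
  · rw [iE_of_notMem h, iE_of_mem (by simpa using h)]; norm_num
theorem iE_sq (T : Set (E m)) (x : E m) : iE T x * iE T x = iE T x := by
  by_cases h : x ∈ T
  · rw [iE_of_mem h]; norm_num
  · rw [iE_of_notMem h]; norm_num

/-- Mass of a set. -/
noncomputable def pT (F : Al m) (T : Set (E m)) : ℝ := pr F (iE T)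
/-- Restriction to a set. -/
noncomputable def cutμ (F : Al m) (T : Set (E m)) : Al m := wt (iE T) F
/-- Conditioning on the complement of a set. -/
noncomputable def cutR (F : Al m) (T : Set (E m)) : Al m := (1 - pT F T)⁻¹ • wt (iE Tᶜ) F

theorem pos_cutμ {F : Al m} (hF : Pos F) (T : Set (E m)) : Pos (cutμ F T) := Pos.wt (iE_nonneg T) hF
theorem mass_cutμ (F : Al m) (T : Set (E m)) : mass (cutμ F T) = pT F T := by
  unfold mass cutμ pT; rw [pr_wt]; simp
theorem pT_nonneg {F : Al m} (hF : Pos F) (T : Set (E m)) : 0 ≤ pT F T := pr_nonneg hF (iE_nonneg T)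

theorem cut_eq {F : Al m} {T : Set (E m)} (hp : pT F T < 1) :
    F = cutμ F T + (1 - pT F T) • cutR F T := by
  unfold cutμ cutR
  rw [smul_smul, mul_inv_cancel₀ (by linarith), one_smul]
  refine ext_coeff fun x => ?_
  rw [AddMonoidAlgebra.coeff_add, Finsupp.add_apply, coeff_wt, coeff_wt, iE_compl]; ring

theorem pr_cutR (F : Al m) (T : Set (E m)) (f : E m → ℝ) :
    pr (cutR F T) f = (1 - pT F T)⁻¹ * pr F fun x => iE Tᶜ x * f x := by
  unfold cutR; rw [pr_smul, pr_wt, smul_eq_mul]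

theorem PS_cutR {F : Al m} (hF : PS F) {T : Set (E m)} (hT : ∀ x, -x ∈ T ↔ x ∈ T) (hp : pT F T < 1) :
    PS (cutR F T) := by
  refine ⟨Pos.smul (inv_nonneg.2 (by linarith)) (Pos.wt (iE_nonneg _) hF.pos), Sym.smul _ (Sym.wt ?_ hF.sym), ?_⟩
  · intro x
    by_cases h : x ∈ T
    · rw [iE_compl, iE_compl, iE_of_mem h, iE_of_mem ((hT x).2 h)]
    · rw [iE_compl, iE_compl, iE_of_notMem h, iE_of_notMem (fun hh => h ((hT x).1 hh))]
  · unfold mass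
    rw [pr_cutR]
    simp only [iE_compl, mul_one]
    rw [pr_fsub, pr_const, hF.mass, mul_one]
    exact inv_mul_cancel₀ (by linarith)

theorem pr_cutR_le {F : Al m} (hF : PS F) {T : Set (E m)} (hp : pT F T ≤ 1 / 2) {f : E m → ℝ}
    (hf : ∀ x, 0 ≤ f x) : pr (cutR F T) f ≤ 2 * pr F fun x => iE Tᶜ x * f x := by
  rw [pr_cutR]
  refine mul_le_mul_of_nonneg_right ?_ (pr_nonneg hF.pos fun x => mul_nonneg (iE_nonneg _ _) (hf x))
  rw [inv_le_comm₀ (by linarith) (by norm_num)]; linarith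

theorem le_pr_cutR {F : Al m} (hF : PS F) {T : Set (E m)} (hp : pT F T < 1) {f : E m → ℝ}
    (hf : ∀ x, 0 ≤ f x) : (pr F fun x => iE Tᶜ x * f x) ≤ pr (cutR F T) f := by
  rw [pr_cutR]
  refine le_mul_of_one_le_left (pr_nonneg hF.pos fun x => mul_nonneg (iE_nonneg _ _) (hf x)) ?_
  rw [one_le_inv₀ (by linarith)]
  linarith [pT_nonneg hF.pos T]

theorem cutR_supp {F : Al m} {T : Set (E m)} {x : E m} (h : (cutR F T).coeff x ≠ 0) : x ∉ T := by
  intro hx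
  apply h
  unfold cutR
  rw [AddMonoidAlgebra.coeff_smul, Finsupp.smul_apply, coeff_wt, iE_of_notMem (by simpa using hx)]
  simp

/-- Windows in coordinate `q`. -/
def wdw (c r : ℝ) : Set ℝ := {z | |z - c| ≤ r}

theorem conv_window {F ν : Al m} (hF : PS F) (hν : Pos ν) (hν1 : mass ν = 1) (q : Fin m) {s w : ℝ}
    (hs : 0 < s) (hw : 0 ≤ w) (x0 : ℝ) (N : ℕ) {f : E m → ℝ} (h0 : ∀ x, 0 ≤ f x)
    (hf : ∀ x, f x ≤ i1 (wdw x0 (w * s)) (x q)) (x : E m) :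
    |pr (F ^ N * ν) fun y => f (x + y)| * Real.sqrt ((N + 1) * mm F q s) ≤ 2 * (1 + 2 * w) := by
  set S := Real.sqrt ((N + 1) * mm F q s)
  have hS : 0 ≤ S := Real.sqrt_nonneg _
  rw [abs_of_nonneg (pr_nonneg ((hF.pos.pow N).mul hν) fun y => h0 _), mul_comm (F ^ N), pr_mul]
  have : ∀ z, (pr (F ^ N) fun y => f (x + (z + y))) * S ≤ 2 * (1 + 2 * w) := by
    intro z
    refine le_trans (mul_le_mul_of_nonneg_right (pr_mono (hF.pos.pow N) fun y => ?_) hS)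
      (lemB' hF q hs hw (x0 - (x q + z q)) N)
    refine (hf _).trans (le_of_eq ?_)
    have : ∀ a b : Prop, (a ↔ b) → ∀ (A B : Set ℝ) (u v : ℝ), (u ∈ A ↔ a) → (v ∈ B ↔ b) → i1 A u = i1 B v := by
      intro a b hab A B u v h1 h2
      by_cases h : u ∈ A
      · rw [i1_of_mem h, i1_of_mem (h2.2 (hab.1 (h1.1 h)))]
      · rw [i1_of_notMem h, i1_of_notMem (fun hh => h (h1.2 (hab.2 (h2.1 hh))))]
    refine this _ _ ?_ _ _ _ _ Iff.rfl Iff.rfl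
    show |(x + (z + y)) q - x0| ≤ w * s ↔ |y q - (x0 - (x q + z q))| ≤ w * s
    have e : (x + (z + y)) q - x0 = y q - (x0 - (x q + z q)) := by simp only [Pi.add_apply]; ring
    rw [e]
  have h2 := pr_le_mass hν (f := fun z => S * (pr (F ^ N) fun y => f (x + (z + y))))
    (B := 2 * (1 + 2 * w)) (fun z => by rw [mul_comm]; exact this z)
  rw [pr_fmul, hν1, one_mul] at h2
  linarith

theorem mm_ge {F : Al m} (hF : Pos F) (q : Fin m) {s : ℝ} (hs : 0 < s) :
    pT F {x | s ≤ |x q|} ≤ mm F q s := by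
  refine pr_mono hF fun x => ?_
  by_cases h : x ∈ {x : E m | s ≤ |x q|}
  · rw [iE_of_mem h]
    refine le_min le_rfl ?_
    rw [← sq_abs, abs_div, abs_of_pos hs, one_le_sq_iff₀ (by positivity), one_le_div hs]
    exact h
  · rw [iE_of_notMem h]; exact le_min zero_le_one (sq_nonneg _)

/-- Swap estimate in a window. -/
theorem swap_window {F : Al m} (hF : PS F) (q : Fin m) {s w : ℝ}
    (hs : 0 < s) (hw : 0 ≤ w) (x0 : ℝ) {n : ℕ} (hn : 1 ≤ n) {f : E m → ℝ} (h0 : ∀ x, 0 ≤ f x)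
    (hf : ∀ x, f x ≤ i1 (wdw x0 (w * s)) (x q)) (hp : pT F {x | s ≤ |x q|} ≤ 1 / 2) (j : ℕ) :
    ∀ {ν : Al m}, Pos ν → mass ν = 1 →
      |pr (F ^ n * ν * (F ^ j - cutR F {x | s ≤ |x q|} ^ j)) f| ≤ j * (8 * (1 + 2 * w) / n) := by
  set T : Set (E m) := {x | s ≤ |x q|} with hT
  set p := pT F T with hpd
  have hp0 : 0 ≤ p := pT_nonneg hF.pos T
  have hTs : ∀ x, -x ∈ T ↔ x ∈ T := fun x => by simp [hT]
  have hR : PS (cutR F T) := PS_cutR hF hTs (by linarith)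
  set R := cutR F T
  have hn' : (0:ℝ) < n := by exact_mod_cast hn
  have hf1 : ∀ x, f x ≤ 1 := fun x => (hf x).trans (i1_le_one _ _)
  set ξ : E m → ℝ := fun x => iE T x - p with hξ
  have hξ0 : pr F ξ = 0 := by
    rw [hξ, pr_fsub, pr_const, hF.mass, one_mul]; show p - p = 0; ring
  have hξ2 : pr F (fun x => ξ x ^ 2) ≤ p := by
    have e : (fun x => ξ x ^ 2) = fun x => ((1 - 2 * p) * iE T x + p ^ 2) := by
      funext x; have := iE_sq T x; simp only [hξ]; nlinarith
    rw [e, pr_fadd, pr_fmul, pr_const, hF.mass]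
    show (1 - 2 * p) * p + 1 * p ^ 2 ≤ p
    nlinarith
  have hFR : F - R = (1 - p)⁻¹ • wt ξ F := by
    have hpne : 1 - p ≠ 0 := by linarith
    refine ext_coeff fun x => ?_
    show _ = _
    have : R = (1 - p)⁻¹ • wt (iE Tᶜ) F := rfl
    rw [this]
    simp only [AddMonoidAlgebra.coeff_sub, AddMonoidAlgebra.coeff_smul, Finsupp.sub_apply, Finsupp.smul_apply,
      coeff_wt, iE_compl, smul_eq_mul, hξ]
    field_simp; ring
  have key : ∀ {ν : Al m}, Pos ν → mass ν = 1 → |pr (F ^ n * ν * (F - R)) f| ≤ 8 * (1 + 2 * w) / n := by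
    intro ν hν hν1
    set n1 := n / 2 with hn1
    set n2 := n - n1 with hn2
    have hnn : n = n1 + n2 := by omega
    have e : F ^ n * ν * (F - R) = (1 - p)⁻¹ • (F ^ n1 * wt ξ F * (F ^ n2 * ν)) := by
      rw [hFR, hnn, pow_add, mul_smul_comm]; congr 1; ring
    rw [e, pr_smul, smul_eq_mul, abs_mul, abs_of_nonneg (inv_nonneg.2 (by linarith))]
    have hinv : (1 - p)⁻¹ ≤ 2 := by rw [inv_le_comm₀ (by linarith) (by norm_num)]; linarith
    have h1 : |pr (F ^ n1 * wt ξ F * (F ^ n2 * ν)) f| ≤ 4 * (1 + 2 * w) / n := by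
      rcases eq_or_lt_of_le hp0 with hpz | hpp
      · have := lemA2 hF.pos hF.mass hξ0 n1 (ν := F ^ n2 * ν) (f := f) (B := 1) (fun x => by
          have := abs_pr_le_mass ((hF.pos.pow n2).mul hν) (f := fun y => f (x + y)) (B := 1) (fun y => by
            rw [abs_of_nonneg (h0 _)]; exact hf1 _)
          rwa [mass_mul, hF.mass_pow, hν1, mul_one, mul_one] at this) 0
        simp only [zero_add, one_mul] at this
        have hz : pr F (fun x => ξ x ^ 2) = 0 :=
          le_antisymm (hξ2.trans hpz.symm.le) (pr_nonneg hF.pos fun _ => sq_nonneg _)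
        rw [hz, zero_div, Real.sqrt_zero] at this
        exact this.trans (by positivity)
      · have hmm : p ≤ mm F q s := mm_ge hF.pos q hs
        have hB : ∀ x, |pr (F ^ n2 * ν) fun y => f (x + y)| ≤ 2 * (1 + 2 * w) / Real.sqrt ((n2 + 1) * p) := by
          intro x
          rw [le_div_iff₀ (by positivity)]
          refine le_trans (mul_le_mul_of_nonneg_left ?_ (abs_nonneg _))
            (conv_window hF hν hν1 q hs hw x0 n2 h0 hf x)
          exact Real.sqrt_le_sqrt (mul_le_mul_of_nonneg_left hmm (by positivity))
        have := lemA2 hF.pos hF.mass hξ0 n1 (ν := F ^ n2 * ν) (f := f) hB 0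
        simp only [zero_add] at this
        refine this.trans ?_
        have h3 : Real.sqrt (pr F (fun x => ξ x ^ 2) / (n1 + 1)) ≤ Real.sqrt p / Real.sqrt (n1 + 1) := by
          rw [← Real.sqrt_div hp0]
          exact Real.sqrt_le_sqrt (div_le_div_of_nonneg_right hξ2 (by positivity))
        refine (mul_le_mul_of_nonneg_left h3 (by positivity)).trans ?_
        rw [Real.sqrt_mul (by positivity)]
        have hsp : 0 < Real.sqrt p := Real.sqrt_pos.2 hpp
        have e4 : 2 * (1 + 2 * w) / (Real.sqrt (n2 + 1) * Real.sqrt p) * (Real.sqrt p / Real.sqrt (n1 + 1)) =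
            2 * (1 + 2 * w) / Real.sqrt ((n1 + 1) * (n2 + 1)) := by
          rw [Real.sqrt_mul (by positivity)]; field_simp
        rw [e4]
        have h5 : (n / 2 : ℝ) ≤ Real.sqrt ((n1 + 1) * (n2 + 1)) := by
          apply Real.le_sqrt_of_sq_le
          have a1 : (n : ℝ) ≤ 2 * (n1 + 1) := by
            have : n ≤ 2 * (n1 + 1) := by omega
            exact_mod_cast this
          have a2 : (n : ℝ) ≤ 2 * (n2 + 1) := by
            have : n ≤ 2 * (n2 + 1) := by omega
            exact_mod_cast this
          nlinarith
        rw [div_le_div_iff₀ (by linarith [show (0:ℝ) < n / 2 by positivity]) hn']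
        have : 0 ≤ 1 + 2 * w := by positivity
        nlinarith
    calc (1 - p)⁻¹ * _ ≤ 2 * (4 * (1 + 2 * w) / n) :=
        mul_le_mul hinv h1 (abs_nonneg _) (by norm_num)
      _ = _ := by ring
  induction j with
  | zero => intro ν _ _; simp [pr_zero]
  | succ j ih =>
    intro ν hν hν1
    have e : F ^ n * ν * (F ^ (j + 1) - R ^ (j + 1)) =
        F ^ n * (ν * F ^ j) * (F - R) + F ^ n * (ν * R) * (F ^ j - R ^ j) := by ring
    rw [e, pr_add]
    have k1 := key (hν.mul (hF.pos.pow j)) (by rw [mass_mul, hν1, hF.mass_pow, one_mul])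
    have k2 := ih (hν.mul hR.pos) (by rw [mass_mul, hν1, hR.mass, one_mul])
    push_cast
    have := abs_add_le (pr (F ^ n * (ν * F ^ j) * (F - R)) f) (pr (F ^ n * (ν * R) * (F ^ j - R ^ j)) f)
    linarith

set_option maxHeartbeats 1000000 in
/-- Window lemma. -/
theorem window {C : ℝ} {n : ℕ} (hH : Hyp m n C) (hC : 1 ≤ C) {F : Al m} (hF : PS F) (q : Fin m)
    {k : ℕ} (hn : 32 ≤ n) (hk : 1 ≤ k) (hkn : 4 * k ≤ n) {I : Fin m → Set ℝ} (hI : IsBox I)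
    {s ρ w x0 K D : ℝ} (hs : 0 < s) (hsρ : s ≤ ρ) (hw : 0 ≤ w) (hIw : ∀ z ∈ I q, |z - x0| ≤ w * s)
    (hK : 0 < K) (hD : 0 < D) (hmm : K + 1 ≤ n * mm F q ρ)
    (hmom : n * (pr F fun x => iE {x | s ≤ |x q|}ᶜ x * x q ^ 2) ≤ ρ ^ 2) :
    |pr (F ^ n * (1 - F ^ (2 * k))) (ind I)| ≤ 3 * (1 + 2 * w) / Real.sqrt n +
      (20 + 32 * w) * k / n + 432 * bt m C k n / D ^ 2 +
        8 * bt m C k n * (1 + 2 * D + 2 * w) / Real.sqrt K := by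
  set b := bt m C k n with hb
  have hC0 : 0 ≤ C := by linarith
  have hb0 : 0 ≤ b := bt_nonneg m hC0 _ _
  have hn' : (0:ℝ) < n := by exact_mod_cast (by omega : 0 < n)
  have hk' : (1:ℝ) ≤ k := by exact_mod_cast hk
  have hsn : 0 < Real.sqrt n := Real.sqrt_pos.2 hn'
  have hρ : 0 < ρ := by linarith
  set T : Set (E m) := {x | s ≤ |x q|} with hT
  have hfI : ∀ x, ind I x ≤ i1 (wdw x0 (w * s)) (x q) := fun x =>
    (ind_le_i1 I x q).trans (i1_mono (fun z hz => hIw z hz) _)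
  rcases lt_or_ge (1 / 2) (pT F T) with hp | hp
  · have hmm2 : 1 / 2 ≤ mm F q s := hp.le.trans (mm_ge hF.pos q hs)
    have hb1 : ∀ N, n ≤ N → pr (F ^ N) (ind I) ≤ 3 * (1 + 2 * w) / Real.sqrt n := by
      intro N hN
      have := conv_window hF Pos.one mass_one q hs hw x0 N (ind_nonneg I) hfI 0
      simp only [mul_one, zero_add] at this
      rw [abs_of_nonneg (pr_nonneg (hF.pos.pow N) (ind_nonneg I))] at this
      have h2 : Real.sqrt n * (2 / 3) ≤ Real.sqrt ((N + 1) * mm F q s) := by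
        apply Real.le_sqrt_of_sq_le
        rw [mul_pow, Real.sq_sqrt hn'.le]
        have : (n:ℝ) ≤ N := by exact_mod_cast hN
        nlinarith
      have h3 := mul_le_mul_of_nonneg_left h2 (pr_nonneg (hF.pos.pow N) (ind_nonneg I))
      rw [le_div_iff₀ hsn]
      linarith
    have e : F ^ n * (1 - F ^ (2 * k)) = F ^ n - F ^ (n + 2 * k) := by rw [pow_add]; ring
    rw [e, pr_sub]
    have t1 := hb1 n le_rfl
    have t2 := hb1 (n + 2 * k) (by omega)
    have t3 := pr_nonneg (hF.pos.pow n) (ind_nonneg I)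
    have t4 := pr_nonneg (hF.pos.pow (n + 2 * k)) (ind_nonneg I)
    have p1 : 0 ≤ (20 + 32 * w) * k / n := by positivity
    have p2 : 0 ≤ 432 * b / D ^ 2 := by positivity
    have p3 : 0 ≤ 8 * b * (1 + 2 * D + 2 * w) / Real.sqrt K := by positivity
    rw [abs_le]; constructor <;> linarith
  · have hTs : ∀ x, -x ∈ T ↔ x ∈ T := fun x => by simp [hT]
    have hR : PS (cutR F T) := PS_cutR hF hTs (by linarith)
    set R := cutR F T with hRd
    set p := pT F T with hpd
    set μ := cutμ F T with hμd
    have hFd : F = μ + (1 - p) • R := cut_eq (by linarith)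
    have hμ : Pos μ := pos_cutμ hF.pos T
    have hμ1 : mass μ = p := mass_cutμ F T
    have hp0 : 0 ≤ p := pT_nonneg hF.pos T
    have e : F ^ n * (1 - F ^ (2 * k)) = F ^ n * (1 - R ^ (2 * k)) - F ^ n * 1 * (F ^ (2 * k) - R ^ (2 * k)) := by ring
    have ha := swap_window hF q hs hw x0 (by omega : 1 ≤ n) (ind_nonneg I) hfI hp (2 * k) Pos.one mass_one
    have hm2 : m2 R q * n ≤ 2 * ρ ^ 2 := by
      have : m2 R q ≤ 2 * pr F fun x => iE Tᶜ x * x q ^ 2 := pr_cutR_le hF hp fun _ => sq_nonneg _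
      nlinarith
    set Φ : E m → ℝ := fun y => 432 * b / D ^ 2 + 4 * b * i1 (wdw x0 ((D + w) * ρ)) (y q) with hΦ
    have hmix := mixture hFd hR hμ hμ1 hp (ind_nonneg I) (ind_le_one I) (n := n) (k := k) (by omega) (Φ := Φ)
      (fun x => by
        have := i1_nonneg (wdw x0 ((D + w) * ρ)) (x q)
        simp only [hΦ]; positivity)
      (by
        intro l hl hl4 y
        simp only [ind_shift]
        have hbl : bt m C k l ≤ 4 * b := bt_quarter m hC0 k (by omega) (by omega) hl4
        by_cases hy : y q ∈ wdw x0 ((D + w) * ρ)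
        · simp only [hΦ]
          rw [i1_of_mem hy, mul_one]
          have := hH l k (by omega) hl hk R hR _ (hI.shift y)
          have : 0 ≤ 432 * b / D ^ 2 := by positivity
          linarith
        · simp only [hΦ]
          rw [i1_of_notMem hy, mul_zero, add_zero]
          have hy' : (D + w) * ρ < |y q - x0| := not_le.1 hy
          have := tail hH hC hR q (N := l) (k := k) (by omega) hl hk (by omega) (hI.shift y) (u := D * ρ) (by positivity)
            (by
              intro z hz
              have h1 : |y q + z - x0| ≤ w * s := hIw _ hz
              have h2 : w * s ≤ w * ρ := mul_le_mul_of_nonneg_left hsρ hw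
              have h3 : |y q - x0| ≤ |y q + z - x0| + |z| := by
                have := abs_sub (y q + z - x0) z
                rwa [show y q + z - x0 - z = y q - x0 by ring] at this
              nlinarith)
          refine this.trans ?_
          rw [mul_pow, div_le_div_iff₀ (by positivity) (by positivity)]
          have hl' : (l:ℝ) ≤ n := by exact_mod_cast hl
          have hm0 : 0 ≤ m2 R q := m2_nonneg hR.pos q
          have h4 : l * m2 R q ≤ 2 * ρ ^ 2 := by nlinarith
          have h5 : l * m2 R q * bt m C k l ≤ 2 * ρ ^ 2 * (4 * b) :=
            mul_le_mul h4 hbl (bt_nonneg m hC0 _ _) (by positivity)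
          have hD2 : 0 ≤ D ^ 2 := by positivity
          nlinarith [mul_le_mul_of_nonneg_right h5 hD2])
    -- the mass of the window under the mixture
    set G : Al m := μ + (1 - p) • (1 : Al m) with hG
    have hGPS : PS G := by
      refine ⟨hμ.add (Pos.smul (by linarith) Pos.one), Sym.add (Sym.wt ?_ hF.sym) (Sym.smul _ Sym.one), ?_⟩
      · intro x
        by_cases h : x ∈ T
        · rw [iE_of_mem h, iE_of_mem ((hTs x).2 h)]
        · rw [iE_of_notMem h, iE_of_notMem (fun hh => h ((hTs x).1 hh))]
      · show pr G _ = 1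
        rw [hG, pr_add, pr_smul, pr_one]
        show mass μ + (1 - p) • 1 = 1
        rw [hμ1]; simp
    have hGmm : K ≤ n * mm G q ρ := by
      have h1 : mm F q ρ - (pr F fun x => iE Tᶜ x * x q ^ 2) / ρ ^ 2 ≤ mm G q ρ := by
        have e1 : mm G q ρ = pr F fun x => iE T x * min 1 ((x q / ρ) ^ 2) := by
          unfold mm
          rw [hG, pr_add, pr_smul, pr_one, hμd, cutμ, pr_wt]; simp
        rw [e1]
        have e2 : (pr F fun x => iE Tᶜ x * x q ^ 2) / ρ ^ 2 = pr F fun x => (ρ ^ 2)⁻¹ * (iE Tᶜ x * x q ^ 2) := by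
          rw [pr_fmul]; ring
        rw [e2]; unfold mm
        rw [← pr_fsub]
        refine pr_mono hF.pos fun x => ?_
        rw [iE_compl]
        have h3 : min 1 ((x q / ρ) ^ 2) ≤ (ρ ^ 2)⁻¹ * x q ^ 2 := by
          refine (min_le_right _ _).trans (le_of_eq ?_); rw [div_pow]; ring
        have h4 := iE_le_one T x
        nlinarith
      have h2 : n * ((pr F fun x => iE Tᶜ x * x q ^ 2) / ρ ^ 2) ≤ 1 := by
        rw [mul_div_assoc', div_le_one (by positivity)]; exact hmom
      nlinarith
    have hL : pr (G ^ n) Φ ≤ 432 * b / D ^ 2 + 8 * b * (1 + 2 * D + 2 * w) / Real.sqrt K := by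
      simp only [hΦ]
      rw [pr_fadd, pr_const, pr_fmul, hGPS.mass_pow, one_mul]
      have := lemB' hGPS q hρ (v := D + w) (by positivity) x0 n
      have h1 : Real.sqrt K ≤ Real.sqrt ((n + 1) * mm G q ρ) := by
        apply Real.sqrt_le_sqrt
        have := mm_nonneg hGPS.pos q ρ
        nlinarith
      have hsK : 0 < Real.sqrt K := Real.sqrt_pos.2 hK
      set P := pr (G ^ n) (fun y => i1 {z | |z - x0| ≤ (D + w) * ρ} (y q)) with hP
      have hP0 : 0 ≤ P := pr_nonneg (hGPS.pos.pow n) fun _ => i1_nonneg _ _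
      have h2 : P ≤ 2 * (1 + 2 * (D + w)) / Real.sqrt K := by
        rw [le_div_iff₀ hsK]
        exact (mul_le_mul_of_nonneg_left h1 hP0).trans this
      have e5 : 8 * b * (1 + 2 * D + 2 * w) / Real.sqrt K = 4 * b * (2 * (1 + 2 * (D + w)) / Real.sqrt K) := by ring
      rw [e5]
      have : 4 * b * P ≤ 4 * b * (2 * (1 + 2 * (D + w)) / Real.sqrt K) :=
        mul_le_mul_of_nonneg_left h2 (by positivity)
      exact add_le_add le_rfl this
    rw [e, pr_sub]
    have t1 := abs_sub (pr (F ^ n * (1 - R ^ (2 * k))) (ind I)) (pr (F ^ n * 1 * (F ^ (2 * k) - R ^ (2 * k))) (ind I))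
    push_cast at ha
    have t2 : 2 * (k:ℝ) * (8 * (1 + 2 * w) / n) + 4 / n ≤ (20 + 32 * w) * k / n := by
      have : (20 + 32 * w) * k / n = 2 * (k:ℝ) * (8 * (1 + 2 * w) / n) + 4 * k / n := by ring
      rw [this]
      gcongr
      linarith
    have p1 : 0 ≤ 3 * (1 + 2 * w) / Real.sqrt n := by positivity
    linarith

end ZP

namespace ZP

open AddMonoidAlgebra (single)

variable {m : ℕ}

section general
variable {M : Type*} [AddCommGroup M] {V : Type*} [NormedAddCommGroup V] [NormedSpace ℝ V]

theorem pr_integral {Ω : Type*} [MeasurableSpace Ω] (P : Measure Ω) (μ : AddMonoidAlgebra ℝ M)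
    {G : M → Ω → V} (hG : ∀ x, Integrable (G x) P) :
    pr μ (fun x => ∫ ω, G x ω ∂P) = ∫ ω, pr μ (fun x => G x ω) ∂P := by
  simp only [pr_eq_sum]
  have h := integral_finsetSum (μ := P) μ.coeff.support (f := fun x ω => μ.coeff x • G x ω)
    fun x _ => (hG x).smul _
  rw [h]
  exact Finset.sum_congr rfl fun x _ => (integral_smul _ _).symm

theorem integrable_pr {Ω : Type*} [MeasurableSpace Ω] (P : Measure Ω) (μ : AddMonoidAlgebra ℝ M)
    {G : M → Ω → V} (hG : ∀ x, Integrable (G x) P) :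
    Integrable (fun ω => pr μ (fun x => G x ω)) P := by
  simp only [pr_eq_sum]
  exact integrable_finsetSum _ fun x _ => (hG x).smul _
end general

theorem pr_ofReal (μ : Al m) (f : E m → ℝ) : pr μ (fun x => (f x : ℂ)) = ((pr μ f : ℝ) : ℂ) := by
  simp [pr_eq_sum]

theorem pr_cmul (μ : Al m) (f : E m → ℂ) (a : ℂ) :
    pr μ (fun x => a * f x) = a * pr μ f := by
  simp only [pr_eq_sum, Finset.mul_sum]
  exact Finset.sum_congr rfl fun x _ => (mul_smul_comm _ _ _).symm

/-- The characters. -/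
noncomputable def ee (ξ x : ℝ) : ℂ := Complex.exp (((ξ * x : ℝ) : ℂ) * Complex.I)

theorem ee_add (ξ x y : ℝ) : ee ξ (x + y) = ee ξ x * ee ξ y := by
  unfold ee; rw [← Complex.exp_add]; congr 1; push_cast; ring

theorem norm_ee (ξ x : ℝ) : ‖ee ξ x‖ = 1 := Complex.norm_exp_ofReal_mul_I _

theorem continuous_ee (x : ℝ) : Continuous fun ξ => ee ξ x := by unfold ee; fun_prop

theorem prod_ee (ξ x : E m) : ∏ q, ee (ξ q) (x q) = ee (∑ q, ξ q * x q) 1 := by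
  unfold ee; rw [← Complex.exp_sum]; congr 1; push_cast; rw [← Finset.sum_mul]; simp

/-- Characteristic function. -/
noncomputable def ch (ξ : E m) (μ : Al m) : ℂ := pr μ fun x => ∏ q, ee (ξ q) (x q)

theorem ch_mul (ξ : E m) (μ ν : Al m) : ch ξ (μ * ν) = ch ξ μ * ch ξ ν := by
  unfold ch
  rw [pr_mul]
  simp only [Pi.add_apply, ee_add, Finset.prod_mul_distrib, pr_cmul]
  rw [mul_comm, ← pr_cmul]; simp only [mul_comm]

theorem ch_one (ξ : E m) : ch ξ (1 : Al m) = 1 := by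
  unfold ch; rw [pr_one]; simp [ee]

theorem ch_pow (ξ : E m) (μ : Al m) (n : ℕ) : ch ξ (μ ^ n) = ch ξ μ ^ n := by
  induction n with
  | zero => simp [ch_one]
  | succ n ih => rw [pow_succ, pow_succ, ch_mul, ih]

theorem ch_sub (ξ : E m) (μ ν : Al m) : ch ξ (μ - ν) = ch ξ μ - ch ξ ν := pr_sub _ _ _

theorem ch_real {R : Al m} (hR : PS R) (ξ : E m) : ∃ φ : ℝ, ch ξ R = φ ∧ |φ| ≤ 1 := by
  refine ⟨pr R fun x => Real.cos (∑ q, ξ q * x q), ?_, ?_⟩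
  · have h : ch ξ R = pr R (fun x => ((Real.cos (∑ q, ξ q * x q) : ℝ) : ℂ)
        + Complex.I * ((Real.sin (∑ q, ξ q * x q) : ℝ) : ℂ)) := by
      unfold ch; congr 1; funext x
      rw [prod_ee]; unfold ee; rw [Complex.exp_mul_I]; push_cast; simp; ring
    rw [h, pr_fadd, pr_cmul, pr_ofReal, pr_ofReal]
    have : pr R (fun x => Real.sin (∑ q, ξ q * x q)) = 0 := by
      apply hR.sym.pr_odd
      intro x; simp [Finset.sum_neg_distrib]
    rw [this]; simp
  · have := abs_pr_le_mass (f := fun x => Real.cos (∑ q, ξ q * x q)) (B := 1) hR.pos (fun x => Real.abs_cos_le_one _)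
    rwa [hR.mass, one_mul] at this

theorem pow_aux {y : ℝ} (h0 : 0 ≤ y) (h1 : y ≤ 1) (r k : ℕ) :
    y ^ r * (1 - y ^ k) ≤ k / (r + 1) := by
  have hk : 1 - y ^ k ≤ k * (1 - y) := by
    have := one_add_mul_le_pow (a := y - 1) (by linarith) k
    rw [add_sub_cancel] at this
    linarith
  have hr : (r + 1) * (y ^ r * (1 - y)) ≤ 1 := by
    have : (r + 1 : ℝ) * y ^ r ≤ ∑ i ∈ Finset.range (r + 1), y ^ i := by
      have := Finset.card_nsmul_le_sum (Finset.range (r + 1)) (fun i => y ^ i) (y ^ r) (fun i hi =>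
        pow_le_pow_of_le_one h0 h1 (by simp at hi; omega))
      simpa using this
    have h2 := mul_le_mul_of_nonneg_right this (sub_nonneg.2 h1)
    rw [geom_sum_mul_neg] at h2
    have := pow_nonneg h0 (r + 1)
    nlinarith
  rw [le_div_iff₀ (by positivity)]
  have h3 := mul_le_mul_of_nonneg_left hk (pow_nonneg h0 r)
  have h4 := mul_le_mul_of_nonneg_left hr (Nat.cast_nonneg (α := ℝ) k)
  have h5 := mul_le_mul_of_nonneg_right h3 (show (0:ℝ) ≤ r + 1 by positivity)
  nlinarith

theorem pow_aux2 {φ : ℝ} (h : |φ| ≤ 1) {N : ℕ} (hN : 1 ≤ N) (k : ℕ) :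
    |φ ^ N * (1 - φ ^ (2 * k))| ≤ (4 * k / N) * φ ^ (2 * (N / 4)) := by
  set r := N / 4 with hr
  have hy : φ ^ 2 ≤ 1 := by rw [← sq_abs]; exact pow_le_one₀ (abs_nonneg _) h
  have hy0 : 0 ≤ φ ^ 2 := sq_nonneg _
  have e1 : φ ^ (2 * k) = (φ ^ 2) ^ k := pow_mul _ _ _
  have e2 : φ ^ (2 * r) = (φ ^ 2) ^ r := pow_mul _ _ _
  have h1 : (φ ^ 2) ^ k ≤ 1 := pow_le_one₀ hy0 hy
  have h2 : |φ| ^ N ≤ (φ ^ 2) ^ r * (φ ^ 2) ^ r := by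
    rw [← sq_abs, ← pow_mul, ← pow_add]
    exact pow_le_pow_of_le_one (abs_nonneg _) h (by omega)
  rw [abs_mul, abs_pow, e1, e2, abs_of_nonneg (sub_nonneg.2 h1)]
  calc |φ| ^ N * (1 - (φ ^ 2) ^ k) ≤ ((φ ^ 2) ^ r * (φ ^ 2) ^ r) * (1 - (φ ^ 2) ^ k) :=
        mul_le_mul_of_nonneg_right h2 (sub_nonneg.2 h1)
    _ = ((φ ^ 2) ^ r * (1 - (φ ^ 2) ^ k)) * (φ ^ 2) ^ r := by ring
    _ ≤ (k / (r + 1)) * (φ ^ 2) ^ r := mul_le_mul_of_nonneg_right (pow_aux hy0 hy r k) (by positivity)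
    _ ≤ (4 * k / N) * (φ ^ 2) ^ r := by
      refine mul_le_mul_of_nonneg_right ?_ (by positivity)
      rw [div_le_div_iff₀ (by positivity) (by positivity)]
      have : (N : ℝ) ≤ 4 * (r + 1) := by
        have : N ≤ 4 * (r + 1) := by omega
        exact_mod_cast this
      have := mul_le_mul_of_nonneg_left this (Nat.cast_nonneg (α := ℝ) k)
      linarith

/-- Fourier data in one variable. -/
structure Dat (γ : Measure ℝ) (b : ℝ → ℂ) (U h κ : ℝ → ℝ) : Prop where
  sf : SigmaFinite γ
  ib : Integrable b γ
  iU : Integrable U γ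
  le : ∀ ξ, ‖b ξ‖ ≤ U ξ
  eh : ∀ x, (h x : ℂ) = ∫ ξ, b ξ * ee ξ x ∂γ
  ek : ∀ x, (κ x : ℂ) = ∫ ξ, (U ξ : ℂ) * ee ξ x ∂γ

theorem integrable_mul_ee {γ : Measure ℝ} {b : ℝ → ℂ} (hb : Integrable b γ) (x : ℝ) :
    Integrable (fun ξ => b ξ * ee ξ x) γ := by
  refine hb.mul_bdd (c := 1) (continuous_ee x).aestronglyMeasurable ?_
  exact Filter.Eventually.of_forall fun ξ => (norm_ee ξ x).le

theorem fourier_rep {γ : Fin m → Measure ℝ} (hγ : ∀ q, SigmaFinite (γ q)) {b : Fin m → ℝ → ℂ}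
    (hb : ∀ q, Integrable (b q) (γ q)) {h : Fin m → ℝ → ℝ}
    (hh : ∀ q x, (h q x : ℂ) = ∫ ξ, b q ξ * ee ξ x ∂(γ q)) (μ : Al m) :
    ((pr μ (fun x => ∏ q, h q (x q)) : ℝ) : ℂ)
      = ∫ ξ, (∏ q, b q (ξ q)) * ch ξ μ ∂(Measure.pi γ)
    ∧ Integrable (fun ξ : E m => (∏ q, b q (ξ q)) * ch ξ μ) (Measure.pi γ) := by
  have hi : ∀ x : E m, Integrable (fun ξ : E m => ∏ q, (b q (ξ q) * ee (ξ q) (x q))) (Measure.pi γ) :=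
    fun x => Integrable.fintype_prod (f := fun q ξ => b q ξ * ee ξ (x q)) fun q => integrable_mul_ee (hb q) (x q)
  have e : ∀ ξ : E m, (∏ q, b q (ξ q)) * ch ξ μ
      = pr μ fun x => ∏ q, (b q (ξ q) * ee (ξ q) (x q)) := by
    intro ξ
    unfold ch
    rw [← pr_cmul]
    simp only [Finset.prod_mul_distrib]
  simp only [e]
  refine ⟨?_, integrable_pr _ _ hi⟩
  rw [← pr_integral _ _ hi, ← pr_ofReal]
  congr 1; funext x
  rw [integral_fintype_prod_eq_prod (f := fun q ξ => b q ξ * ee ξ (x q))]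
  push_cast
  exact Finset.prod_congr rfl fun q _ => hh q _

theorem lemS1 {R : Al m} (hR : PS R) {N : ℕ} (hN : 1 ≤ N) (k : ℕ) {γ : Fin m → Measure ℝ}
    {b : Fin m → ℝ → ℂ} {U h κ : Fin m → ℝ → ℝ} (hd : ∀ q, Dat (γ q) (b q) (U q) (h q) (κ q)) :
    |pr (R ^ N * (1 - R ^ (2 * k))) (fun x => ∏ q, h q (x q))|
      ≤ (4 * k / N) * pr (R ^ (2 * (N / 4))) (fun x => ∏ q, κ q (x q)) := by
  obtain ⟨e1, i1⟩ := fourier_rep (fun q => (hd q).sf) (fun q => (hd q).ib) (fun q => (hd q).eh)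
    (R ^ N * (1 - R ^ (2 * k)))
  obtain ⟨e2, i2⟩ := fourier_rep (fun q => (hd q).sf) (fun q => (hd q).iU.ofReal (𝕜 := ℂ)) (fun q => (hd q).ek)
    (R ^ (2 * (N / 4)))
  have e3 : pr (R ^ (2 * (N / 4))) (fun x => ∏ q, κ q (x q))
      = ∫ ξ : E m, ((∏ q, (U q (ξ q) : ℂ)) * ch ξ (R ^ (2 * (N / 4)))).re ∂(Measure.pi γ) := by
    have := congrArg Complex.re e2
    rw [Complex.ofReal_re] at this
    rw [this]
    exact (integral_re i2).symm
  rw [e3, ← integral_const_mul]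
  have h0 : |pr (R ^ N * (1 - R ^ (2 * k))) (fun x => ∏ q, h q (x q))|
      = ‖∫ ξ, (∏ q, b q (ξ q)) * ch ξ (R ^ N * (1 - R ^ (2 * k))) ∂(Measure.pi γ)‖ := by
    rw [← e1, Complex.norm_real, Real.norm_eq_abs]
  rw [h0]
  refine norm_integral_le_of_norm_le (i2.re.const_mul _) (Filter.Eventually.of_forall fun ξ => ?_)
  obtain ⟨φ, hφ, hφ1⟩ := ch_real hR ξ
  have c1 : ch ξ (R ^ N * (1 - R ^ (2 * k))) = ((φ ^ N * (1 - φ ^ (2 * k)) : ℝ) : ℂ) := by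
    rw [ch_mul, ch_sub, ch_one, ch_pow, ch_pow, hφ]; push_cast; ring
  have c2 : (∏ q, (U q (ξ q) : ℂ)) * ch ξ (R ^ (2 * (N / 4))) = (((∏ q, U q (ξ q)) * φ ^ (2 * (N / 4)) : ℝ) : ℂ) := by
    rw [ch_pow, hφ]; push_cast; ring
  have c3 : (∏ q, ((U q (ξ q) : ℝ) : ℂ)) * ch ξ (R ^ (2 * (N / 4))) = (((∏ q, U q (ξ q)) * φ ^ (2 * (N / 4)) : ℝ) : ℂ) := c2
  erw [c3]
  rw [c1, norm_mul, Complex.norm_real, Real.norm_eq_abs]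
  simp only [RCLike.re_to_complex, Complex.ofReal_re]
  rw [norm_prod]
  calc (∏ q, ‖b q (ξ q)‖) * |φ ^ N * (1 - φ ^ (2 * k))|
      ≤ (∏ q, U q (ξ q)) * ((4 * k / N) * φ ^ (2 * (N / 4))) := by
        refine mul_le_mul (Finset.prod_le_prod (fun _ _ => norm_nonneg _) fun q _ => (hd q).le _)
          (pow_aux2 hφ1 hN k) (abs_nonneg _) (Finset.prod_nonneg fun q _ => (norm_nonneg _).trans ((hd q).le _))
    _ = _ := by ring

end ZP

namespace ZP

open AddMonoidAlgebra (single)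

variable {m : ℕ}

/-- Gaussian factor on the Fourier side. -/
noncomputable def gk (τ ξ : ℝ) : ℝ := Real.exp (-(τ ^ 2 / 2) * ξ ^ 2)

theorem gk_pos (τ ξ : ℝ) : 0 < gk τ ξ := Real.exp_pos _

theorem integrable_gk {τ : ℝ} (hτ : 0 < τ) : Integrable (gk τ) volume :=
  integrable_exp_neg_mul_sq (by positivity)

theorem gk_fourier {τ : ℝ} (hτ : 0 < τ) (y : ℝ) :
    ∫ ξ, (gk τ ξ : ℂ) * ee ξ y = ((√(2 * Real.pi) / τ * Real.exp (-y ^ 2 / (2 * τ ^ 2)) : ℝ) : ℂ) := by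
  have h := fourierIntegral_gaussian (b := ((τ ^ 2 / 2 : ℝ) : ℂ)) (by rw [Complex.ofReal_re]; positivity) (y : ℂ)
  have e : ∀ ξ : ℝ, (gk τ ξ : ℂ) * ee ξ y
      = Complex.exp (Complex.I * y * ξ) * Complex.exp (-((τ ^ 2 / 2 : ℝ) : ℂ) * ξ ^ 2) := by
    intro ξ
    unfold gk ee
    rw [mul_comm]
    push_cast
    congr 2
    ring
  simp only [e]
  rw [h]
  have e2 : ((Real.pi : ℂ) / ((τ ^ 2 / 2 : ℝ) : ℂ)) ^ (1 / 2 : ℂ) = ((√(2 * Real.pi) / τ : ℝ) : ℂ) := by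
    rw [show (1 / 2 : ℂ) = ((1 / 2 : ℝ) : ℂ) by push_cast; rfl, ← Complex.ofReal_div,
      ← Complex.ofReal_cpow (by positivity), ← Real.sqrt_eq_rpow]
    congr 1
    rw [show Real.pi / (τ ^ 2 / 2) = (2 * Real.pi) / τ ^ 2 by field_simp, Real.sqrt_div (by positivity),
      Real.sqrt_sq hτ.le]
  rw [e2]
  push_cast
  congr 2
  have : (τ : ℂ) ≠ 0 := by exact_mod_cast hτ.ne'
  field_simp
  ring

/-- Gaussian smoothing of an indicator. -/
noncomputable def gsm (s : ℝ) (A : Set ℝ) (x : ℝ) : ℝ :=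
  ∫ θ, i1 A (x + s * θ) ∂(ProbabilityTheory.gaussianReal 0 1)

theorem measurable_i1 {A : Set ℝ} (hA : A.OrdConnected) : Measurable (i1 A) :=
  measurable_const.indicator hA.measurableSet

theorem gsm_eq {s : ℝ} (hs : 0 < s) {A : Set ℝ} (hA : A.OrdConnected) (x : ℝ) :
    gsm s A x = ∫ z in A, (√(2 * Real.pi) * s)⁻¹ * Real.exp (-(x - z) ^ 2 / (2 * s ^ 2)) := by
  have hm : Measure.map (fun θ => x + s * θ) (ProbabilityTheory.gaussianReal 0 1)
      = ProbabilityTheory.gaussianReal x (NNReal.mk (s ^ 2) (sq_nonneg s)) := by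
    have h1 := ProbabilityTheory.gaussianReal_map_const_mul (μ := 0) (v := 1) s
    have h2 := ProbabilityTheory.gaussianReal_map_const_add (μ := s * 0) (v := NNReal.mk (s ^ 2) (sq_nonneg s) * 1) x
    rw [← h1, Measure.map_map (by fun_prop) (by fun_prop)] at h2
    simpa [Function.comp_def] using h2
  have hv : NNReal.mk (s ^ 2) (sq_nonneg s) ≠ 0 := by
    intro h
    have := congrArg NNReal.toReal h
    simp at this
    exact hs.ne' this
  have e1 : gsm s A x = ∫ y, i1 A y ∂(ProbabilityTheory.gaussianReal x (NNReal.mk (s ^ 2) (sq_nonneg s))) := by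
    rw [← hm, integral_map (by fun_prop) (measurable_i1 hA).aestronglyMeasurable]
    rfl
  have e2 : ∫ y, i1 A y ∂(ProbabilityTheory.gaussianReal x (NNReal.mk (s ^ 2) (sq_nonneg s)))
     = (ProbabilityTheory.gaussianReal x (NNReal.mk (s ^ 2) (sq_nonneg s))).real A := by
    have := integral_indicator_one (μ := ProbabilityTheory.gaussianReal x (NNReal.mk (s ^ 2) (sq_nonneg s))) hA.measurableSet
    exact this
  rw [e1, e2, Measure.real, ProbabilityTheory.gaussianReal_apply_eq_integral _ hv, ENNReal.toReal_ofReal]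
  · apply integral_congr_ae
    refine Filter.Eventually.of_forall fun z => ?_
    simp only [ProbabilityTheory.gaussianPDFReal, NNReal.coe_mk]
    rw [Real.sqrt_mul (by positivity), Real.sqrt_sq hs.le]
    congr 3
    ring
  · exact integral_nonneg fun z => ProbabilityTheory.gaussianPDFReal_nonneg _ _ _

theorem osc_bound {A : Set ℝ} (hA : A.OrdConnected) {L : ℝ} (hL : 0 ≤ L) (hAL : A ⊆ Set.Icc (-L) L) (ξ : ℝ) :
    ‖∫ z in A, ee ξ (-z)‖ ≤ 2 * L ∧ ‖∫ z in A, ee ξ (-z)‖ * |ξ| ≤ 2 := by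
  constructor
  · have h1 : volume A ≤ ENNReal.ofReal (2 * L) := by
      refine (measure_mono hAL).trans ?_
      rw [Real.volume_Icc]; apply le_of_eq; congr 1; ring
    have h2 := norm_setIntegral_le_of_norm_le_const (μ := volume) (s := A) (C := 1)
      (f := fun z => ee ξ (-z)) (h1.trans_lt ENNReal.ofReal_lt_top) (fun z _ => (norm_ee _ _).le)
    refine h2.trans ?_
    rw [one_mul]
    exact ENNReal.toReal_le_of_le_ofReal (by positivity) h1
  · rcases eq_or_ne ξ 0 with rfl | hξ
    · simp
    rcases A.eq_empty_or_nonempty with rfl | hne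
    · simp
    have hb : BddBelow A := bddBelow_Icc.mono hAL
    have ha : BddAbove A := bddAbove_Icc.mono hAL
    have s1 : Set.Ioo (sInf A) (sSup A) ⊆ A := IsConnected.Ioo_csInf_csSup_subset ⟨hne, hA.isPreconnected⟩ hb ha
    have s2 : A ⊆ Set.Icc (sInf A) (sSup A) := subset_Icc_csInf_csSup hb ha
    have hle : sInf A ≤ sSup A := csInf_le_csSup hne hb ha
    have hae : A =ᵐ[volume] Set.Ioc (sInf A) (sSup A) := by
      have h1 : Set.Ioo (sInf A) (sSup A) =ᵐ[volume] Set.Ioc (sInf A) (sSup A) := Ioo_ae_eq_Ioc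
      have h2 : Set.Icc (sInf A) (sSup A) =ᵐ[volume] Set.Ioc (sInf A) (sSup A) := Ioc_ae_eq_Icc.symm
      exact (s2.eventuallyLE.trans h2.le).antisymm (h1.symm.le.trans s1.eventuallyLE)
    rw [setIntegral_congr_set hae, ← intervalIntegral.integral_of_le hle]
    have hc : (-((ξ : ℂ) * Complex.I)) ≠ 0 := by simp [hξ]
    have e : ∀ z : ℝ, ee ξ (-z) = Complex.exp (-((ξ : ℂ) * Complex.I) * z) := by
      intro z; unfold ee; congr 1; push_cast; ring
    have e' : ∀ z : ℝ, ‖Complex.exp (-((ξ : ℂ) * Complex.I) * z)‖ = 1 := fun z => by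
      rw [← e]; exact norm_ee _ _
    simp only [e]
    rw [integral_exp_mul_complex hc, norm_div]
    have hn : ‖(-((ξ : ℂ) * Complex.I))‖ = |ξ| := by simp
    rw [hn, div_mul_cancel₀ _ (abs_ne_zero.2 hξ)]
    refine (norm_sub_le _ _).trans ?_
    rw [e', e']; norm_num

theorem exp_two_lt : Real.exp 2 < 8 := by
  have h := Real.exp_one_lt_d9
  have h2 : Real.exp 2 = Real.exp 1 * Real.exp 1 := by rw [← Real.exp_add]; norm_num
  have := Real.exp_pos 1
  rw [h2]; nlinarith

theorem dyad {s : ℝ} (hs : 0 < s) (ξ : ℝ) {B : ℝ} (hB : 0 ≤ B) (hBξ : B * |ξ| ≤ 1) (J : ℕ) :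
    B ≤ s * 2 ^ J → B * gk s ξ ≤ 8 * ∑ i ∈ Finset.range (J + 1), s * 2 ^ i * gk (s * 2 ^ i) ξ := by
  induction J with
  | zero =>
    intro h
    simp at h ⊢
    have := mul_le_mul_of_nonneg_right h (gk_pos s ξ).le
    nlinarith [mul_pos hs (gk_pos s ξ)]
  | succ J ih =>
    intro h
    rw [Finset.sum_range_succ, mul_add]
    have hp : ∀ i, 0 < s * 2 ^ i * gk (s * 2 ^ i) ξ := fun i => mul_pos (by positivity) (gk_pos _ _)
    by_cases hc : B ≤ s * 2 ^ J
    · have := ih hc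
      have := hp (J + 1)
      linarith
    · push Not at hc
      have h0 : 0 ≤ ∑ i ∈ Finset.range (J + 1), s * 2 ^ i * gk (s * 2 ^ i) ξ :=
        Finset.sum_nonneg fun i _ => (hp i).le
      have h1 : s * 2 ^ (J + 1) * |ξ| ≤ 2 := by
        have := mul_le_mul_of_nonneg_right hc.le (abs_nonneg ξ)
        rw [pow_succ]; linarith
      have h2 : 1 / 8 ≤ gk (s * 2 ^ (J + 1)) ξ := by
        unfold gk
        have h3 : (s * 2 ^ (J + 1)) ^ 2 * ξ ^ 2 ≤ 4 := by
          rw [← sq_abs ξ, ← mul_pow]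
          have : 0 ≤ s * 2 ^ (J + 1) * |ξ| := by positivity
          nlinarith
        have h4 : Real.exp (-2) ≤ Real.exp (-((s * 2 ^ (J + 1)) ^ 2 / 2) * ξ ^ 2) :=
          Real.exp_le_exp.2 (by linarith)
        refine le_trans ?_ h4
        rw [Real.exp_neg, one_div]
        exact inv_anti₀ (Real.exp_pos _) exp_two_lt.le
      have h5 : gk s ξ ≤ 1 := Real.exp_le_one_iff.2 (by nlinarith [mul_nonneg (sq_nonneg s) (sq_nonneg ξ)])
      have h6 := mul_le_mul_of_nonneg_left h2 (show 0 ≤ s * 2 ^ (J + 1) by positivity)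
      have h7 := mul_le_mul_of_nonneg_left h5 hB
      linarith

theorem datS {s : ℝ} (hs : 0 < s) {A : Set ℝ} (hA : A.OrdConnected) (J : ℕ)
    (hAL : A ⊆ Set.Icc (-(s * 2 ^ J)) (s * 2 ^ J)) :
    ∃ b, Dat volume b (fun ξ => 3 * ∑ i ∈ Finset.range (J + 1), s * 2 ^ i * gk (s * 2 ^ i) ξ) (gsm s A)
      (fun x => 3 * √(2 * Real.pi) * ∑ i ∈ Finset.range (J + 1), Real.exp (-x ^ 2 / (2 * (s * 2 ^ i) ^ 2))) := by
  have hτ : ∀ i : ℕ, 0 < s * 2 ^ i := fun i => by positivity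
  have hiU : Integrable (fun ξ => 3 * ∑ i ∈ Finset.range (J + 1), s * 2 ^ i * gk (s * 2 ^ i) ξ) volume := by
    refine Integrable.const_mul (integrable_finsetSum _ fun i _ => ?_) _
    exact (integrable_gk (hτ i)).const_mul _
  have hle : ∀ ξ, ‖((1 / (2 * Real.pi) : ℝ) : ℂ) * (gk s ξ : ℂ) * ∫ z in A, ee ξ (-z)‖
      ≤ 3 * ∑ i ∈ Finset.range (J + 1), s * 2 ^ i * gk (s * 2 ^ i) ξ := by
    intro ξ
    obtain ⟨h1, h2⟩ := osc_bound hA (hτ J).le hAL ξ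
    rw [norm_mul, norm_mul, Complex.norm_real, Complex.norm_real, Real.norm_of_nonneg (by positivity),
      Real.norm_of_nonneg (gk_pos s ξ).le]
    set B := ‖∫ z in A, ee ξ (-z)‖ with hB
    have h3 := dyad hs ξ (B := B / 2) (by positivity) (by linarith) J (by linarith)
    have hpi : 1 / Real.pi ≤ 1 / 3 := one_div_le_one_div_of_le (by norm_num) Real.pi_gt_three.le
    have h0 : 0 ≤ B / 2 * gk s ξ := mul_nonneg (by positivity) (gk_pos s ξ).le
    have h4 := mul_le_mul_of_nonneg_right hpi h0
    have e : 1 / (2 * Real.pi) * gk s ξ * B = 1 / Real.pi * (B / 2 * gk s ξ) := by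
      field_simp
    rw [e]
    have hS : 0 ≤ ∑ i ∈ Finset.range (J + 1), s * 2 ^ i * gk (s * 2 ^ i) ξ :=
      Finset.sum_nonneg fun i _ => mul_nonneg (hτ i).le (gk_pos _ _).le
    linarith
  have hAf : volume A < ⊤ := (measure_mono hAL).trans_lt (by rw [Real.volume_Icc]; exact ENNReal.ofReal_lt_top)
  have : IsFiniteMeasure (volume.restrict A) := ⟨by rwa [Measure.restrict_apply_univ]⟩
  have hintg : ∀ x, Integrable (Function.uncurry fun z ξ => ((1 / (2 * Real.pi) : ℝ) : ℂ) * (gk s ξ : ℂ) * ee ξ (x - z))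
      ((volume.restrict A).prod volume) := by
    intro x
    have h1 : Integrable (fun p : ℝ × ℝ => (((1 / (2 * Real.pi) : ℝ) : ℂ)) * (gk s p.2 : ℂ))
        ((volume.restrict A).prod volume) :=
      Integrable.mul_prod (f := fun _ : ℝ => ((1 / (2 * Real.pi) : ℝ) : ℂ)) (g := fun ξ => (gk s ξ : ℂ))
        (integrable_const _) (integrable_gk hs).ofReal
    refine h1.mul_bdd (g := fun p : ℝ × ℝ => ee p.2 (x - p.1)) (c := 1) ?_ (Filter.Eventually.of_forall fun p => (norm_ee _ _).le)
    apply Continuous.aestronglyMeasurable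
    unfold ee; fun_prop
  have hb_eq : ∀ x ξ, ((1 / (2 * Real.pi) : ℝ) : ℂ) * (gk s ξ : ℂ) * (∫ z in A, ee ξ (-z)) * ee ξ x
      = ∫ z in A, ((1 / (2 * Real.pi) : ℝ) : ℂ) * (gk s ξ : ℂ) * ee ξ (x - z) := by
    intro x ξ
    rw [integral_const_mul]
    have : ∀ z, ee ξ (x - z) = ee ξ (-z) * ee ξ x := fun z => by rw [← ee_add]; congr 1; ring
    simp only [this]
    rw [integral_mul_const]; ring
  refine ⟨fun ξ => ((1 / (2 * Real.pi) : ℝ) : ℂ) * (gk s ξ : ℂ) * ∫ z in A, ee ξ (-z), ?_⟩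
  refine ⟨inferInstance, ?_, hiU, hle, ?_, ?_⟩
  · have h := (hintg 0).integral_prod_right
    refine h.congr (Filter.Eventually.of_forall fun ξ => ?_)
    have := hb_eq 0 ξ
    simp only [Function.uncurry]
    rw [← this]
    have : ee ξ 0 = 1 := by simp [ee]
    rw [this, mul_one]
  · intro x
    simp only [hb_eq]
    rw [← integral_integral_swap (hintg x), gsm_eq hs hA, ← integral_complex_ofReal]
    congr 1; funext z
    simp only [mul_assoc]
    rw [integral_const_mul, gk_fourier hs, ← Complex.ofReal_mul]
    congr 1
    have hp : √(2 * Real.pi) * √(2 * Real.pi) = 2 * Real.pi := Real.mul_self_sqrt (by positivity)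
    have hp0 : √(2 * Real.pi) ≠ 0 := by positivity
    rw [← mul_assoc]
    congr 1
    have h2 : 1 / (2 * Real.pi) = 1 / (√(2 * Real.pi) * √(2 * Real.pi)) := by rw [hp]
    rw [h2]
    field_simp
  · intro x
    have e : ∀ ξ, (((3 * ∑ i ∈ Finset.range (J + 1), s * 2 ^ i * gk (s * 2 ^ i) ξ : ℝ)) : ℂ) * ee ξ x
        = ∑ i ∈ Finset.range (J + 1), ((3 * (s * 2 ^ i) : ℝ) : ℂ) * ((gk (s * 2 ^ i) ξ : ℂ) * ee ξ x) := by
      intro ξ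
      push_cast
      rw [Finset.mul_sum, Finset.sum_mul]
      exact Finset.sum_congr rfl fun i _ => by ring
    simp only [e]
    rw [integral_finsetSum]
    · simp only [integral_const_mul, gk_fourier (hτ _)]
      rw [Finset.mul_sum]
      push_cast
      refine Finset.sum_congr rfl fun i _ => ?_
      have h1 : (s : ℂ) ≠ 0 := by exact_mod_cast hs.ne'
      field_simp
    · intro i _
      exact (integrable_mul_ee (integrable_gk (hτ i)).ofReal x).const_mul _

theorem datDeg {a : ℝ} (ha : |a| ≤ 1) :
    Dat (Measure.dirac 0) (fun _ => (a : ℂ)) (fun _ => 1) (fun _ => a) (fun _ => 1) := by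
  refine ⟨inferInstance, integrable_const _, integrable_const _, fun ξ => ?_, fun x => ?_, fun x => ?_⟩
  · rw [Complex.norm_real]; exact ha
  · rw [integral_dirac]; simp [ee]
  · rw [integral_dirac]; simp [ee]

end ZP

namespace ZP

open AddMonoidAlgebra (single)

variable {m : ℕ}

theorem pr_pow_congr {V : Type*} [AddCommGroup V] [Module ℝ V] {R : Al m} {S : Set (E m)}
    (hS : ∀ x ∈ S, ∀ y ∈ S, x + y ∈ S) (h0 : 0 ∈ S)
    (hR : ∀ x, R.coeff x ≠ 0 → x ∈ S) (j : ℕ) : ∀ {f g : E m → V}, (∀ x ∈ S, f x = g x) →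
    pr (R ^ j) f = pr (R ^ j) g := by
  induction j with
  | zero => intro f g h; rw [pow_zero, pr_one, pr_one, h 0 h0]
  | succ j ih =>
    intro f g h
    rw [pow_succ, pr_mul, pr_mul]
    apply ih
    intro x hx
    apply pr_congr'
    intro y hy
    exact h _ (hS x hx y (hR y hy))

theorem pow_diff {y a K : ℝ} (hy : 0 ≤ y) (ha : 0 ≤ a) (hK : y + a ≤ K) (hK1 : 1 ≤ K) (n : ℕ) :
    (y + a) ^ n - y ^ n ≤ n * K ^ n * a := by
  induction n with
  | zero => simp
  | succ n ih =>
    have e : (y + a) ^ (n + 1) - y ^ (n + 1) = (y + a) * ((y + a) ^ n - y ^ n) + a * y ^ n := by ring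
    have h1 : (y + a) * ((y + a) ^ n - y ^ n) ≤ K * (n * K ^ n * a) := by
      refine mul_le_mul hK ih (sub_nonneg.2 (pow_le_pow_left₀ hy (by linarith) n)) (by linarith)
    have h2 : y ^ n ≤ K ^ (n + 1) := by
      refine (pow_le_pow_left₀ hy (show y ≤ K by linarith) n).trans ?_
      exact pow_le_pow_right₀ hK1 (by omega)
    have h3 := mul_le_mul_of_nonneg_left h2 ha
    rw [e]; push_cast
    calc _ ≤ K * (n * K ^ n * a) + a * K ^ (n + 1) := add_le_add h1 h3
      _ = _ := by ring

theorem sum_pow_le (n : ℕ) (a : ℕ → ℝ) (h0 : ∀ i, 0 ≤ a i) (h1 : ∀ i, a i ≤ 1) (J : ℕ) :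
    (∑ j ∈ Finset.range J, a j) ^ n ≤ 0 ^ n + ∑ j ∈ Finset.range J, n * ((j : ℝ) + 1) ^ n * a j := by
  induction J with
  | zero => simp
  | succ J ih =>
    rw [Finset.sum_range_succ, Finset.sum_range_succ]
    have hS0 : 0 ≤ ∑ j ∈ Finset.range J, a j := Finset.sum_nonneg fun i _ => h0 i
    have hS1 : ∑ j ∈ Finset.range J, a j ≤ J := by
      have := Finset.sum_le_card_nsmul (Finset.range J) a 1 fun i _ => h1 i
      simpa using this
    have := pow_diff hS0 (h0 J) (K := J + 1) (by linarith [h1 J]) (by linarith [Nat.cast_nonneg (α := ℝ) J]) n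
    linarith

/-- Combinatorial constant. -/
noncomputable def Zc (n : ℕ) : ℝ := 2 * ∑' j : ℕ, (j : ℝ) ^ n * (1 / 2 : ℝ) ^ j

theorem Zc_nonneg (n : ℕ) : 0 ≤ Zc n := mul_nonneg (by norm_num) (tsum_nonneg fun j => by positivity)

theorem sum_le_Zc (n J : ℕ) : ∑ j ∈ Finset.range J, ((j : ℝ) + 1) ^ n * (1 / 2 : ℝ) ^ j ≤ Zc n := by
  have hs : Summable fun j : ℕ => (j : ℝ) ^ n * (1 / 2 : ℝ) ^ j :=
    summable_pow_mul_geometric_of_norm_lt_one n (by norm_num)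
  have h1 := hs.sum_le_tsum (Finset.range (J + 1)) (fun j _ => by positivity)
  rw [Finset.sum_range_succ'] at h1
  have h2 : ∑ j ∈ Finset.range J, ((j : ℝ) + 1) ^ n * (1 / 2 : ℝ) ^ j
      = 2 * ∑ j ∈ Finset.range J, ((j + 1 : ℕ) : ℝ) ^ n * (1 / 2 : ℝ) ^ (j + 1) := by
    rw [Finset.mul_sum]
    refine Finset.sum_congr rfl fun j _ => ?_
    push_cast; rw [pow_succ (1 / 2 : ℝ)]; ring
  rw [h2, Zc]
  have : (0 : ℝ) ≤ ((0 : ℕ) : ℝ) ^ n * (1 / 2 : ℝ) ^ 0 := by positivity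
  linarith

theorem gauss_pt (y : ℝ) (I : ℕ) : Real.exp (-y ^ 2 / 2)
    ≤ (∑ i ∈ Finset.range I, 8 * (1 / 4 : ℝ) ^ i * i1 {z | |z| ≤ 2 ^ i} y) + 8 * (1 / 4 : ℝ) ^ I := by
  induction I with
  | zero =>
    simp
    have : Real.exp (-y ^ 2 / 2) ≤ 1 := Real.exp_le_one_iff.2 (by nlinarith [sq_nonneg y])
    linarith
  | succ I ih =>
    rw [Finset.sum_range_succ]
    have hp : (0 : ℝ) < (1 / 4) ^ (I + 1) := by positivity
    by_cases h : |y| ≤ 2 ^ I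
    · rw [i1_of_mem (S := {z | |z| ≤ 2 ^ I}) h]
      linarith
    · push Not at h
      have h0 : 0 ≤ ∑ i ∈ Finset.range I, 8 * (1 / 4 : ℝ) ^ i * i1 {z | |z| ≤ 2 ^ i} y :=
        Finset.sum_nonneg fun i _ => mul_nonneg (by positivity) (i1_nonneg _ _)
      have h2 := mul_nonneg (show 0 ≤ 8 * (1 / 4 : ℝ) ^ I by positivity) (i1_nonneg {z | |z| ≤ 2 ^ I} y)
      have hy2 : (4 : ℝ) ^ I ≤ y ^ 2 := by
        rw [← sq_abs y, show (4 : ℝ) ^ I = (2 ^ I) ^ 2 by rw [← pow_mul, mul_comm, pow_mul]; norm_num]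
        exact pow_le_pow_left₀ (by positivity) h.le 2
      have h3 : Real.exp (-y ^ 2 / 2) ≤ 8 * (1 / 4) ^ (I + 1) := by
        have h4 : y ^ 2 / 2 ≤ Real.exp (y ^ 2 / 2) := by linarith [Real.add_one_le_exp (y ^ 2 / 2)]
        rw [show -y ^ 2 / 2 = -(y ^ 2 / 2) by ring, Real.exp_neg]
        have h5 : (4 : ℝ) ^ I / 2 ≤ Real.exp (y ^ 2 / 2) := by linarith
        have h6 := inv_anti₀ (by positivity) h5
        refine h6.trans (le_of_eq ?_)
        rw [one_div, inv_pow, pow_succ]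
        field_simp; norm_num
      linarith

theorem gauss_window {μ : Al m} (hμ : Pos μ) (h1 : mass μ = 1) (q : Fin m) {s ρ W τ : ℝ} (hs : 0 < s)
    (hρ : 0 < ρ) (hW : 0 ≤ W)
    (hw : ∀ τ, s ≤ τ → pr μ (fun x => i1 {z | |z| ≤ τ} (x q)) ≤ W * τ / ρ) (hτ : s ≤ τ) :
    pr μ (fun x => Real.exp (-(x q) ^ 2 / (2 * τ ^ 2))) ≤ 16 * W * τ / ρ := by
  have hτ0 : 0 < τ := hs.trans_le hτ
  have key : ∀ I : ℕ, pr μ (fun x => Real.exp (-(x q) ^ 2 / (2 * τ ^ 2)))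
      ≤ 16 * W * τ / ρ + 8 * (1 / 4 : ℝ) ^ I := by
    intro I
    have e : ∀ x : E m, Real.exp (-(x q) ^ 2 / (2 * τ ^ 2)) ≤
        (∑ i ∈ Finset.range I, 8 * (1 / 4 : ℝ) ^ i * i1 {z | |z| ≤ τ * 2 ^ i} (x q)) + 8 * (1 / 4 : ℝ) ^ I := by
      intro x
      have h := gauss_pt (x q / τ) I
      have e1 : -(x q / τ) ^ 2 / 2 = -(x q) ^ 2 / (2 * τ ^ 2) := by field_simp
      have e2 : ∀ i : ℕ, i1 {z | |z| ≤ 2 ^ i} (x q / τ) = i1 {z | |z| ≤ τ * 2 ^ i} (x q) := by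
        intro i
        have : (x q / τ ∈ {z : ℝ | |z| ≤ 2 ^ i}) ↔ (x q ∈ {z : ℝ | |z| ≤ τ * 2 ^ i}) := by
          simp only [Set.mem_ofPred_eq, abs_div, abs_of_pos hτ0]
          rw [div_le_iff₀ hτ0, mul_comm]
        by_cases hx : x q ∈ {z : ℝ | |z| ≤ τ * 2 ^ i}
        · rw [i1_of_mem hx, i1_of_mem (this.2 hx)]
        · rw [i1_of_notMem hx, i1_of_notMem fun h' => hx (this.1 h')]
      simp only [e1, e2] at h
      exact h
    refine (pr_mono hμ e).trans ?_
    rw [pr_fadd, pr_fsum, pr_const, h1, one_mul]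
    gcongr
    simp only [pr_fmul]
    calc _ ≤ ∑ i ∈ Finset.range I, 8 * (W * τ / ρ) * (1 / 2 : ℝ) ^ i := by
          refine Finset.sum_le_sum fun i _ => ?_
          have h2 := hw (τ * 2 ^ i) (hτ.trans (le_mul_of_one_le_right hτ0.le (one_le_pow₀ (by norm_num))))
          have h3 := mul_le_mul_of_nonneg_left h2 (show 0 ≤ 8 * (1 / 4 : ℝ) ^ i by positivity)
          refine h3.trans (le_of_eq ?_)
          have : (1 / 4 : ℝ) ^ i * 2 ^ i = (1 / 2) ^ i := by rw [← mul_pow]; norm_num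
          rw [← this]; ring
      _ = 8 * (W * τ / ρ) * ∑ i ∈ Finset.range I, (1 / 2 : ℝ) ^ i := by rw [Finset.mul_sum]
      _ ≤ 8 * (W * τ / ρ) * 2 := by
          refine mul_le_mul_of_nonneg_left (sum_geometric_two_le I) (by positivity)
      _ = _ := by ring
  have ht : Filter.Tendsto (fun I : ℕ => 16 * W * τ / ρ + 8 * (1 / 4 : ℝ) ^ I) Filter.atTop
      (nhds (16 * W * τ / ρ + 8 * 0)) :=
    ((tendsto_pow_atTop_nhds_zero_of_lt_one (by norm_num) (by norm_num)).const_mul 8).const_add _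
  rw [mul_zero, add_zero] at ht
  exact ge_of_tendsto' ht key

theorem gsm_zero (A : Set ℝ) (x : ℝ) : gsm 0 A x = i1 A x := by
  simp [gsm]

theorem kap_bound {μ : Al m} (hμ : Pos μ) (h1 : mass μ = 1) (q : Fin m) {s ρ W T : ℝ} (hs : 0 < s)
    (hρ : 0 < ρ) (hW : 0 ≤ W) {J : ℕ} (hJ : s * 2 ^ J ≤ 2 * T * ρ)
    (hw : ∀ τ, s ≤ τ → pr μ (fun x => i1 {z | |z| ≤ τ} (x q)) ≤ W * τ / ρ) :
    pr μ (fun x => (3 * √(2 * Real.pi) * ∑ i ∈ Finset.range (J + 1),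
      Real.exp (-(x q) ^ 2 / (2 * (s * 2 ^ i) ^ 2))) ^ m) ≤ 8 ^ m * (1 + m * (32 * W * T) * Zc m) := by
  have hc : 3 * √(2 * Real.pi) ≤ 8 := by
    have : √(2 * Real.pi) ≤ 8 / 3 := by
      rw [Real.sqrt_le_left (by norm_num)]
      have := Real.pi_lt_d2
      norm_num at this ⊢; linarith
    linarith
  have hpt : ∀ x : E m, (3 * √(2 * Real.pi) * ∑ i ∈ Finset.range (J + 1),
      Real.exp (-(x q) ^ 2 / (2 * (s * 2 ^ i) ^ 2))) ^ m
      ≤ 8 ^ m * (1 + ∑ j ∈ Finset.range (J + 1), m * ((j : ℝ) + 1) ^ m *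
        Real.exp (-(x q) ^ 2 / (2 * (s * 2 ^ (J - j)) ^ 2))) := by
    intro x
    rw [mul_pow]
    have h2 : (3 * √(2 * Real.pi)) ^ m ≤ 8 ^ m := pow_le_pow_left₀ (by positivity) hc m
    have h3 := sum_pow_le m (fun j => Real.exp (-(x q) ^ 2 / (2 * (s * 2 ^ (J - j)) ^ 2)))
      (fun i => (Real.exp_pos _).le)
      (fun i => Real.exp_le_one_iff.2 (div_nonpos_of_nonpos_of_nonneg (by nlinarith [sq_nonneg (x q)]) (by positivity))) (J + 1)
    have h4 : (0 : ℝ) ^ m ≤ 1 := pow_le_one₀ le_rfl zero_le_one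
    have h5 := Finset.sum_range_reflect (fun i => Real.exp (-(x q) ^ 2 / (2 * (s * 2 ^ i) ^ 2))) (J + 1)
    simp only [Nat.add_sub_cancel] at h5
    rw [← h5]
    refine mul_le_mul h2 (h3.trans (by linarith)) (by positivity) (by positivity)
  refine (pr_mono hμ hpt).trans ?_
  rw [pr_fmul, pr_fadd, pr_const, h1, one_mul, pr_fsum]
  gcongr
  simp only [pr_fmul]
  calc _ ≤ ∑ j ∈ Finset.range (J + 1), m * (32 * W * T) * (((j : ℝ) + 1) ^ m * (1 / 2 : ℝ) ^ j) := by
        refine Finset.sum_le_sum fun j hj => ?_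
        have hj : j ≤ J := by simp at hj; omega
        have hτ : s ≤ s * 2 ^ (J - j) := le_mul_of_one_le_right hs.le (one_le_pow₀ (by norm_num))
        have h2 := gauss_window hμ h1 q hs hρ hW hw hτ
        have h3 := mul_le_mul_of_nonneg_left h2 (show 0 ≤ m * ((j : ℝ) + 1) ^ m by positivity)
        refine h3.trans ?_
        have e : s * 2 ^ (J - j) = s * 2 ^ J * (1 / 2) ^ j := by
          rw [mul_assoc]; congr 1
          rw [one_div, inv_pow, ← div_eq_mul_inv, eq_div_iff (by positivity), ← pow_add, Nat.sub_add_cancel hj]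
        have h4 : 16 * W * (s * 2 ^ (J - j)) / ρ ≤ 32 * W * T * (1 / 2) ^ j := by
          rw [e, div_le_iff₀ hρ]
          have := mul_le_mul_of_nonneg_right hJ (show 0 ≤ 16 * W * (1 / 2 : ℝ) ^ j by positivity)
          linarith
        have h5 := mul_le_mul_of_nonneg_left h4 (show 0 ≤ m * ((j : ℝ) + 1) ^ m by positivity)
        linarith
    _ = m * (32 * W * T) * ∑ j ∈ Finset.range (J + 1), ((j : ℝ) + 1) ^ m * (1 / 2 : ℝ) ^ j := by
        rw [Finset.mul_sum]
    _ ≤ _ := by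
        have hT : 0 ≤ T := by
          have : 0 < s * 2 ^ J := by positivity
          by_contra h
          push Not at h
          nlinarith [mul_pos_of_neg_of_neg h (neg_neg_of_pos hρ)]
        exact mul_le_mul_of_nonneg_left (sum_le_Zc _ _) (by positivity)

theorem prod_le_sum_pow (a : Fin m → ℝ) (h : ∀ q, 0 ≤ a q) : ∏ q, a q ≤ 1 + ∑ q, a q ^ m := by
  have h0 : 0 ≤ ∑ q, a q ^ m := Finset.sum_nonneg fun q _ => pow_nonneg (h q) m
  rcases isEmpty_or_nonempty (Fin m) with he | he
  · simp
  · obtain ⟨q0, hq0⟩ := Finite.exists_max a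
    have h1 : ∏ q, a q ≤ ∏ _q : Fin m, a q0 := Finset.prod_le_prod (fun q _ => h q) fun q _ => hq0 q
    have h2 : a q0 ^ m ≤ ∑ q, a q ^ m :=
      Finset.single_le_sum (f := fun q => a q ^ m) (fun q _ => pow_nonneg (h q) m) (Finset.mem_univ q0)
    simp at h1
    linarith

theorem lemS2 {R : Al m} (hR : PS R) {N : ℕ} (hN : 1 ≤ N) (k : ℕ) {s ρ : Fin m → ℝ} {A : Fin m → Set ℝ}
    (hA : IsBox A) {W T : ℝ} (hW : 0 ≤ W) (hT : 0 ≤ T) (hρ : ∀ q, 0 < ρ q)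
    (hq : ∀ q, (0 < s q ∧ (∃ J : ℕ, A q ⊆ Set.Icc (-(s q * 2 ^ J)) (s q * 2 ^ J) ∧ s q * 2 ^ J ≤ 2 * T * ρ q) ∧
        ∀ τ, s q ≤ τ → pr (R ^ (2 * (N / 4))) (fun x => i1 {z | |z| ≤ τ} (x q)) ≤ W * τ / ρ q) ∨
      (s q = 0 ∧ ∀ x, R.coeff x ≠ 0 → x q = 0)) :
    |pr (R ^ N * (1 - R ^ (2 * k))) (fun x => ∏ q, gsm (s q) (A q) (x q))|
      ≤ (4 * k / N) * (1 + m * (8 ^ m * (1 + m * (32 * W * T) * Zc m))) := by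
  have hex : ∀ q, ∃ γ b U, ∃ h κ : ℝ → ℝ, Dat γ b U h κ ∧ (∀ x, 0 ≤ κ x) ∧
      (∀ x, s q ≠ 0 ∨ x = 0 → h x = gsm (s q) (A q) x) ∧
      pr (R ^ (2 * (N / 4))) (fun x => κ (x q) ^ m) ≤ 8 ^ m * (1 + m * (32 * W * T) * Zc m) := by
    intro q
    rcases hq q with ⟨hs, ⟨J, hJ, hJ2⟩, hw⟩ | ⟨hs, _⟩
    · obtain ⟨b, hb⟩ := datS hs (hA q) J hJ
      refine ⟨_, b, _, _, _, hb, fun x => ?_, fun x _ => rfl, ?_⟩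
      · positivity
      · exact kap_bound (hR.pos.pow _) (hR.mass_pow _) q hs (hρ q) hW hJ2 hw
    · refine ⟨_, _, _, _, _, datDeg (a := i1 (A q) 0) ?_, fun x => zero_le_one, fun x hx => ?_, ?_⟩
      · rw [abs_of_nonneg (i1_nonneg _ _)]; exact i1_le_one _ _
      · rcases hx with hx | rfl
        · exact absurd hs hx
        · rw [hs, gsm_zero]
      · simp only [one_pow]
        rw [pr_const, hR.mass_pow, one_mul]
        have h8 : (1 : ℝ) ≤ 8 ^ m := one_le_pow₀ (by norm_num)
        have hz : 0 ≤ m * (32 * W * T) * Zc m := mul_nonneg (by positivity) (Zc_nonneg m)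
        nlinarith
  choose γ b U h κ hd hκ0 hh hκ using hex
  set S : Set (E m) := {x | ∀ q, s q ≠ 0 ∨ x q = 0} with hSdef
  have hS : ∀ x ∈ S, ∀ y ∈ S, x + y ∈ S := by
    intro x hx y hy q
    rcases hx q with h1 | h1
    · exact Or.inl h1
    · rcases hy q with h2 | h2
      · exact Or.inl h2
      · right; simp [h1, h2]
  have hS0 : (0 : E m) ∈ S := fun q => Or.inr rfl
  have hRS : ∀ x, R.coeff x ≠ 0 → x ∈ S := by
    intro x hx q
    rcases hq q with ⟨hs, _⟩ | ⟨_, h0⟩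
    · exact Or.inl hs.ne'
    · exact Or.inr (h0 x hx)
  have hfg : ∀ x ∈ S, (fun x : E m => ∏ q, gsm (s q) (A q) (x q)) x = (fun x : E m => ∏ q, h q (x q)) x := by
    intro x hx
    exact Finset.prod_congr rfl fun q _ => (hh q _ (hx q)).symm
  have e : pr (R ^ N * (1 - R ^ (2 * k))) (fun x => ∏ q, gsm (s q) (A q) (x q))
      = pr (R ^ N * (1 - R ^ (2 * k))) (fun x => ∏ q, h q (x q)) := by
    rw [mul_sub, mul_one, ← pow_add, pr_sub, pr_sub, pr_pow_congr hS hS0 hRS N hfg,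
      pr_pow_congr hS hS0 hRS (N + 2 * k) hfg]
  rw [e]
  refine (lemS1 hR hN k hd).trans ?_
  gcongr
  refine (pr_mono (hR.pos.pow _) fun x => prod_le_sum_pow (fun q => κ q (x q)) fun q => hκ0 q _).trans ?_
  rw [pr_fadd, pr_const, hR.mass_pow, one_mul, pr_fsum]
  gcongr
  refine (Finset.sum_le_sum fun q _ => hκ q).trans ?_
  simp

end ZP

namespace ZP

open AddMonoidAlgebra (single)

variable {m : ℕ}

/-- Truncated second moment, strict version. -/
noncomputable def Mlt (F : Al m) (q : Fin m) (t : ℝ) : ℝ :=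
  pr F fun x => iE {x | t ≤ |x q|}ᶜ x * x q ^ 2

/-- Truncated second moment. -/
noncomputable def Mle (F : Al m) (q : Fin m) (t : ℝ) : ℝ :=
  pr F fun x => iE {x | t < |x q|}ᶜ x * x q ^ 2

theorem maxlevel (F : Al m) (q : Fin m) (t : ℝ) : Mlt F q t = 0 ∨
    ∃ x, F.coeff x ≠ 0 ∧ |x q| < t ∧ Mlt F q t = Mle F q |x q| := by
  classical
  set S := F.coeff.support.filter fun x => |x q| < t with hS
  rcases S.eq_empty_or_nonempty with he | hne
  · left
    unfold Mlt
    have : pr F (fun x => iE {x | t ≤ |x q|}ᶜ x * x q ^ 2) = pr F fun _ => (0 : ℝ) := by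
      apply pr_congr'
      intro x hx
      have : x ∉ ({x | t ≤ |x q|} : Set (E m))ᶜ := by
        intro hh
        have : x ∈ S := by
          rw [hS, Finset.mem_filter]
          refine ⟨by simpa using hx, ?_⟩
          simpa using hh
        rw [he] at this
        simp at this
      rw [iE_of_notMem this, zero_mul]
    rw [this, pr_const, mul_zero]
  · right
    obtain ⟨x0, hx0, hmax⟩ := S.exists_max_image (fun x => |x q|) hne
    have hx0' := (Finset.mem_filter.1 hx0)
    refine ⟨x0, by simpa using hx0'.1, hx0'.2, ?_⟩
    unfold Mlt Mle
    apply pr_congr'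
    intro x hx
    by_cases hc : |x q| < t
    · have h1 : x ∈ S := Finset.mem_filter.2 ⟨by simpa using hx, hc⟩
      have h2 := hmax x h1
      rw [iE_of_mem (show x ∈ ({x | t ≤ |x q|} : Set (E m))ᶜ by simpa using hc),
        iE_of_mem (show x ∈ ({x | |x0 q| < |x q|} : Set (E m))ᶜ by simpa using h2)]
    · have h3 := hx0'.2
      push Not at hc
      rw [iE_of_notMem (show x ∉ ({x | t ≤ |x q|} : Set (E m))ᶜ by simpa using hc),
        iE_of_notMem (show x ∉ ({x | |x0 q| < |x q|} : Set (E m))ᶜ by simpa using h3.trans_le hc)]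

/-- Scale data in one coordinate. -/
structure QD (F : Al m) (n : ℕ) (K κ : ℝ) (q : Fin m) (s ρ : ℝ) : Prop where
  ρpos : 0 < ρ
  mmle : n * mm F q ρ ≤ K
  alt : (0 < s ∧ s ≤ κ * ρ ∧ K ≤ n * mm F q ρ ∧ n * Mlt F q s ≤ ρ ^ 2 ∧
      (s = κ * ρ ∨ ρ ^ 2 ≤ n * Mle F q s)) ∨
    (s = 0 ∧ ∀ x, F.coeff x ≠ 0 → |x q| ≤ ρ → x q = 0)

theorem exists_gap (F : Al m) (q : Fin m) : ∃ a : ℝ, 0 < a ∧ ∀ x, F.coeff x ≠ 0 → x q ≠ 0 → a ≤ |x q| := by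
  classical
  set S := F.coeff.support.filter fun x => x q ≠ 0 with hS
  rcases S.eq_empty_or_nonempty with he | hne
  · refine ⟨1, one_pos, fun x hx hq => ?_⟩
    have : x ∈ S := Finset.mem_filter.2 ⟨by simpa using hx, hq⟩
    rw [he] at this; simp at this
  · obtain ⟨x0, hx0, hmin⟩ := S.exists_min_image (fun x => |x q|) hne
    refine ⟨|x0 q|, abs_pos.2 (Finset.mem_filter.1 hx0).2, fun x hx hq => ?_⟩
    exact hmin x (Finset.mem_filter.2 ⟨by simpa using hx, hq⟩)

theorem Mle_zero (F : Al m) (q : Fin m) : Mle F q 0 = 0 := by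
  unfold Mle
  have : pr F (fun x => iE {x | 0 < |x q|}ᶜ x * x q ^ 2) = pr F fun _ => (0 : ℝ) := by
    congr 1; funext x
    by_cases h : x q = 0
    · simp [h]
    · rw [iE_of_notMem (by simpa using h), zero_mul]
  rw [this, pr_const, mul_zero]

theorem exists_QD {F : Al m} (hF : PS F) (n : ℕ) {K κ : ℝ} (hK : 0 < K) (hκ : 0 < κ) (q : Fin m) :
    ∃ s ρ, QD F n K κ q s ρ := by
  classical
  obtain ⟨a, ha, hgap⟩ := exists_gap F q
  by_cases hc : n * mm F q a ≤ K
  · refine ⟨0, a / 2, by positivity, ?_, Or.inr ⟨rfl, fun x hx hxρ => ?_⟩⟩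
    · have : mm F q (a / 2) ≤ mm F q a := by
        unfold mm
        apply pr_mono' hF.pos
        intro x hx
        by_cases h0 : x q = 0
        · simp [h0]
        · have h1 := hgap x hx h0
          have h2 : 1 ≤ (x q / a) ^ 2 := by
            rw [div_pow, one_le_div (by positivity), ← sq_abs (x q)]
            exact pow_le_pow_left₀ ha.le h1 2
          rw [min_eq_left h2]
          exact min_le_left _ _
      refine le_trans ?_ hc
      exact mul_le_mul_of_nonneg_left this (Nat.cast_nonneg n)
    · by_contra h0
      have := hgap x hx h0
      linarith
  · push Not at hc
    -- choose the scale by the intermediate value theorem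
    have hcont : ContinuousOn (fun τ : ℝ => n * mm F q τ) (Set.Ioi 0) := by
      unfold mm
      simp only [pr_eq_sum]
      refine ContinuousOn.mul continuousOn_const (continuousOn_finsetSum _ fun x _ => ?_)
      have hd : ContinuousOn (fun τ : ℝ => (x q / τ) ^ 2) (Set.Ioi 0) :=
        ContinuousOn.pow (continuousOn_const.div continuousOn_id fun τ hτ => (ne_of_gt hτ)) 2
      have hm : ContinuousOn (fun τ : ℝ => min 1 ((x q / τ) ^ 2)) (Set.Ioi 0) :=
        ContinuousOn.inf (continuousOn_const (c := (1 : ℝ))) hd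
      exact (continuousOn_const (c := F.coeff x)).mul hm
    obtain ⟨b, hab, hb⟩ : ∃ b, a ≤ b ∧ n * mm F q b ≤ K := by
      have hm2 := m2_nonneg hF.pos q
      have hmmb : ∀ b, 0 < b → n * mm F q b ≤ n * m2 F q / b ^ 2 := by
        intro b hb
        have : mm F q b ≤ m2 F q / b ^ 2 := by
          unfold mm m2
          rw [div_eq_inv_mul, ← pr_fmul]
          apply pr_mono hF.pos
          intro x
          refine (min_le_right _ _).trans (le_of_eq ?_)
          rw [div_pow, div_eq_inv_mul]
        rw [mul_div_assoc]
        exact mul_le_mul_of_nonneg_left this (Nat.cast_nonneg n)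
      refine ⟨a + 1 + n * m2 F q / K, ?_, ?_⟩
      · have : 0 ≤ n * m2 F q / K := by positivity
        linarith
      · have h0 : 0 ≤ n * m2 F q / K := by positivity
        refine (hmmb _ (by positivity)).trans ?_
        rw [div_le_iff₀ (by positivity)]
        set t := n * m2 F q / K with ht
        have : n * m2 F q = K * t := by rw [ht]; field_simp
        rw [this]
        refine mul_le_mul_of_nonneg_left ?_ hK.le
        nlinarith
    have hsub : Set.Icc a b ⊆ Set.Ioi (0 : ℝ) := fun x hx => ha.trans_le hx.1
    obtain ⟨ρ, hρ, hρK⟩ := intermediate_value_Icc' hab (hcont.mono hsub) (show K ∈ Set.Icc _ _ from ⟨hb, hc.le⟩)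
    have hρ0 : 0 < ρ := hsub hρ
    have hρK : n * mm F q ρ = K := hρK
    by_cases h1 : n * Mlt F q (κ * ρ) ≤ ρ ^ 2
    · exact ⟨κ * ρ, ρ, hρ0, hρK.le, Or.inl ⟨by positivity, le_rfl, hρK.ge, h1, Or.inl rfl⟩⟩
    · push Not at h1
      set S := F.coeff.support.filter fun x => |x q| < κ * ρ ∧ ρ ^ 2 < n * Mle F q |x q| with hS
      have hne : S.Nonempty := by
        rcases maxlevel F q (κ * ρ) with h | ⟨x, hx, hx1, hx2⟩
        · rw [h, mul_zero] at h1
          nlinarith [sq_nonneg ρ]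
        · rw [hx2] at h1
          exact ⟨x, Finset.mem_filter.2 ⟨by simpa using hx, hx1, h1⟩⟩
      obtain ⟨x0, hx0, hmin⟩ := S.exists_min_image (fun x => |x q|) hne
      obtain ⟨_, hx1, hx2⟩ := Finset.mem_filter.1 hx0
      refine ⟨|x0 q|, ρ, hρ0, hρK.le, Or.inl ⟨?_, hx1.le, hρK.ge, ?_, Or.inr hx2.le⟩⟩
      · rcases (abs_nonneg (x0 q)).eq_or_lt with h | h
        · rw [← h, Mle_zero, mul_zero] at hx2
          nlinarith [sq_nonneg ρ]
        · exact h
      · rcases maxlevel F q |x0 q| with h | ⟨x, hx, hx3, hx4⟩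
        · rw [h, mul_zero]; positivity
        · by_contra hcon
          push Not at hcon
          rw [hx4] at hcon
          have := hmin x (Finset.mem_filter.2 ⟨by simpa using hx, hx3.trans hx1, hcon⟩)
          linarith

/-- Standard Gaussian product measure. -/
noncomputable def GG (m : ℕ) : Measure (E m) :=
  Measure.pi fun _ : Fin m => ProbabilityTheory.gaussianReal 0 1

instance : IsProbabilityMeasure (GG m) := by unfold GG; infer_instance

theorem gauss_sq : Integrable (fun x : ℝ => x ^ 2) (ProbabilityTheory.gaussianReal 0 1) ∧
    ∫ x, x ^ 2 ∂(ProbabilityTheory.gaussianReal 0 1) = 1 := by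
  have h := ProbabilityTheory.memLp_id_gaussianReal (μ := 0) (v := 1) 2
  constructor
  · exact h.integrable_sq
  · have h1 := ProbabilityTheory.variance_id_gaussianReal (μ := 0) (v := 1)
    rw [ProbabilityTheory.variance_of_integral_eq_zero (by fun_prop) (by simp)] at h1
    simpa using h1

theorem GG_coord {f : ℝ → ℝ} (hf : Integrable f (ProbabilityTheory.gaussianReal 0 1)) (q : Fin m) :
    Integrable (fun θ : E m => f (θ q)) (GG m) ∧
    ∫ θ, f (θ q) ∂(GG m) = ∫ x, f x ∂(ProbabilityTheory.gaussianReal 0 1) := by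
  have hp := measurePreserving_eval (fun _ : Fin m => ProbabilityTheory.gaussianReal 0 1) q
  constructor
  · exact hp.integrable_comp_of_integrable hf
  · have hm : Measure.map (Function.eval q) (GG m) = ProbabilityTheory.gaussianReal 0 1 := hp.map_eq
    rw [← hm] at hf ⊢
    rw [integral_map (measurable_pi_apply q).aemeasurable hf.aestronglyMeasurable]

theorem GG_sq (q : Fin m) : Integrable (fun θ : E m => θ q ^ 2) (GG m) ∧ ∫ θ : E m, θ q ^ 2 ∂(GG m) = 1 := by
  have := GG_coord gauss_sq.1 q
  exact ⟨this.1, this.2.trans gauss_sq.2⟩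

/-- Gaussian smoothing of the indicator of a box. -/
noncomputable def smI (s : E m) (I : Fin m → Set ℝ) (x : E m) : ℝ := ∏ q, gsm (s q) (I q) (x q)

theorem measurable_ind {I : Fin m → Set ℝ} (hI : IsBox I) : Measurable (ind I) := by
  unfold ind
  exact Finset.measurable_prod _ fun q _ => (measurable_i1 (hI q)).comp (measurable_pi_apply q)

theorem integrable_ind_shift {I : Fin m → Set ℝ} (hI : IsBox I) (s x : E m) :
    Integrable (fun θ : E m => ind I (x + s * θ)) (GG m) := by
  refine Integrable.of_bound (C := 1) ?_ (Filter.Eventually.of_forall fun θ => abs_ind_le_one _ _)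
  exact ((measurable_ind hI).comp (by fun_prop)).aestronglyMeasurable

theorem smI_eq (s : E m) (I : Fin m → Set ℝ) (x : E m) :
    smI s I x = ∫ θ, ind I (x + s * θ) ∂(GG m) := by
  unfold smI gsm GG
  rw [← integral_fintype_prod_eq_prod]
  rfl

theorem smI_nonneg (s : E m) (I : Fin m → Set ℝ) (x : E m) : 0 ≤ smI s I x := by
  rw [smI_eq]; exact integral_nonneg fun θ => ind_nonneg _ _

theorem smI_le_one {I : Fin m → Set ℝ} (hI : IsBox I) (s : E m) (x : E m) : smI s I x ≤ 1 := by
  rw [smI_eq]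
  have := integral_mono (integrable_ind_shift hI s x) (integrable_const (1 : ℝ)) fun θ => ind_le_one I _
  simpa using this

theorem smI_shift (s : E m) (I : Fin m → Set ℝ) (y x : E m) : smI s I (y + x) = smI s (shift y I) x := by
  rw [smI_eq, smI_eq]; congr 1; funext θ; rw [add_assoc, ind_shift]

theorem pr_smI {I : Fin m → Set ℝ} (hI : IsBox I) (s : E m) (ν : Al m) :
    pr ν (smI s I) = ∫ θ, pr ν (ind (shift (s * θ) I)) ∂(GG m) ∧
    Integrable (fun θ => pr ν (ind (shift (s * θ) I))) (GG m) := by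
  have e : ∀ θ, ind (shift (s * θ) I) = fun x => ind I (x + s * θ) := by
    intro θ; funext x; rw [add_comm, ind_shift]
  simp only [e]
  refine ⟨?_, integrable_pr _ _ fun x => integrable_ind_shift hI s x⟩
  rw [← pr_integral _ _ fun x => integrable_ind_shift hI s x]
  congr 1; funext x; exact smI_eq s I x

theorem piece {A : Set ℝ} (hA : A.OrdConnected) (c : ℝ) : (A \ shiftS c A).OrdConnected ∧
    ∀ y ∈ A \ shiftS c A, ∀ z ∈ A \ shiftS c A, |y - z| ≤ |c| := by
  have key : ∀ y ∈ A \ shiftS c A, ∀ z ∈ A \ shiftS c A, y ≤ z → z - y ≤ |c| := by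
    rintro y ⟨hy, hyc⟩ z ⟨hz, hzc⟩ hyz
    by_contra hcon
    push Not at hcon
    rcases le_total 0 c with h | h
    · rw [abs_of_nonneg h] at hcon
      exact hyc (hA.out hy hz ⟨by linarith, by linarith⟩)
    · rw [abs_of_nonpos h] at hcon
      exact hzc (hA.out hy hz ⟨by linarith, by linarith⟩)
  constructor
  · refine ⟨?_⟩
    rintro y ⟨hy, hyc⟩ z ⟨hz, hzc⟩ x ⟨hx1, hx2⟩
    have hx : x ∈ A := hA.out hy hz ⟨hx1, hx2⟩
    refine ⟨hx, fun hxc => ?_⟩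
    have hxc' : c + x ∈ A := hxc
    rcases le_total 0 c with h | h
    · exact hyc (hA.out hy hxc' ⟨by linarith, by linarith⟩)
    · exact hzc (hA.out hxc' hz ⟨by linarith, by linarith⟩)
  · intro y hy z hz
    rcases le_total y z with h | h
    · rw [abs_sub_comm, abs_of_nonneg (by linarith)]; exact key y hy z hz h
    · rw [abs_of_nonneg (by linarith)]; exact key z hz y hy h

theorem piece' {A : Set ℝ} (hA : A.OrdConnected) (c : ℝ) : (shiftS c A \ A).OrdConnected ∧
    ∀ y ∈ shiftS c A \ A, ∀ z ∈ shiftS c A \ A, |y - z| ≤ |c| := by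
  have e : shiftS c A \ A = shiftS c (A \ shiftS (-c) A) := by
    ext y; simp [shiftS]
  obtain ⟨h1, h2⟩ := piece hA (-c)
  rw [e]
  refine ⟨ordConnected_shiftS h1 c, fun y hy z hz => ?_⟩
  have := h2 (c + y) hy (c + z) hz
  rwa [add_sub_add_left_eq_sub, abs_neg] at this

end ZP

namespace ZP

open AddMonoidAlgebra (single)

variable {m : ℕ}

theorem avg {Ψ : E m → ℝ} {a b : ℝ} (h : ∀ θ, |Ψ θ| ≤ ∑ q, (a + b * θ q ^ 2)) :
    |∫ θ, Ψ θ ∂(GG m)| ≤ m * (a + b) := by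
  have hi : ∀ q : Fin m, Integrable (fun θ : E m => a + b * θ q ^ 2) (GG m) := fun q =>
    (integrable_const a).add ((GG_sq q).1.const_mul b)
  have h1 := norm_integral_le_of_norm_le (μ := GG m) (f := Ψ) (integrable_finsetSum Finset.univ fun q _ => hi q)
    (Filter.Eventually.of_forall fun θ => by simpa using h θ)
  rw [Real.norm_eq_abs] at h1
  refine h1.trans (le_of_eq ?_)
  rw [integral_finsetSum _ fun q _ => hi q]
  have : ∀ q : Fin m, ∫ θ : E m, (a + b * θ q ^ 2) ∂(GG m) = a + b := by
    intro q
    rw [integral_add (integrable_const a) ((GG_sq q).1.const_mul b), integral_const_mul, (GG_sq q).2]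
    simp
  simp [this]
  ring

theorem step2 {C : ℝ} {n : ℕ} (hH : Hyp m n C) (hC : 1 ≤ C) {F : Al m} (hF : PS F) {k : ℕ}
    (hn : 32 ≤ n) (hk : 1 ≤ k) (hkn : 4 * k ≤ n) {I : Fin m → Set ℝ} (hI : IsBox I)
    {K κ D : ℝ} (hK : 1 < K) (hκ : κ ≤ 1) (hD : 0 < D) {s ρ : E m}
    (hQ : ∀ q, QD F n K κ q (s q) (ρ q)) :
    |pr (F ^ n * (1 - F ^ (2 * k))) (ind I) - pr (F ^ n * (1 - F ^ (2 * k))) (smI s I)|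
      ≤ 2 * m * (9 / √(n : ℝ) + 52 * k / n + 432 * bt m C k n / D ^ 2
        + 8 * bt m C k n * (3 + 2 * D) / √(K - 1)) := by
  set ν := F ^ n * (1 - F ^ (2 * k)) with hν
  set β := bt m C k n with hβ
  have hβ0 : 0 ≤ β := bt_nonneg m (by linarith) k n
  set a := 3 / √(n : ℝ) + 20 * k / n + 432 * β / D ^ 2 + 8 * β * (1 + 2 * D) / √(K - 1) with ha
  set b := 6 / √(n : ℝ) + 32 * k / n + 16 * β / √(K - 1) with hb
  have ha0 : 0 ≤ a := by positivity
  have hb0 : 0 ≤ b := by positivity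
  obtain ⟨e1, i1⟩ := pr_smI hI s ν
  have e2 : pr ν (ind I) - pr ν (smI s I)
      = ∫ θ, (pr ν (ind I) - pr ν (ind (shift (s * θ) I))) ∂(GG m) := by
    rw [integral_sub (integrable_const _) i1, e1]; simp
  rw [e2]
  have hpt : ∀ θ : E m, |pr ν (ind I) - pr ν (ind (shift (s * θ) I))|
      ≤ ∑ q, ((2 * a + b) + b * θ q ^ 2) := by
    intro θ
    refine tele (fun J => pr ν (ind J)) I (shift (s * θ) I) _ fun q J hJ => ?_
    have hJb : IsBox J := by
      intro r
      rcases hJ r with h | h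
      · rw [h]; exact hI r
      · rw [h]; exact hI.shift _ r
    have hw0 : 0 ≤ 2 * a + b + b * θ q ^ 2 := by positivity
    rcases (hQ q).alt with ⟨hs, hsκ, hKm, hmom, _⟩ | ⟨hs, _⟩
    · have hsρ : s q ≤ ρ q := hsκ.trans (by nlinarith [(hQ q).ρpos])
      have hwin : ∀ P : Set ℝ, P.OrdConnected → (∀ y ∈ P, ∀ z ∈ P, |y - z| ≤ |s q * θ q|) →
          |pr ν (ind (Function.update J q P))| ≤ a + b * |θ q| := by
        intro P hP hd
        rcases P.eq_empty_or_nonempty with he | ⟨x0, hx0⟩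
        · have : ind (Function.update J q P) = fun _ => (0 : ℝ) := by
            funext x
            exact ind_of_notMem (q := q) (by simp [he])
          rw [this, pr_const, mul_zero, abs_zero]
          positivity
        · have := window hH hC hF q hn hk hkn (hJb.update q hP) (s := s q) (ρ := ρ q) (w := |θ q|) (x0 := x0)
            (K := K - 1) (D := D) hs hsρ (abs_nonneg _) (by
              intro z hz
              rw [Function.update_self] at hz
              have := hd z hz x0 hx0
              rwa [abs_mul, abs_of_pos hs, mul_comm] at this) (by linarith) hD (by linarith) hmom
          refine this.trans (le_of_eq ?_)
          rw [ha, hb, ← hβ]; ring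
      have p1 := piece (hI q) (s q * θ q)
      have p2 := piece' (hI q) (s q * θ q)
      have h1 := hwin _ p1.1 p1.2
      have h2 := hwin _ p2.1 p2.2
      have e3 : pr ν (ind (Function.update J q (I q))) - pr ν (ind (Function.update J q (shift (s * θ) I q)))
          = pr ν (ind (Function.update J q (I q \ shiftS (s q * θ q) (I q))))
            - pr ν (ind (Function.update J q (shiftS (s q * θ q) (I q) \ I q))) := by
        rw [← pr_fsub, ← pr_fsub]
        congr 1; funext x
        exact ind_update_sub J q (I q) (shiftS (s q * θ q) (I q)) x
      show |pr ν (ind (Function.update J q (I q))) - pr ν (ind (Function.update J q (shift (s * θ) I q)))| ≤ _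
      rw [e3]
      refine (abs_sub _ _).trans ?_
      have h3 : 2 * |θ q| ≤ 1 + θ q ^ 2 := by
        rw [← sq_abs (θ q)]; nlinarith [sq_nonneg (|θ q| - 1)]
      have h4 := mul_le_mul_of_nonneg_left h3 hb0
      linarith
    · have e3 : shift (s * θ) I q = I q := by
        ext z; simp [shift, shiftS, hs]
      simp only [e3, sub_self, abs_zero]
      exact hw0
  refine (avg hpt).trans (le_of_eq ?_)
  rw [ha, hb]; ring

theorem tailcut {C : ℝ} {n : ℕ} (hH : Hyp m n C) (hC : 1 ≤ C) {R : Al m} (hR : PS R) {k l : ℕ}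
    (hl : 8 ≤ l) (hln : l ≤ n) (hnl : n ≤ 4 * l) (hk : 1 ≤ k) (hkl : k ≤ l) {I : Fin m → Set ℝ} (hI : IsBox I)
    {K T : ℝ} (hK : 0 ≤ K) (hT : 0 < T) {s ρ : E m} (hs : ∀ q, 0 ≤ s q) (hsρ : ∀ q, s q ≤ ρ q) (hρ : ∀ q, 0 < ρ q)
    (hm2 : ∀ q, l * m2 R q ≤ 2 * K * ρ q ^ 2) :
    |pr (R ^ l * (1 - R ^ (2 * k))) (smI s I)
      - pr (R ^ l * (1 - R ^ (2 * k))) (smI s fun q => I q ∩ Set.Icc (-(T * ρ q)) (T * ρ q))|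
      ≤ 2 * m * ((1728 * K + 16) / T ^ 2 * bt m C k n) := by
  set ν := R ^ l * (1 - R ^ (2 * k)) with hν
  set β := bt m C k n with hβ
  have hβ0 : 0 ≤ β := bt_nonneg m (by linarith) k n
  set I' : Fin m → Set ℝ := fun q => I q ∩ Set.Icc (-(T * ρ q)) (T * ρ q) with hI'
  have hI'b : IsBox I' := fun q => (hI q).inter Set.ordConnected_Icc
  have hβl : bt m C k l ≤ 4 * β := bt_quarter m (by linarith) k (by omega) (by omega) hnl
  have hβl0 : 0 ≤ bt m C k l := bt_nonneg m (by linarith) k l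
  obtain ⟨e1, i1⟩ := pr_smI hI s ν
  obtain ⟨e1', i1'⟩ := pr_smI hI'b s ν
  have e2 : pr ν (smI s I) - pr ν (smI s I')
      = ∫ θ, (pr ν (ind (shift (s * θ) I)) - pr ν (ind (shift (s * θ) I'))) ∂(GG m) := by
    rw [integral_sub i1 i1', e1, e1']
  rw [e2]
  have hpt : ∀ θ : E m, |pr ν (ind (shift (s * θ) I)) - pr ν (ind (shift (s * θ) I'))|
      ≤ ∑ q, (2 * (1728 * K / T ^ 2 * β) + 2 * (16 / T ^ 2 * β) * θ q ^ 2) := by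
    intro θ
    refine tele (fun J => pr ν (ind J)) _ _ _ fun q J hJ => ?_
    have hJb : IsBox J := by
      intro r
      rcases hJ r with h | h
      · rw [h]; exact hI.shift _ r
      · rw [h]; exact hI'b.shift _ r
    set c := s q * θ q with hc
    have hcρ : |c| ≤ ρ q * |θ q| := by
      rw [hc, abs_mul, abs_of_nonneg (hs q)]
      exact mul_le_mul_of_nonneg_right (hsρ q) (abs_nonneg _)
    have hwin : ∀ P : Set ℝ, P.OrdConnected → (∀ z ∈ P, T * ρ q ≤ |c + z|) →
        |pr ν (ind (Function.update J q P))| ≤ 1728 * K / T ^ 2 * β + 16 / T ^ 2 * β * θ q ^ 2 := by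
      intro P hP hd
      have hbox := hJb.update q hP
      by_cases hθ : |θ q| ≤ T / 2
      · have hu : 0 < T * ρ q / 2 := by have := hρ q; positivity
        have h1 := tail hH hC hR q hl hln hk hkl hbox hu (by
          intro z hz
          rw [Function.update_self] at hz
          have h2 := hd z hz
          have h3 := abs_add_le c z
          have h4 : ρ q * |θ q| ≤ ρ q * (T / 2) := mul_le_mul_of_nonneg_left hθ (hρ q).le
          linarith)
        refine h1.trans ?_
        have h5 : 54 * l * m2 R q * bt m C k l / (T * ρ q / 2) ^ 2 ≤ 1728 * K / T ^ 2 * β := by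
          rw [div_le_iff₀ (by positivity)]
          have h6 : (l * m2 R q) * bt m C k l ≤ (2 * K * ρ q ^ 2) * (4 * β) :=
            mul_le_mul (hm2 q) hβl hβl0 (by positivity)
          have h7 : 1728 * K / T ^ 2 * β * (T * ρ q / 2) ^ 2 = 54 * ((2 * K * ρ q ^ 2) * (4 * β)) := by
            field_simp; ring
          rw [h7]; linarith
        have h8 : 0 ≤ 16 / T ^ 2 * β * θ q ^ 2 := by positivity
        linarith
      · push Not at hθ
        have h1 := hH l k (by omega) hln hk R hR _ hbox
        have h2 : (T / 2) ^ 2 ≤ θ q ^ 2 := by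
          rw [← sq_abs (θ q)]; exact pow_le_pow_left₀ (by positivity) hθ.le 2
        have h3 := mul_le_mul_of_nonneg_left h2 (show 0 ≤ 16 / T ^ 2 * β by positivity)
        have h4 : 16 / T ^ 2 * β * (T / 2) ^ 2 = 4 * β := by field_simp; ring
        have h5 : 0 ≤ 1728 * K / T ^ 2 * β := by positivity
        linarith
    set P := shiftS c (I q ∩ Set.Ioi (T * ρ q)) with hP
    set M := shiftS c (I q ∩ Set.Iio (-(T * ρ q))) with hM
    have hTρ : 0 < T * ρ q := by have := hρ q; positivity
    have h1 := hwin P (ordConnected_shiftS ((hI q).inter Set.ordConnected_Ioi) c) (by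
      intro z hz
      have : T * ρ q < c + z := hz.2
      exact this.le.trans (le_abs_self _))
    have h2 := hwin M (ordConnected_shiftS ((hI q).inter Set.ordConnected_Iio) c) (by
      intro z hz
      have : c + z < -(T * ρ q) := hz.2
      have := neg_abs_le (c + z)
      linarith)
    have e3 : pr ν (ind (Function.update J q (shift (s * θ) I q)))
        - pr ν (ind (Function.update J q (shift (s * θ) I' q)))
        = pr ν (ind (Function.update J q P)) + pr ν (ind (Function.update J q M)) := by
      rw [← pr_fsub, ← pr_fadd]
      congr 1; funext x
      rw [ind_update, ind_update, ind_update, ind_update, ← sub_mul, ← add_mul]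
      congr 1
      have hA : shift (s * θ) I q = shiftS c (I q) := rfl
      have hB : shift (s * θ) I' q = shiftS c (I q ∩ Set.Icc (-(T * ρ q)) (T * ρ q)) := rfl
      rw [hA, hB, hP, hM, ← i1_shiftS, ← i1_shiftS, ← i1_shiftS, ← i1_shiftS]
      set y := c + x q
      by_cases hy : y ∈ I q
      · rw [i1_of_mem hy]
        by_cases hy1 : T * ρ q < y
        · rw [i1_of_notMem (S := I q ∩ Set.Icc (-(T * ρ q)) (T * ρ q)) (fun h => absurd h.2.2 (not_le.2 hy1)),
            i1_of_mem (S := I q ∩ Set.Ioi (T * ρ q)) ⟨hy, hy1⟩,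
            i1_of_notMem (S := I q ∩ Set.Iio (-(T * ρ q))) (fun h => by have : y < -(T * ρ q) := h.2; linarith)]
          ring
        · by_cases hy2 : y < -(T * ρ q)
          · rw [i1_of_notMem (fun h => absurd h.2.1 (not_le.2 hy2)), i1_of_mem (S := I q ∩ Set.Iio (-(T * ρ q))) ⟨hy, hy2⟩,
              i1_of_notMem (S := I q ∩ Set.Ioi (T * ρ q)) (fun h => hy1 h.2)]
            ring
          · rw [i1_of_mem (S := I q ∩ Set.Icc (-(T * ρ q)) (T * ρ q)) ⟨hy, not_lt.1 hy2, not_lt.1 hy1⟩,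
              i1_of_notMem (S := I q ∩ Set.Ioi (T * ρ q)) (fun h => hy1 h.2),
              i1_of_notMem (S := I q ∩ Set.Iio (-(T * ρ q))) (fun h => hy2 h.2)]
            ring
      · rw [i1_of_notMem hy, i1_of_notMem (fun h => hy h.1), i1_of_notMem (fun h => hy h.1),
          i1_of_notMem (fun h => hy h.1)]
        ring
    show |pr ν (ind (Function.update J q (shift (s * θ) I q)))
        - pr ν (ind (Function.update J q (shift (s * θ) I' q)))| ≤ _
    rw [e3]
    refine (abs_add_le _ _).trans ?_
    linarith
  refine (avg hpt).trans (le_of_eq ?_)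
  ring

end ZP

namespace ZP

open AddMonoidAlgebra (single)

variable {m : ℕ}

/-- Set of points with a large coordinate. -/
def bigS (ρ : E m) : Set (E m) := {x | ∃ q, ρ q < |x q|}

theorem bigS_neg (ρ x : E m) : -x ∈ bigS ρ ↔ x ∈ bigS ρ := by
  simp [bigS]

theorem pT_bigS {F : Al m} (hF : PS F) {n : ℕ} (hn : 1 ≤ n) {K : ℝ} {ρ : E m} (hρ : ∀ q, 0 < ρ q)
    (hmm : ∀ q, n * mm F q (ρ q) ≤ K) : pT F (bigS ρ) ≤ m * K / n := by
  have hn' : (0:ℝ) < n := by exact_mod_cast hn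
  have h1 : pT F (bigS ρ) ≤ ∑ q, mm F q (ρ q) := by
    unfold pT mm
    rw [← pr_fsum]
    refine pr_mono hF.pos fun x => ?_
    have h0 : ∀ q ∈ Finset.univ, 0 ≤ min 1 ((x q / ρ q) ^ 2) := fun q _ => le_min zero_le_one (sq_nonneg _)
    by_cases h : x ∈ bigS ρ
    · rw [iE_of_mem h]
      obtain ⟨q, hq⟩ := h
      refine le_trans ?_ (Finset.single_le_sum h0 (Finset.mem_univ q))
      refine le_min le_rfl ?_
      rw [div_pow, ← sq_abs, one_le_div (pow_pos (hρ q) 2)]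
      exact pow_le_pow_left₀ (hρ q).le hq.le 2
    · rw [iE_of_notMem h]
      exact Finset.sum_nonneg h0
  refine h1.trans ?_
  have h2 : ∀ q ∈ Finset.univ, mm F q (ρ q) ≤ K / n := fun q _ => by
    rw [le_div_iff₀ hn', mul_comm]; exact hmm q
  refine (Finset.sum_le_sum h2).trans (le_of_eq ?_)
  simp; ring

theorem m2_cut {F : Al m} (hF : PS F) {n : ℕ} {K : ℝ} {ρ : E m} (hρ : ∀ q, 0 < ρ q)
    (hmm : ∀ q, n * mm F q (ρ q) ≤ K) (hp : pT F (bigS ρ) ≤ 1 / 2) (q : Fin m) :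
    n * m2 (cutR F (bigS ρ)) q ≤ 2 * K * ρ q ^ 2 := by
  have h1 : m2 (cutR F (bigS ρ)) q ≤ 2 * (ρ q ^ 2 * mm F q (ρ q)) := by
    refine (pr_cutR_le hF hp fun x => sq_nonneg (x q)).trans ?_
    refine mul_le_mul_of_nonneg_left ?_ (by norm_num)
    unfold mm
    rw [← pr_fmul]
    refine pr_mono hF.pos fun x => ?_
    have h0 : 0 ≤ min 1 ((x q / ρ q) ^ 2) := le_min zero_le_one (sq_nonneg _)
    have hr := hρ q
    by_cases h : x ∈ bigS ρ
    · rw [iE_of_notMem (by simpa using h), zero_mul]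
      positivity
    · rw [iE_of_mem (by simpa using h), one_mul]
      have hx : |x q| ≤ ρ q := by
        by_contra hc; exact h ⟨q, not_le.1 hc⟩
      have : (x q / ρ q) ^ 2 ≤ 1 := by
        rw [div_pow, ← sq_abs, div_le_one (pow_pos hr 2)]
        exact pow_le_pow_left₀ (abs_nonneg _) hx 2
      rw [min_eq_right this]
      rw [div_pow, mul_div_cancel₀ _ (by positivity)]
  have hn : (0:ℝ) ≤ n := Nat.cast_nonneg n
  have h2 := mul_le_mul_of_nonneg_left h1 hn
  have h3 := mul_le_mul_of_nonneg_left (hmm q) (sq_nonneg (ρ q))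
  nlinarith

theorem conc_cut {F : Al m} (hF : PS F) {n l : ℕ} (hn : 100 ≤ n) (hnl : n ≤ 4 * l) {K κ : ℝ} {ρ : E m}
    (hρ : ∀ q, 0 < ρ q) (hκ : κ ^ 2 * (m * K) ≤ 1 / 2)
    (hp : pT F (bigS ρ) ≤ m * K / n) (hp1 : pT F (bigS ρ) ≤ 1 / 2) (q : Fin m) {s τ : ℝ}
    (hs : 0 < s) (hsκ : s ≤ κ * ρ q) (hM : ρ q ^ 2 ≤ n * Mle F q s) (hτ : s ≤ τ) :
    pr (cutR F (bigS ρ) ^ (2 * (l / 4))) (fun x => i1 {z | |z| ≤ τ} (x q)) ≤ 34 * τ / ρ q := by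
  have hn' : (0:ℝ) < n := by
    have : 0 < n := by omega
    exact_mod_cast this
  have hr := hρ q
  have hτ0 : 0 < τ := hs.trans_le hτ
  set R := cutR F (bigS ρ) with hR
  have hPR : PS R := PS_cutR hF (bigS_neg ρ) (by linarith)
  have h1 : (Mle F q s - s ^ 2 * pT F (bigS ρ)) * (τ ^ 2)⁻¹ ≤ mm R q τ := by
    refine le_trans ?_ (le_pr_cutR hF (by linarith) fun x => le_min zero_le_one (sq_nonneg _))
    unfold Mle pT
    rw [← pr_fmul, ← pr_fsub, mul_comm, ← pr_fmul]
    refine pr_mono hF.pos fun x => ?_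
    have hi : 0 < (τ ^ 2)⁻¹ := by positivity
    have hmin : 0 ≤ min 1 ((x q / τ) ^ 2) := le_min zero_le_one (sq_nonneg _)
    by_cases h2 : s < |x q|
    · rw [iE_of_notMem (T := {x : E m | s < |x q|}ᶜ) (by simpa using h2), zero_mul]
      have a1 : 0 ≤ iE (bigS ρ)ᶜ x * min 1 ((x q / τ) ^ 2) := mul_nonneg (iE_nonneg _ _) hmin
      have a2 : 0 ≤ (τ ^ 2)⁻¹ * (s ^ 2 * iE (bigS ρ) x) :=
        mul_nonneg hi.le (mul_nonneg (sq_nonneg _) (iE_nonneg _ _))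
      linarith
    · rw [iE_of_mem (T := {x : E m | s < |x q|}ᶜ) (by simpa using h2), one_mul]
      have h3 : x q ^ 2 ≤ s ^ 2 := by
        rw [← sq_abs]; exact pow_le_pow_left₀ (abs_nonneg _) (not_lt.1 h2) 2
      by_cases h : x ∈ bigS ρ
      · rw [iE_of_notMem (T := (bigS ρ)ᶜ) (by simpa using h), iE_of_mem h, zero_mul]
        refine mul_nonpos_of_nonneg_of_nonpos hi.le (by linarith)
      · rw [iE_of_mem (T := (bigS ρ)ᶜ) (by simpa using h), iE_of_notMem h, one_mul]
        have h4 : (x q / τ) ^ 2 ≤ 1 := by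
          rw [div_pow, div_le_one (by positivity)]
          exact h3.trans (pow_le_pow_left₀ hs.le hτ 2)
        rw [min_eq_right h4, div_pow, div_eq_mul_inv]
        apply le_of_eq; ring
  have h2 : ρ q ^ 2 / (2 * n) ≤ Mle F q s - s ^ 2 * pT F (bigS ρ) := by
    have a1 : ρ q ^ 2 / n ≤ Mle F q s := by rw [div_le_iff₀ hn', mul_comm]; exact hM
    have a2 : s ^ 2 ≤ (κ * ρ q) ^ 2 := pow_le_pow_left₀ hs.le hsκ 2
    have a3 : s ^ 2 * pT F (bigS ρ) ≤ (κ * ρ q) ^ 2 * (m * K / n) :=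
      mul_le_mul a2 hp (pT_nonneg hF.pos _) (sq_nonneg _)
    have a4 : (κ * ρ q) ^ 2 * (m * K / n) = (κ ^ 2 * (m * K)) * (ρ q ^ 2 / n) := by ring
    have a5 : (κ ^ 2 * (m * K)) * (ρ q ^ 2 / n) ≤ 1 / 2 * (ρ q ^ 2 / n) :=
      mul_le_mul_of_nonneg_right hκ (by positivity)
    have a6 : ρ q ^ 2 / (2 * n) = 1 / 2 * (ρ q ^ 2 / n) := by ring
    linarith
  have h3 : ρ q ^ 2 / (2 * n) * (τ ^ 2)⁻¹ ≤ mm R q τ :=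
    (mul_le_mul_of_nonneg_right h2 (by positivity)).trans h1
  set N0 := 2 * (l / 4) with hN0
  have hNN : (n:ℝ) / 16 ≤ (N0:ℝ) + 1 := by
    have : n ≤ 16 * (N0 + 1) := by omega
    have : (n:ℝ) ≤ 16 * (N0 + 1) := by exact_mod_cast this
    linarith
  have h4 : (3 / 17 * (ρ q / τ)) ^ 2 ≤ ((N0:ℝ) + 1) * mm R q τ := by
    have := mul_le_mul hNN h3 (by positivity) (by positivity)
    refine le_trans ?_ this
    have e : (n:ℝ) / 16 * (ρ q ^ 2 / (2 * n) * (τ ^ 2)⁻¹) = 1 / 32 * (ρ q / τ) ^ 2 := by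
      field_simp; norm_num
    rw [e, mul_pow]
    refine mul_le_mul_of_nonneg_right (by norm_num) (sq_nonneg _)
  have h5 : 3 / 17 * (ρ q / τ) ≤ Real.sqrt (((N0:ℝ) + 1) * mm R q τ) := Real.le_sqrt_of_sq_le h4
  have h6 := lemB' hPR q hτ0 zero_le_one 0 N0
  simp only [sub_zero, one_mul] at h6
  set P := pr (R ^ N0) (fun x => i1 {z | |z| ≤ τ} (x q))
  have hP : 0 ≤ P := pr_nonneg (hPR.pos.pow _) fun x => i1_nonneg _ _
  have h7 := (mul_le_mul_of_nonneg_left h5 hP).trans h6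
  rw [le_div_iff₀ hr]
  have h8 : P * (3 / 17 * (ρ q / τ)) * τ = 3 / 17 * (P * ρ q) := by field_simp
  have h9 := mul_le_mul_of_nonneg_right h7 hτ0.le
  rw [h8] at h9
  linarith

/-- The constant coming from the smooth estimate. -/
noncomputable def Qc (m : ℕ) (W T : ℝ) : ℝ := 1 + m * (8 ^ m * (1 + m * (32 * W * T) * Zc m))

theorem Qc_nonneg (m : ℕ) {W T : ℝ} (hW : 0 ≤ W) (hT : 0 ≤ T) : 0 ≤ Qc m W T := by
  unfold Qc
  have := Zc_nonneg m
  positivity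

theorem core {C : ℝ} {n : ℕ} (hH : Hyp m n C) (hC : 1 ≤ C) {F : Al m} (hF : PS F) {k : ℕ}
    (hn : 100 ≤ n) (hk : 1 ≤ k) (hkn : 100 * k ≤ n) {I : Fin m → Set ℝ} (hI : IsBox I)
    {K κ T : ℝ} (hK : 1 ≤ K) (hKn : 2 * (m * K) ≤ n) (hκ0 : 0 < κ) (hκ1 : κ ≤ 1)
    (hκ : κ ^ 2 * (m * K) ≤ 1 / 2) (hT : 1 ≤ T) {s ρ : E m}
    (hQ : ∀ q, QD F n K κ q (s q) (ρ q)) :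
    |pr (F ^ n * (1 - F ^ (2 * k))) (smI s I)| ≤ 2 * k * (m * K / n) + 4 / n
      + 2 * m * ((1728 * K + 16) / T ^ 2 * bt m C k n) + 16 * k / n * Qc m (34 + 1 / κ) T := by
  have hn' : (0:ℝ) < n := by
    have : 0 < n := by omega
    exact_mod_cast this
  have hρ : ∀ q, 0 < ρ q := fun q => (hQ q).ρpos
  have hmm : ∀ q, n * mm F q (ρ q) ≤ K := fun q => (hQ q).mmle
  have hp := pT_bigS hF (by omega) hρ hmm
  have hp1 : pT F (bigS ρ) ≤ 1 / 2 := by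
    refine hp.trans ?_
    rw [div_le_iff₀ hn']; linarith
  have hp2 : pT F (bigS ρ) < 1 := by linarith
  have hPR := PS_cutR hF (bigS_neg ρ) hp2
  have hcut := cut_eq hp2
  have hs0 : ∀ q, 0 ≤ s q := fun q => by
    rcases (hQ q).alt with h | h
    · exact h.1.le
    · exact h.1.ge
  have hsρ : ∀ q, s q ≤ ρ q := fun q => by
    rcases (hQ q).alt with h | h
    · have := hρ q
      nlinarith [h.2.1]
    · rw [h.1]; exact (hρ q).le
  have hm2 := m2_cut hF hρ hmm hp1
  have hconc : ∀ l, n ≤ 4 * l → ∀ q, 0 < s q → ∀ τ, s q ≤ τ →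
      pr (cutR F (bigS ρ) ^ (2 * (l / 4))) (fun x => i1 {z | |z| ≤ τ} (x q)) ≤ (34 + 1 / κ) * τ / ρ q := by
    intro l hl q hsq τ hτ
    have hr := hρ q
    have hτ0 := hsq.trans_le hτ
    rcases (hQ q).alt with ⟨_, h1, _, _, h2 | h2⟩ | h
    · have : pr (cutR F (bigS ρ) ^ (2 * (l / 4))) (fun x => i1 {z | |z| ≤ τ} (x q)) ≤ 1 := by
        have := pr_le_mass (hPR.pos.pow (2 * (l / 4))) (f := fun x => i1 {z | |z| ≤ τ} (x q)) fun x => i1_le_one _ _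
        rwa [hPR.mass_pow, one_mul] at this
      refine this.trans ?_
      rw [le_div_iff₀ hr, one_mul]
      have : ρ q ≤ 1 / κ * τ := by
        rw [div_mul_eq_mul_div, one_mul, le_div_iff₀ hκ0]; rw [h2] at hτ; linarith
      linarith
    · refine (conc_cut hF hn hl hρ hκ hp hp1 q hsq h1 h2 hτ).trans ?_
      gcongr
      have : 0 < 1 / κ := by positivity
      linarith
    · rw [h.1] at hsq; exact absurd hsq (lt_irrefl _)
  have hdeg : ∀ q, s q = 0 → ∀ x, (cutR F (bigS ρ)).coeff x ≠ 0 → x q = 0 := by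
    intro q hsq x hx
    rcases (hQ q).alt with h | h
    · rw [hsq] at h; exact absurd h.1 (lt_irrefl _)
    · refine h.2 x ?_ ?_
      · intro h0
        apply hx
        unfold cutR
        rw [AddMonoidAlgebra.coeff_smul, Finsupp.smul_apply, coeff_wt, h0]; simp
      · by_contra hc
        exact cutR_supp hx ⟨q, not_le.1 hc⟩
  generalize cutR F (bigS ρ) = R at hPR hcut hm2 hconc hdeg
  have hW : 0 ≤ 34 + 1 / κ := by positivity
  have hT0 : 0 ≤ T := by linarith
  have hQc := Qc_nonneg m hW hT0
  have hβ := bt_nonneg m (by linarith : (0:ℝ) ≤ C) k n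
  set B := 2 * m * ((1728 * K + 16) / T ^ 2 * bt m C k n) + 16 * k / n * Qc m (34 + 1 / κ) T with hB
  have hB0 : 0 ≤ B := by
    have : 0 ≤ 1728 * K + 16 := by linarith
    positivity
  have hΦ : ∀ l, l ≤ n → n ≤ 4 * l → ∀ y, |pr (R ^ l * (1 - R ^ (2 * k))) fun x => smI s I (y + x)| ≤ B := by
    intro l hln hnl y
    have hl' : (0:ℝ) < l := by
      have : 0 < l := by omega
      exact_mod_cast this
    have e : (fun x => smI s I (y + x)) = smI s (shift y I) := by
      funext x; rw [smI_shift]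
    rw [e]
    have h1 := tailcut hH hC hPR (by omega : 8 ≤ l) hln hnl hk (by omega) (hI.shift y)
      (by linarith : (0:ℝ) ≤ K) (by linarith : 0 < T) hs0 hsρ hρ (fun q => by
        refine le_trans ?_ (hm2 q)
        have : (l:ℝ) ≤ n := by exact_mod_cast hln
        exact mul_le_mul_of_nonneg_right this (m2_nonneg hPR.pos q))
    have h2 := lemS2 hPR (by omega : 1 ≤ l) k (s := s) (ρ := ρ) (W := 34 + 1 / κ) (T := T)
      (A := fun q => shift y I q ∩ Set.Icc (-(T * ρ q)) (T * ρ q))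
      (fun q => ((hI.shift y) q).inter Set.ordConnected_Icc) hW hT0 hρ (fun q => by
        rcases (hs0 q).eq_or_lt with h0 | h0
        · right; exact ⟨h0.symm, hdeg q h0.symm⟩
        · left
          refine ⟨h0, ?_, hconc l hnl q h0⟩
          have hr := hρ q
          have hx : 1 ≤ T * ρ q / s q := by
            rw [one_le_div h0]
            nlinarith [hsρ q]
          obtain ⟨J, hJ1, hJ2⟩ := exists_nat_pow_near hx (one_lt_two)
          rw [le_div_iff₀ h0] at hJ1
          rw [div_lt_iff₀ h0] at hJ2
          refine ⟨J + 1, ?_, ?_⟩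
          · refine Set.inter_subset_right.trans (Set.Icc_subset_Icc ?_ ?_) <;> linarith
          · rw [pow_succ]; linarith)
    change |pr (R ^ l * (1 - R ^ (2 * k))) (smI s (fun q => shift y I q ∩ Set.Icc (-(T * ρ q)) (T * ρ q)))|
      ≤ (4 * k / l) * Qc m (34 + 1 / κ) T at h2
    have h3 : (4 * k / l) * Qc m (34 + 1 / κ) T ≤ 16 * k / n * Qc m (34 + 1 / κ) T := by
      refine mul_le_mul_of_nonneg_right ?_ hQc
      rw [div_le_div_iff₀ hl' hn']
      have : (n:ℝ) ≤ 4 * l := by exact_mod_cast hnl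
      have hk' : (0:ℝ) ≤ k := Nat.cast_nonneg k
      nlinarith
    have h4 := abs_le.1 h1
    have h5 := abs_le.1 h2
    rw [hB, abs_le]
    constructor <;> linarith [h4.1, h4.2, h5.1, h5.2]
  have f0 := smI_nonneg s I
  have f1 := smI_le_one hI s
  have hmix := mixture hcut hPR (pos_cutμ hF.pos _) (mass_cutμ F _) hp1 f0 f1
    (by omega : 1 ≤ n) (k := k) (Φ := fun _ => B) (fun _ => hB0) hΦ
  have hsw := swap hcut hF.pos hF.mass hPR (pos_cutμ hF.pos _) (mass_cutμ F _) f0 f1 (2 * k)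
    (hF.pos.pow n) (hF.mass_pow n)
  have hmass : mass (cutμ F (bigS ρ) + (1 - pT F (bigS ρ)) • (1 : Al m)) = 1 := by
    have : mass (cutμ F (bigS ρ) + (1 - pT F (bigS ρ)) • (1 : Al m))
      = mass (cutμ F (bigS ρ)) + (1 - pT F (bigS ρ)) * mass (1 : Al m) := by
      unfold mass; rw [pr_add, pr_smul, smul_eq_mul]
    rw [this, mass_cutμ, mass_one]; ring
  rw [pr_const, mass_pow, hmass, one_pow, one_mul] at hmix
  have hdec : F ^ n * (1 - F ^ (2 * k)) = F ^ n * (1 - R ^ (2 * k)) - F ^ n * (F ^ (2 * k) - R ^ (2 * k)) := by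
    ring
  rw [hdec, pr_sub]
  have hsw2 : ((2 * k : ℕ) : ℝ) * pT F (bigS ρ) ≤ 2 * k * (m * K / n) := by
    push_cast
    exact mul_le_mul_of_nonneg_left hp (by positivity)
  refine (abs_sub _ _).trans ?_
  linarith

/-- Constants. -/
noncomputable def Kc (m : ℕ) : ℝ := 10 ^ 10 * (m:ℝ) ^ 4
noncomputable def kc (m : ℕ) : ℝ := 1 / Real.sqrt (2 * (m * Kc m))
noncomputable def Tc (m : ℕ) : ℝ := 10 ^ 3 * m * Kc m
noncomputable def C0 (m : ℕ) : ℝ := 104 * m + 2 * (m * Kc m) + 104 + 16 * Qc m (34 + 1 / kc m) (Tc m)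

set_option maxHeartbeats 1000000 in
theorem main_step (hm : 1 ≤ m) {N : ℕ} {C : ℝ} (hC : 1 ≤ C) (hH : Hyp m N C) :
    Hyp m N (C0 m + C / 2) := by
  have hm' : (1:ℝ) ≤ m := by exact_mod_cast hm
  have hm2 : (1:ℝ) ≤ (m:ℝ) ^ 2 := one_le_pow₀ hm'
  have hm4 : (1:ℝ) ≤ (m:ℝ) ^ 4 := one_le_pow₀ hm'
  have hK : 10 ^ 10 ≤ Kc m := by unfold Kc; linarith
  have hmK : 1 ≤ m * Kc m := by nlinarith
  have hκ0 : 0 < kc m := by unfold kc; positivity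
  have hκ : kc m ^ 2 * (m * Kc m) ≤ 1 / 2 := by
    unfold kc
    rw [div_pow, Real.sq_sqrt (by positivity)]
    apply le_of_eq; field_simp; try norm_num
  have hκ1 : kc m ≤ 1 := by
    by_contra h
    have : 1 < kc m ^ 2 := by nlinarith
    nlinarith
  have hT : 1 ≤ Tc m := by unfold Tc; nlinarith
  have hQ := Qc_nonneg m (by positivity : 0 ≤ 34 + 1 / kc m) (by linarith : 0 ≤ Tc m)
  intro n k hn hnN hk F hF I hI
  have hHn : Hyp m n C := fun n' k' h1 h2 => hH n' k' h1 (h2.trans hnN)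
  have hn' : (0:ℝ) < n := by exact_mod_cast hn
  have hk' : (1:ℝ) ≤ k := by exact_mod_cast hk
  have hC0 : 104 + 2 * (m * Kc m) ≤ C0 m := by unfold C0; nlinarith
  have triv : (n:ℝ) ≤ C0 m * k → |pr (F ^ n * (1 - F ^ (2 * k))) (ind I)| ≤ bt m (C0 m + C / 2) k n := by
    intro h
    refine (abs_pr_diff_le hF (ind_nonneg I) (ind_le_one I) n (2 * k)).trans ?_
    unfold bt
    have h1 : 1 ≤ (C0 m + C / 2) * k / n := by
      rw [one_le_div hn']; nlinarith
    have h2 : 0 ≤ 70 * (m:ℝ) / Real.sqrt n := by positivity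
    linarith
  by_cases h1 : n < 100 * k
  · refine triv ?_
    have : (n:ℝ) ≤ 100 * k := by exact_mod_cast h1.le
    nlinarith
  by_cases h2 : (n:ℝ) < 2 * (m * Kc m)
  · refine triv ?_
    nlinarith
  have hn100 : 100 ≤ n := by omega
  choose s ρ hQD using fun q => exists_QD hF n (by linarith : 0 < Kc m) hκ0 q
  have a1 := step2 hHn hC hF (by omega) hk (by omega) hI (by linarith : 1 < Kc m) hκ1
    (by positivity : (0:ℝ) < 120 * m) hQD
  have a2 := core hHn hC hF hn100 hk (by omega) hI (by linarith) (by linarith) hκ0 hκ1 hκ hT hQD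
  have hβ := bt_nonneg m (by linarith : (0:ℝ) ≤ C) k n
  have hsq : 99999 * (m:ℝ) ^ 2 ≤ Real.sqrt (Kc m - 1) := by
    refine Real.le_sqrt_of_sq_le ?_
    unfold Kc
    nlinarith
  have b1 : 2 * m * (432 * bt m C k n / (120 * m) ^ 2) ≤ 6 / 100 * bt m C k n := by
    have : 2 * m * (432 * bt m C k n / (120 * m) ^ 2) = 6 / 100 * bt m C k n / m := by
      field_simp; ring
    rw [this]
    exact div_le_self (by positivity) hm'
  have b2 : 2 * m * (8 * bt m C k n * (3 + 2 * (120 * m)) / Real.sqrt (Kc m - 1)) ≤ 4 / 100 * bt m C k n := by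
    rw [← mul_div_assoc, div_le_iff₀ (lt_of_lt_of_le (by positivity) hsq)]
    refine le_trans ?_ (mul_le_mul_of_nonneg_left hsq (by positivity))
    nlinarith [mul_nonneg hβ (by nlinarith : 0 ≤ (m:ℝ)^2 - m)]
  have b3 : 2 * m * ((1728 * Kc m + 16) / Tc m ^ 2 * bt m C k n) ≤ 1 / 16 * bt m C k n := by
    rw [← mul_assoc]
    refine mul_le_mul_of_nonneg_right ?_ hβ
    rw [← mul_div_assoc, div_le_iff₀ (by positivity)]
    have e : Tc m ^ 2 = 10 ^ 6 * m ^ 2 * (Kc m * Kc m) := by unfold Tc; ring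
    rw [e]
    have : (m:ℝ) * (1728 * Kc m + 16) ≤ m ^ 2 * (Kc m * Kc m) := by
      have c1 : (m:ℝ) ≤ m ^ 2 := by nlinarith
      have c2 : 1728 * Kc m + 16 ≤ Kc m * Kc m := by nlinarith
      exact mul_le_mul c1 c2 (by linarith) (by positivity)
    have hpos : 0 ≤ (m:ℝ) ^ 2 * (Kc m * Kc m) := by positivity
    have l1 : 2 * (m:ℝ) * (1728 * Kc m + 16) = 2 * (m * (1728 * Kc m + 16)) := by ring
    have l2 : 1 / 16 * (10 ^ 6 * (m:ℝ) ^ 2 * (Kc m * Kc m)) = 62500 * (m ^ 2 * (Kc m * Kc m)) := by ring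
    rw [l1, l2]
    generalize (m:ℝ) ^ 2 * (Kc m * Kc m) = X at *
    generalize (m:ℝ) * (1728 * Kc m + 16) = Y at *
    linarith
  have e1 : 2 * m * (9 / Real.sqrt n + 52 * k / n + 432 * bt m C k n / (120 * m) ^ 2
      + 8 * bt m C k n * (3 + 2 * (120 * m)) / Real.sqrt (Kc m - 1))
      = 18 * (m / Real.sqrt n) + 104 * m * (k / n) + 2 * m * (432 * bt m C k n / (120 * m) ^ 2)
       + 2 * m * (8 * bt m C k n * (3 + 2 * (120 * m)) / Real.sqrt (Kc m - 1)) := by ring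
  rw [e1] at a1
  have h4n : 4 / (n:ℝ) ≤ 4 * (k / n) := by
    rw [← mul_div_assoc]; gcongr; linarith
  have e2 : 2 * k * (m * Kc m / n) = 2 * (m * Kc m) * (k / n) := by ring
  have e3 : 16 * k / n * Qc m (34 + 1 / kc m) (Tc m) = 16 * Qc m (34 + 1 / kc m) (Tc m) * (k / n) := by ring
  have hkn0 : 0 ≤ (k:ℝ) / n := by positivity
  have hmn0 : 0 ≤ (m:ℝ) / Real.sqrt n := by positivity
  have eβ : bt m C k n = C * (k / n) + 70 * (m / Real.sqrt n) := by unfold bt; ring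
  have eβ' : bt m (C0 m + C / 2) k n = (C0 m + C / 2) * (k / n) + 70 * (m / Real.sqrt n) := by unfold bt; ring
  have hCk : 0 ≤ C * (k / n) := by positivity
  have e4 : C0 m * (k / n) = 104 * m * (k / n) + 2 * (m * Kc m) * (k / n) + 104 * (k / n)
      + 16 * Qc m (34 + 1 / kc m) (Tc m) * (k / n) := by unfold C0; ring
  rw [e2, e3] at a2
  have d1 := abs_le.1 a1
  have d2 := abs_le.1 a2
  have e5 : C / 2 * (k / n) = 1 / 2 * (C * (k / n)) := by ring
  rw [eβ', add_mul, e4, e5, abs_le]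
  obtain ⟨d11, d12⟩ := d1
  obtain ⟨d21, d22⟩ := d2
  clear e1 e2 e3 e4 e5 eβ' hQ hsq hH hHn
  generalize bt m C k n = β at *
  generalize 2 * m * (432 * β / (120 * m) ^ 2) = x1 at *
  generalize 2 * m * (8 * β * (3 + 2 * (120 * m)) / Real.sqrt (Kc m - 1)) = x2 at *
  generalize 2 * m * ((1728 * Kc m + 16) / Tc m ^ 2 * β) = x3 at *
  constructor <;> linarith

theorem C0_nonneg (m : ℕ) : 0 ≤ C0 m := by
  have hK : 0 ≤ Kc m := by unfold Kc; positivity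
  have hκ0 : 0 ≤ kc m := by unfold kc; positivity
  have hT : 0 ≤ Tc m := by unfold Tc; positivity
  have hQ := Qc_nonneg m (by positivity : 0 ≤ 34 + 1 / kc m) hT
  unfold C0; positivity

theorem main_all (hm : 1 ≤ m) (N : ℕ) : Hyp m N (2 * C0 m + 2) := by
  have h0 := C0_nonneg m
  have h1 : ∀ j : ℕ, Hyp m N (2 * C0 m + 2 + (N:ℝ) / 2 ^ j) := by
    intro j
    induction j with
    | zero =>
      intro n k hn hnN hk F hF I hI
      refine (abs_pr_diff_le hF (ind_nonneg I) (ind_le_one I) n (2 * k)).trans ?_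
      have hn' : (0:ℝ) < n := by exact_mod_cast hn
      have hk' : (1:ℝ) ≤ k := by exact_mod_cast hk
      have hN' : (n:ℝ) ≤ N := by exact_mod_cast hnN
      unfold bt
      have h2 : 0 ≤ 70 * (m:ℝ) / Real.sqrt n := by positivity
      have h1 : 1 ≤ (2 * C0 m + 2 + (N:ℝ) / 2 ^ 0) * k / n := by
        rw [one_le_div hn']
        simp only [pow_zero, div_one]
        nlinarith
      linarith
    | succ j ih =>
      have hx : 0 ≤ (N:ℝ) / 2 ^ j := by positivity
      have := main_step hm (by linarith) ih
      intro n k hn hnN hk F hF I hI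
      refine (this n k hn hnN hk F hF I hI).trans ?_
      unfold bt
      have : C0 m + (2 * C0 m + 2 + (N:ℝ) / 2 ^ j) / 2 ≤ 2 * C0 m + 2 + (N:ℝ) / 2 ^ (j + 1) := by
        rw [pow_succ, ← div_div]; linarith
      gcongr
  intro n k hn hnN hk F hF I hI
  have ht : Filter.Tendsto (fun j : ℕ => bt m (2 * C0 m + 2 + (N:ℝ) / 2 ^ j) k n) Filter.atTop
      (nhds (bt m (2 * C0 m + 2 + 0) k n)) := by
    unfold bt
    have : Filter.Tendsto (fun j : ℕ => (N:ℝ) / 2 ^ j) Filter.atTop (nhds 0) :=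
      tendsto_const_nhds.div_atTop (tendsto_pow_atTop_atTop_of_one_lt one_lt_two)
    exact (((tendsto_const_nhds.add this).mul_const _).div_const _).add_const _
  rw [add_zero] at ht
  exact ge_of_tendsto' ht fun j => h1 j n k hn hnN hk F hF I hI

/-- The finitely supported case. -/
theorem finite_case (hm : 1 ≤ m) {F : Al m} (hF : PS F) {n k : ℕ} (hn : 1 ≤ n) (hk : 1 ≤ k)
    {I : Fin m → Set ℝ} (hI : IsBox I) :
    |pr (F ^ n) (ind I) - pr (F ^ (n + 2 * k + 1)) (ind I)|
      ≤ 72 * m / Real.sqrt n + (2 * C0 m + 2) * k * (n:ℝ)⁻¹ := by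
  have h1 := part1 hF hI n
  have h2 := main_all hm (n + 1) (n + 1) k (by omega) le_rfl hk F hF I hI
  have e : F ^ (n + 1) * (1 - F ^ (2 * k)) = F ^ (n + 1) - F ^ (n + 2 * k + 1) := by ring
  rw [e, pr_sub] at h2
  have hn' : (0:ℝ) < n := by exact_mod_cast hn
  have h0 := C0_nonneg m
  have hs : 0 < Real.sqrt n := Real.sqrt_pos.2 hn'
  have hs1 : Real.sqrt n ≤ Real.sqrt ((n:ℝ) + 1) := Real.sqrt_le_sqrt (by linarith)
  have a1 : 2 * (m:ℝ) / Real.sqrt ((n:ℝ) + 1) ≤ 2 * m / Real.sqrt n := by gcongr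
  have a2 : bt m (2 * C0 m + 2) k (n + 1) ≤ (2 * C0 m + 2) * k * (n:ℝ)⁻¹ + 70 * m / Real.sqrt n := by
    unfold bt
    push_cast
    rw [← div_eq_mul_inv]
    gcongr
    linarith
  have e3 : 72 * (m:ℝ) / Real.sqrt n = 2 * m / Real.sqrt n + 70 * m / Real.sqrt n := by ring
  have d1 := abs_le.1 h1
  have d2 := abs_le.1 h2
  rw [e3, abs_le]
  constructor <;> linarith [d1.1, d1.2, d2.1, d2.2]

end ZP

namespace ZP

open AddMonoidAlgebra (single)

variable {m : ℕ}

/-- Sign of a Boolean. -/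
def sg (b : Bool) : ℝ := if b then 1 else -1

theorem sg_not (b : Bool) : sg (!b) = - sg b := by cases b <;> simp [sg]

/-- Symmetrized empirical measure. -/
noncomputable def smp {N : ℕ} (v : Fin N → E m) : Al m :=
  (2 * N : ℝ)⁻¹ • ∑ i : Fin N × Bool, single (sg i.2 • v i.1) 1

theorem prod_single {ι : Type*} (s : Finset ι) (g : ι → E m) :
    ∏ i ∈ s, (single (g i) 1 : Al m) = single (∑ i ∈ s, g i) 1 := by
  classical
  induction s using Finset.induction_on with
  | empty => simp [AddMonoidAlgebra.one_def]
  | insert a s ha ih =>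
    rw [Finset.prod_insert ha, Finset.sum_insert ha, ih, AddMonoidAlgebra.single_mul_single, one_mul]

theorem pr_smp_pow {N : ℕ} (v : Fin N → E m) (n : ℕ) (f : E m → ℝ) :
    pr (smp v ^ n) f = ((N:ℝ) ^ n)⁻¹ * ∑ a : Fin n → Fin N,
      ((2:ℝ) ^ n)⁻¹ * ∑ ε : Fin n → Bool, f (∑ r, sg (ε r) • v (a r)) := by
  unfold smp
  rw [smul_pow, pr_smul, Fintype.sum_pow, pr_sum]
  simp_rw [prod_single, pr_single, one_smul]
  rw [← Finset.mul_sum, ← mul_assoc, ← mul_inv, ← mul_pow, smul_eq_mul, inv_pow, mul_comm (N:ℝ) 2]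
  congr 1
  rw [← Fintype.sum_prod_type' (f := fun (a : Fin n → Fin N) (ε : Fin n → Bool) => f (∑ r, sg (ε r) • v (a r)))]
  exact Fintype.sum_equiv (Equiv.arrowProdEquivProdArrow (Fin n) (fun _ => Fin N) (fun _ => Bool)) _ _
    (fun p => rfl)

theorem PS_smp {N : ℕ} (hN : 1 ≤ N) (v : Fin N → E m) : PS (smp v) := by
  have hN' : (0:ℝ) < N := by exact_mod_cast hN
  refine ⟨Pos.smul (by positivity) (Pos.sum fun i _ => Pos.single zero_le_one), Sym.smul _ ?_, ?_⟩
  · intro x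
    classical
    have e : ∀ y : E m, (∑ i : Fin N × Bool, (single (sg i.2 • v i.1) 1 : Al m)).coeff y
        = ∑ i : Fin N × Bool, if sg i.2 • v i.1 = y then (1:ℝ) else 0 := by
      intro y
      rw [AddMonoidAlgebra.coeff_sum, Finsupp.finsetSum_apply]
      simp [AddMonoidAlgebra.coeff_single, Finsupp.single_apply]
    rw [e, e]
    refine Fintype.sum_equiv ((Equiv.refl (Fin N)).prodCongr Equiv.boolNot) _ _ fun i => ?_
    have : sg (((Equiv.refl (Fin N)).prodCongr Equiv.boolNot) i).2 • v (((Equiv.refl (Fin N)).prodCongr Equiv.boolNot) i).1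
        = - (sg i.2 • v i.1) := by
      simp [sg_not]
    rw [this]
    simp only [eq_neg_iff_add_eq_zero, neg_eq_iff_add_eq_zero]
  · unfold mass smp
    rw [pr_smul, pr_sum]
    simp only [pr_single]
    simp
    field_simp

/-- Weighted sums over sign choices have the law of the convolution power. -/
theorem map_sum_eq {d : ℕ} {F : Measure (Euc d)} [IsProbabilityMeasure F] (hF : IsSymmMeasure F) (n : ℕ)
    (ε : Fin n → Bool) :
    (Measure.pi fun _ : Fin n => F).map (fun x => ∑ r, sg (ε r) • x r) = convPow F n := by
  induction n with
  | zero =>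
    simp only [Finset.univ_eq_empty, Finset.sum_empty]
    rw [Measure.map_const]
    simp [convPow]
  | succ n ih =>
    have hp := measurePreserving_piFinSuccAbove (fun _ : Fin (n + 1) => F) (Fin.last n)
    have hsg : F.map (fun x => sg (ε (Fin.last n)) • x) = F := by
      cases ε (Fin.last n)
      · unfold IsSymmMeasure at hF
        simpa [sg] using hF
      · simp [sg]
    have e : (fun x : Fin (n + 1) → Euc d => ∑ r, sg (ε r) • x r)
        = (fun p : Euc d × Euc d => p.2 + p.1) ∘ (Prod.map (fun x => sg (ε (Fin.last n)) • x)
            (fun y : Fin n → Euc d => ∑ r, sg (ε r.castSucc) • y r)) ∘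
          (MeasurableEquiv.piFinSuccAbove (fun _ : Fin (n + 1) => Euc d) (Fin.last n)) := by
      funext x
      simp [Fin.sum_univ_castSucc, MeasurableEquiv.piFinSuccAbove, Fin.insertNthEquiv, Fin.removeNth]
      rfl
    rw [e, ← Measure.map_map (by fun_prop) (by fun_prop), ← Measure.map_map (by fun_prop) (by fun_prop), hp.map_eq]
    rw [← Measure.map_prod_map _ _ (by fun_prop) (by fun_prop), hsg, ih]
    have : IsProbabilityMeasure (convPow F n) := by
      rw [← ih (fun r => ε r.castSucc)]
      exact Measure.isProbabilityMeasure_map (Measurable.aemeasurable (by fun_prop))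
    rw [← Measure.prod_swap, Measure.map_map (by fun_prop) (by fun_prop)]
    rfl

theorem map_precomp {α : Type*} [MeasurableSpace α] (F : Measure α) [IsProbabilityMeasure F] {n N : ℕ}
    {a : Fin n → Fin N} (ha : Function.Injective a) :
    (Measure.pi fun _ : Fin N => F).map (fun x r => x (a r)) = Measure.pi fun _ : Fin n => F := by
  symm
  refine Measure.pi_eq fun s hs => ?_
  rw [Measure.map_apply (by fun_prop) (MeasurableSet.univ_pi hs)]
  have e : (fun (x : Fin N → α) r => x (a r)) ⁻¹' (Set.univ.pi s)
      = Set.univ.pi (Function.extend a s fun _ => Set.univ) := by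
    ext x
    simp only [Set.mem_preimage, Set.mem_univ_pi]
    constructor
    · intro h i
      by_cases hi : ∃ r, a r = i
      · obtain ⟨r, rfl⟩ := hi
        rw [ha.extend_apply]; exact h r
      · rw [Function.extend_apply' _ _ _ hi]; trivial
    · intro h r
      have := h (a r)
      rwa [ha.extend_apply] at this
  rw [e, Measure.pi_pi]
  symm
  refine Fintype.prod_of_injective a ha _ _ ?_ ?_
  · intro i hi
    rw [Function.extend_apply' _ _ _ hi]; simp
  · intro r
    rw [ha.extend_apply]

theorem integral_inj {d : ℕ} {F : Measure (Euc d)} [IsProbabilityMeasure F] (hF : IsSymmMeasure F) {n N : ℕ}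
    (ε : Fin n → Bool) {a : Fin n → Fin N} (ha : Function.Injective a) {g : Euc d → ℝ} (hg : Measurable g) :
    ∫ x, g (∑ r, sg (ε r) • x (a r)) ∂(Measure.pi fun _ : Fin N => F) = ∫ y, g y ∂(convPow F n) := by
  rw [← map_sum_eq hF n ε, ← map_precomp F ha, Measure.map_map (by fun_prop) (by fun_prop),
    integral_map (Measurable.aemeasurable (by fun_prop)) hg.aestronglyMeasurable]
  rfl

theorem inj_count (n N : ℕ) (hN : 1 ≤ N) :
    1 - (n:ℝ) ^ 2 / N ≤ ((Finset.univ.filter fun a : Fin n → Fin N => Function.Injective a).card : ℝ) / N ^ n := by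
  classical
  have hN' : (0:ℝ) < N := by exact_mod_cast hN
  have hc : (Finset.univ.filter fun a : Fin n → Fin N => Function.Injective a).card = N.descFactorial n := by
    rw [← Fintype.card_subtype, Fintype.card_congr (Equiv.subtypeInjectiveEquivEmbedding (Fin n) (Fin N)),
      Fintype.card_embedding_eq]
    simp
  rw [hc]
  by_cases h : n ≤ N
  · have h1 := Nat.pow_sub_le_descFactorial N n
    have h2 : ((N:ℝ) - n) ^ n ≤ (N.descFactorial n : ℝ) := by
      refine le_trans ?_ (Nat.cast_le.2 h1)
      rw [Nat.cast_pow, Nat.cast_sub (by omega)]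
      have h3 : (n:ℝ) ≤ N := by exact_mod_cast h
      push_cast
      exact pow_le_pow_left₀ (by linarith) (by linarith) n
    have h4 : 1 + (n:ℝ) * (-(n / N)) ≤ (1 + -((n:ℝ) / N)) ^ n := by
      refine one_add_mul_le_pow ?_ n
      have : (n:ℝ) / N ≤ 1 := by rw [div_le_one hN']; exact_mod_cast h
      linarith
    have h5 : (1 + -((n:ℝ) / N)) ^ n = ((N:ℝ) - n) ^ n / N ^ n := by
      rw [← div_pow]; congr 1; field_simp; try ring
    rw [h5] at h4
    have h6 : 1 - (n:ℝ) ^ 2 / N = 1 + (n:ℝ) * (-(n / N)) := by ring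
    rw [h6]
    refine h4.trans ?_
    gcongr
  · have h1 : (1:ℝ) ≤ (n:ℝ) ^ 2 / N := by
      rw [one_le_div hN']
      have : (N:ℝ) ≤ n := by exact_mod_cast (not_le.1 h).le
      have h1 : (1:ℝ) ≤ N := by exact_mod_cast hN
      nlinarith
    have : (0:ℝ) ≤ (N.descFactorial n : ℝ) / N ^ n := by positivity
    linarith

theorem avg_inj (n N : ℕ) (hN : 1 ≤ N) (e : (Fin n → Fin N) → ℝ) (A : ℝ) (hA0 : 0 ≤ A) (hA1 : A ≤ 1)
    (he : ∀ a, 0 ≤ e a ∧ e a ≤ 1) (hi : ∀ a, Function.Injective a → e a = A) :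
    |((N:ℝ) ^ n)⁻¹ * ∑ a, e a - A| ≤ (n:ℝ) ^ 2 / N := by
  classical
  have hN' : (0:ℝ) < N := by exact_mod_cast hN
  have hc := inj_count n N hN
  have hp : (0:ℝ) < N ^ n := by positivity
  have e1 : ((N:ℝ) ^ n)⁻¹ * ∑ a, e a - A = ((N:ℝ) ^ n)⁻¹ * ∑ a, (e a - A) := by
    rw [Finset.sum_sub_distrib, mul_sub]
    congr 1
    simp
    field_simp
  rw [e1, abs_mul, abs_of_pos (by positivity)]
  have h2 : |∑ a, (e a - A)| ≤ ∑ a : Fin n → Fin N, (1 - if Function.Injective a then (1:ℝ) else 0) := by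
    refine (Finset.abs_sum_le_sum_abs _ _).trans (Finset.sum_le_sum fun a _ => ?_)
    by_cases h : Function.Injective a
    · rw [hi a h]; simp [h]
    · simp only [h, if_false, sub_zero]
      have := he a
      rw [abs_le]; constructor <;> linarith [this.1, this.2]
  have h3 : ∑ a : Fin n → Fin N, (1 - if Function.Injective a then (1:ℝ) else 0)
      = N ^ n - ((Finset.univ.filter fun a : Fin n → Fin N => Function.Injective a).card : ℝ) := by
    rw [Finset.sum_sub_distrib, Finset.sum_boole]
    simp
  rw [h3] at h2
  refine (mul_le_mul_of_nonneg_left h2 (by positivity)).trans ?_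
  rw [mul_sub, inv_mul_cancel₀ hp.ne', inv_mul_eq_div]
  linarith

theorem convPow_prob {d : ℕ} {F : Measure (Euc d)} [IsProbabilityMeasure F] (hF : IsSymmMeasure F) (n : ℕ) :
    IsProbabilityMeasure (convPow F n) := by
  rw [← map_sum_eq hF n (fun _ => true)]
  exact Measure.isProbabilityMeasure_map (Measurable.aemeasurable (by fun_prop))

/-- The linear map given by the directions. -/
noncomputable def ell {d : ℕ} (t : Fin m → Euc d) (x : Euc d) : E m := fun q => ⟪x, t q⟫

theorem ell_sum {d n : ℕ} (t : Fin m → Euc d) (c : Fin n → ℝ) (x : Fin n → Euc d) :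
    ∑ r, c r • ell t (x r) = ell t (∑ r, c r • x r) := by
  funext q
  simp [ell, sum_inner, inner_smul_left]

theorem measurable_ell {d : ℕ} (t : Fin m → Euc d) : Measurable (ell t) := by
  unfold ell
  refine measurable_pi_lambda _ fun q => ?_
  fun_prop

/-- The expectation of the empirical quantity. -/
theorem sampling {d : ℕ} {F : Measure (Euc d)} [IsProbabilityMeasure F] (hF : IsSymmMeasure F)
    (t : Fin m → Euc d) {I : Fin m → Set ℝ} (hI : IsBox I) (n : ℕ) {N : ℕ} (hN : 1 ≤ N) :
    Integrable (fun x : Fin N → Euc d => pr (smp (fun i => ell t (x i)) ^ n) (ind I)) (Measure.pi fun _ : Fin N => F) ∧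
    |∫ x, pr (smp (fun i => ell t (x i)) ^ n) (ind I) ∂(Measure.pi fun _ : Fin N => F)
      - ∫ y, ind I (ell t y) ∂(convPow F n)| ≤ (n:ℝ) ^ 2 / N := by
  have hg : Measurable fun y => ind I (ell t y) := (measurable_ind hI).comp (measurable_ell t)
  have hpw := convPow_prob hF n
  have hintg : ∀ (a : Fin n → Fin N) (ε : Fin n → Bool),
      Integrable (fun x : Fin N → Euc d => ind I (ell t (∑ r, sg (ε r) • x (a r)))) (Measure.pi fun _ : Fin N => F) := by
    intro a ε
    refine Integrable.of_bound (C := 1) ?_ ?_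
    · exact (hg.comp (by fun_prop)).aestronglyMeasurable
    · exact Filter.Eventually.of_forall fun x => by
        rw [Real.norm_eq_abs]; exact abs_ind_le_one _ _
  simp_rw [pr_smp_pow, ell_sum t]
  have hint2 : ∀ a : Fin n → Fin N, Integrable (fun x : Fin N → Euc d =>
      ((2:ℝ) ^ n)⁻¹ * ∑ ε : Fin n → Bool, ind I (ell t (∑ r, sg (ε r) • x (a r)))) (Measure.pi fun _ : Fin N => F) :=
    fun a => (integrable_finsetSum _ fun ε _ => hintg a ε).const_mul _
  refine ⟨(integrable_finsetSum _ fun a _ => hint2 a).const_mul _, ?_⟩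
  rw [integral_const_mul, integral_finsetSum _ fun a _ => hint2 a]
  have hA0 : 0 ≤ ∫ y, ind I (ell t y) ∂(convPow F n) := integral_nonneg fun y => ind_nonneg _ _
  have hA1 : ∫ y, ind I (ell t y) ∂(convPow F n) ≤ 1 := by
    have : ∫ y, ind I (ell t y) ∂(convPow F n) ≤ ∫ y, (1:ℝ) ∂(convPow F n) := by
      refine integral_mono (Integrable.of_bound (C := 1) hg.aestronglyMeasurable ?_) (integrable_const _)
        fun y => ind_le_one _ _
      exact Filter.Eventually.of_forall fun x => by
        rw [Real.norm_eq_abs]; exact abs_ind_le_one _ _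
    simpa using this
  have hb : ∀ (a : Fin n → Fin N) (x : Fin N → Euc d),
      0 ≤ ((2:ℝ) ^ n)⁻¹ * ∑ ε : Fin n → Bool, ind I (ell t (∑ r, sg (ε r) • x (a r))) ∧
      ((2:ℝ) ^ n)⁻¹ * ∑ ε : Fin n → Bool, ind I (ell t (∑ r, sg (ε r) • x (a r))) ≤ 1 := by
    intro a x
    constructor
    · exact mul_nonneg (by positivity) (Finset.sum_nonneg fun ε _ => ind_nonneg _ _)
    · rw [inv_mul_le_iff₀ (by positivity), mul_one]
      refine (Finset.sum_le_sum fun ε _ => ind_le_one I _).trans ?_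
      simp
  refine avg_inj n N hN _ _ hA0 hA1 (fun a => ⟨integral_nonneg fun x => (hb a x).1, ?_⟩) ?_
  · have := integral_mono (hint2 a) (integrable_const (1:ℝ)) fun x => (hb a x).2
    simpa using this
  · intro a ha
    rw [integral_const_mul, integral_finsetSum _ fun ε _ => hintg a ε]
    have : ∀ ε : Fin n → Bool, ∫ x, ind I (ell t (∑ r, sg (ε r) • x (a r))) ∂(Measure.pi fun _ : Fin N => F)
        = ∫ y, ind I (ell t y) ∂(convPow F n) := fun ε => integral_inj hF ε ha hg
    simp [this]

theorem general_case {d : ℕ} (hm : 1 ≤ m) {F : Measure (Euc d)} [IsProbabilityMeasure F] (hF : IsSymmMeasure F)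
    (t : Fin m → Euc d) {I : Fin m → Set ℝ} (hI : IsBox I) {n k : ℕ} (hn : 1 ≤ n) (hk : 1 ≤ k) :
    |∫ y, ind I (ell t y) ∂(convPow F n) - ∫ y, ind I (ell t y) ∂(convPow F (n + 2 * k + 1))|
      ≤ 72 * m / Real.sqrt n + (2 * C0 m + 2) * k * (n:ℝ)⁻¹ := by
  set n' := n + 2 * k + 1
  set B := 72 * m / Real.sqrt n + (2 * C0 m + 2) * k * (n:ℝ)⁻¹
  have key : ∀ N : ℕ, |∫ y, ind I (ell t y) ∂(convPow F n) - ∫ y, ind I (ell t y) ∂(convPow F n')|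
      ≤ B + ((n:ℝ) ^ 2 + (n':ℝ) ^ 2) / ((N + 1 : ℕ) : ℝ) := by
    intro N
    obtain ⟨i1, h1⟩ := sampling hF t hI n (N := N + 1) (by omega)
    obtain ⟨i2, h2⟩ := sampling hF t hI n' (N := N + 1) (by omega)
    have h3 : |∫ x, pr (smp (fun i => ell t (x i)) ^ n) (ind I) ∂(Measure.pi fun _ : Fin (N + 1) => F)
        - ∫ x, pr (smp (fun i => ell t (x i)) ^ n') (ind I) ∂(Measure.pi fun _ : Fin (N + 1) => F)| ≤ B := by
      rw [← integral_sub i1 i2]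
      have := norm_integral_le_of_norm_le_const (μ := Measure.pi fun _ : Fin (N + 1) => F) (C := B)
        (f := fun x => pr (smp (fun i => ell t (x i)) ^ n) (ind I) - pr (smp (fun i => ell t (x i)) ^ n') (ind I))
        (Filter.Eventually.of_forall fun x => finite_case hm (PS_smp (by omega) _) hn hk hI)
      simpa using this
    rw [add_div]
    have d1 := abs_le.1 h1
    have d2 := abs_le.1 h2
    have d3 := abs_le.1 h3
    rw [abs_le]
    constructor <;> linarith [d1.1, d1.2, d2.1, d2.2, d3.1, d3.2]
  have ht : Filter.Tendsto (fun N : ℕ => B + ((n:ℝ) ^ 2 + (n':ℝ) ^ 2) / ((N + 1 : ℕ) : ℝ)) Filter.atTop (nhds (B + 0)) := by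
    refine tendsto_const_nhds.add ?_
    exact tendsto_const_nhds.div_atTop (tendsto_natCast_atTop_atTop.comp (Filter.tendsto_add_atTop_nat 1))
  rw [add_zero] at ht
  exact ge_of_tendsto' ht key

theorem ind_eq_indicator (I : Fin m → Set ℝ) (x : E m) :
    ind I x = Set.indicator {x : E m | ∀ q, x q ∈ I q} (fun _ => (1:ℝ)) x := by
  by_cases h : ∀ q, x q ∈ I q
  · rw [Set.indicator_of_mem (show x ∈ {x : E m | ∀ q, x q ∈ I q} from h)]
    unfold ind
    exact Finset.prod_eq_one fun q _ => i1_of_mem (h q)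
  · rw [Set.indicator_of_notMem (show x ∉ {x : E m | ∀ q, x q ∈ I q} from h)]
    push Not at h
    obtain ⟨q, hq⟩ := h
    unfold ind
    exact Finset.prod_eq_zero (Finset.mem_univ q) (i1_of_notMem hq)

theorem final {d k n : ℕ} (hm : 1 ≤ m) (hk : 1 ≤ k) (hn : 1 ≤ n) (F : Measure (Euc d)) [IsProbabilityMeasure F]
    (hF : IsSymmMeasure F) : rhoPoly m (convPow F n) (convPow F (n + 2 * k + 1)) ≤
      72 * m / Real.sqrt n + (2 * C0 m + 2) * k * (n:ℝ)⁻¹ := by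
  have h0 := C0_nonneg m
  have hB : 0 ≤ 72 * m / Real.sqrt n + (2 * C0 m + 2) * k * (n:ℝ)⁻¹ := by positivity
  unfold rhoPoly
  refine Real.iSup_le (fun X => Real.iSup_le (fun hX => ?_) hB) hB
  obtain ⟨t, a, b, rfl⟩ := hX
  set I : Fin m → Set ℝ := fun q => {y | a q ≤ (y : EReal) ∧ (y : EReal) ≤ b q} with hI
  have hbox : IsBox I := by
    intro q
    refine ⟨fun x hx y hy z hz => ?_⟩
    exact ⟨hx.1.trans (EReal.coe_le_coe_iff.2 hz.1), (EReal.coe_le_coe_iff.2 hz.2).trans hy.2⟩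
  have hmeas : MeasurableSet {x : Euc d | ∀ j, a j ≤ ((⟪x, t j⟫ : ℝ) : EReal) ∧ ((⟪x, t j⟫ : ℝ) : EReal) ≤ b j} := by
    have : {x : Euc d | ∀ j, a j ≤ ((⟪x, t j⟫ : ℝ) : EReal) ∧ ((⟪x, t j⟫ : ℝ) : EReal) ≤ b j}
        = ⋂ j, (fun x => ell t x j) ⁻¹' (I j) := by
      ext x; simp [hI, ell]
    rw [this]
    refine MeasurableSet.iInter fun j => ?_
    exact ((measurable_pi_apply j).comp (measurable_ell t)) (hbox j).measurableSet
  have e : ∀ ν : Measure (Euc d), (ν {x : Euc d | ∀ j, a j ≤ ((⟪x, t j⟫ : ℝ) : EReal) ∧ ((⟪x, t j⟫ : ℝ) : EReal) ≤ b j}).toReal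
      = ∫ y, ind I (ell t y) ∂ν := by
    intro ν
    have := integral_indicator_one (μ := ν) hmeas
    rw [Measure.real] at this
    rw [← this]
    refine integral_congr_ae (Filter.Eventually.of_forall fun y => ?_)
    simp only [ind_eq_indicator]
    rfl
  rw [e, e]
  exact general_case hm hF t hbox hn hk

end ZP

theorem stmt11 :
    ∃ c : ℝ, 0 < c ∧ ∃ C : ℕ → ℝ, (∀ m, 0 < C m) ∧
      ∀ (d m k n : ℕ), 0 < d → 0 < m → 0 < k → 0 < n →
        ∀ F : Measure (Euc d), IsProbabilityMeasure F → IsSymmMeasure F →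
          rhoPoly m (convPow F n) (convPow F (n + 2 * k + 1)) ≤
            c * m / Real.sqrt n + C m * k * (n : ℝ)⁻¹ := by
  refine ⟨72, by norm_num, fun m => 2 * ZP.C0 m + 2, fun m => ?_, ?_⟩
  · have := ZP.C0_nonneg m
    positivity
  · intro d m k n _ hm hk hn F hF hs
    exact ZP.final hm hk hn F hs
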